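/- (Theorem 1.2, third formula.) Let n ≥ 4 be a natural number. The genus-zero Hurwitz number h_{1^2,1^2} with two degenerate branch points, each of reduced ramification type 1^2 (i.e., two permutations each of cycle type (2,2,1^{n-4})) and m = 2n−6 simple branch points satisfies h_{1^2,1^2} = 2·(2n^3 − 16n^2 + 43n − 40)·((2n−6)!/(n−4)!)·n^{n−6}. -/

import Mathlib

open Equiv

/-!
Multiplying a permutation by a transposition either cuts a cycle or joins two cycles. Removing the
first transposition of a factorization therefore gives a recursion for the number of factorizations
of `π` into the least number `m` of transpositions whose orbits are the blocks of a given partition,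
and by induction this number is `m!` times the product over the blocks `B` of
`|B| ^ (l - 3) * ∏ k ^ (k + 1) / k!`, where `k` runs over the lengths of the `l` cycles of `π` in
`B` (Hurwitz). The inductive step is the cut-and-join equation for this product, which follows from
the Abel-Hurwitz identities for subsets of the cycles and from identities between the exponential
generating functions of rooted trees and of their relatives.

The square of the class sum of transpositions is `n.choose 2 + 3 K₃ + 2 K₂₂`, so the terms of type
`(2, 2)` can be traded for products of two transpositions. When `σ` has type `(2, 2)`, summing over
`σ₂` of the same type thus reduces to counting factorizations of `σ` that start with two given
transpositions: all of them, less those whose first two transpositions coincide or overlap. Each of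
these counts is a value of Hurwitz' formula, or of its variant in which two blocks are joined by a
transposition that is not counted in the product.
-/

namespace HurwitzNumber

section SubsetConvolution

open Polynomial

variable {ι K : Type*}

lemma sum_neg_one_pow_card_mul_eval_eq_zero [CommRing K] (k : ι → K) (x : K) (I : Finset ι)
    {p : K[X]} (hp : p.degree < I.card) :
    ∑ S ∈ I.powerset, (-1) ^ S.card * p.eval (x + ∑ i ∈ S, k i) = 0 := by
  classical
  induction I using Finset.induction_on generalizing p with
  | empty => simp_all
  | insert i I hi ih =>
    have degree_diff : (p - taylor (k i) p).degree < I.card := by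
      rcases eq_or_ne p 0 with rfl | hp0
      · simp
      have hle : p.degree ≤ I.card := by
        rw [degree_eq_natDegree hp0, Finset.card_insert_of_notMem hi] at *
        norm_cast at *
        lia
      exact (degree_sub_lt_left (by simp) hp0 (by simp)).trans_le hle
    rw [Finset.sum_powerset_insert hi, ← Finset.sum_add_distrib, ← ih degree_diff]
    refine Finset.sum_congr rfl fun S hS => ?_
    have hiS : i ∉ S := fun h => hi (Finset.mem_powerset.mp hS h)
    rw [Finset.card_insert_of_notMem hiS, Finset.sum_insert hiS, eval_sub, taylor_eval,
      add_left_comm x, add_comm (k i)]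
    ring

lemma eq_of_derivative_eq_of_eval_eq [Field K] [CharZero K] {p q : K[X]} (y : K)
    (hderiv : derivative p = derivative q) (heval : p.eval y = q.eval y) : p = q := by
  have hconst : (p - q).natDegree = 0 :=
    derivative_eq_zero.mp (by rw [derivative_sub, hderiv, sub_self])
  obtain ⟨c, hc⟩ := natDegree_eq_zero.mp hconst
  have hc0 : c = 0 := by
    rw [← eval_C (x := y) (a := c), hc, eval_sub, heval, sub_self]
  rw [← sub_eq_zero, ← hc, hc0, C_0]

/-- The summands `(x + ∑_{i ∈ S} k_i) ^ (|S| - r)` of Hurwitz's generalizations of Abel's binomial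
identity. The exponent is an integer, as `r` may exceed `|S|`. -/
def abelPow [Field K] (k : ι → K) (r : ℤ) (x : K) (S : Finset ι) : K :=
  (x + ∑ i ∈ S, k i) ^ ((S.card : ℤ) - r)

/-- The polynomial `(X + ∑_{i ∈ S} k_i) ^ |S|`, an Abel power with `r = 0` and `x` left free. -/
noncomputable def abelPoly [Field K] (k : ι → K) (S : Finset ι) : K[X] :=
  (X + C (∑ i ∈ S, k i)) ^ S.card

lemma eval_abelPoly [Field K] (k : ι → K) (y : K) (S : Finset ι) :
    (abelPoly k S).eval y = abelPow k 0 y S := by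
  simp only [abelPoly, abelPow, eval_pow, eval_add, eval_X, eval_C, sub_zero, zpow_natCast]

lemma abelPow_one_mul_pow [Field K] (k : ι → K) {x : K} (hx : x ≠ 0) (S : Finset ι) (m : ℕ) :
    abelPow k 1 x S * (x + ∑ i ∈ S, k i) ^ m =
      (x + ∑ i ∈ S, k i) ^ ((S.card + m : ℤ) - 1) := by
  rw [abelPow, ← zpow_natCast, ← zpow_add', sub_add_eq_add_sub]
  rcases S.eq_empty_or_nonempty with rfl | hS
  · simp [hx]
  · have := hS.card_pos
    lia

lemma add_sum_subset_ne_zero [Field K] [LinearOrder K] [IsStrictOrderedRing K] {k : ι → K}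
    {I : Finset ι} (hk : ∀ i ∈ I, 0 ≤ k i) {x : K} (hx : 0 < x) {S : Finset ι} (hS : S ⊆ I) :
    x + ∑ i ∈ S, k i ≠ 0 :=
  (add_pos_of_pos_of_nonneg hx (Finset.sum_nonneg fun i hi => hk i (hS hi))).ne'

variable [DecidableEq ι]

lemma sum_sum_erase_symm [AddCommMonoid K] (I : Finset ι) (φ : ι → ι → K) :
    ∑ j ∈ I, ∑ l ∈ I.erase j, φ j l = ∑ j ∈ I, ∑ l ∈ I.erase j, φ l j :=
  Finset.sum_comm' (by grind)

/-- Convolution of functions of a finite set over its ordered splittings into two parts; this is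
the product of exponential generating functions with labelled weights. -/
def subsetConv [Semiring K] (f g : Finset ι → K) (I : Finset ι) : K :=
  ∑ S ∈ I.powerset, f S * g (I \ S)

lemma subsetConv_comm [CommSemiring K] (f g : Finset ι → K) (I : Finset ι) :
    subsetConv f g I = subsetConv g f I := by
  refine Finset.sum_nbij' (I \ ·) (I \ ·) (by simp) (by simp) ?_ ?_ ?_ <;>
  · intro S hS
    simp [Finset.inter_eq_right.mpr (Finset.mem_powerset.mp hS), mul_comm]

lemma subsetConv_congr_left [Semiring K] {f f' : Finset ι → K} (g : Finset ι → K) {I : Finset ι}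
    (h : ∀ S ⊆ I, f S = f' S) : subsetConv f g I = subsetConv f' g I :=
  Finset.sum_congr rfl fun S hS => by rw [h S (Finset.mem_powerset.mp hS)]

lemma subsetConv_sum_erase [Semiring K] (φ : ι → Finset ι → K) (g : Finset ι → K) (I : Finset ι) :
    subsetConv (fun S => ∑ j ∈ S, φ j (S.erase j)) g I =
      ∑ j ∈ I, subsetConv (φ j) g (I.erase j) := by
  simp only [subsetConv, Finset.sum_mul]
  rw [Finset.sum_comm' (t' := I) (s' := fun j => I.powerset.filter (j ∈ ·)) (by grind)]
  refine Finset.sum_congr rfl fun j hj => ?_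
  refine Finset.sum_nbij' (·.erase j) (insert j ·) ?_ ?_ ?_ ?_ ?_
  · intro S hS
    simpa using Finset.erase_subset_erase j (Finset.mem_powerset.mp (Finset.mem_filter.mp hS).1)
  · intro S hS
    simpa using Finset.insert_subset hj
      ((Finset.mem_powerset.mp hS).trans (Finset.erase_subset j I))
  · intro S hS
    exact Finset.insert_erase (Finset.mem_filter.mp hS).2
  · intro S hS
    exact Finset.erase_insert fun h => Finset.notMem_erase j I (Finset.mem_powerset.mp hS h)
  · intro S hS
    congr 2
    grind

section Abel

variable [Field K]

lemma abelPow_add_erase (k : ι → K) (r : ℤ) (x : K) {S : Finset ι} {j : ι} (hj : j ∈ S) :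
    abelPow k r (x + k j) (S.erase j) = abelPow k (r + 1) x S := by
  rw [abelPow, abelPow, add_assoc, Finset.add_sum_erase S k hj, ← Finset.card_erase_add_one hj]
  congr 1
  push_cast
  ring

lemma abelPow_eq_add_sum (k : ι → K) (r : ℤ) {x : K} {S : Finset ι} (h : x + ∑ i ∈ S, k i ≠ 0) :
    abelPow k r x S =
      x * abelPow k (r + 1) x S + ∑ j ∈ S, k j * abelPow k r (x + k j) (S.erase j) := by
  rw [Finset.sum_congr rfl fun j hj => by rw [abelPow_add_erase k r x hj], ← Finset.sum_mul,
    ← add_mul, abelPow, abelPow, ← sub_sub, ← zpow_one_add₀ h]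
  congr 1
  ring

lemma derivative_abelPoly (k : ι → K) (S : Finset ι) :
    derivative (abelPoly k S) = ∑ j ∈ S, taylor (k j) (abelPoly k (S.erase j)) := by
  have taylor_erase : ∀ j ∈ S, taylor (k j) (abelPoly k (S.erase j)) =
      (X + C (∑ i ∈ S, k i)) ^ (S.card - 1) := by
    intro j hj
    simp only [abelPoly, taylor_pow, map_add, taylor_X, taylor_C, add_assoc, ← C_add,
      Finset.add_sum_erase S k hj, Finset.card_erase_of_mem hj]
  rw [Finset.sum_congr rfl taylor_erase, Finset.sum_const, abelPoly, derivative_X_add_C_pow,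
    nsmul_eq_mul, C_eq_natCast]

lemma derivative_subsetConv_abelPoly (k : ι → K) (f : Finset ι → K) (I : Finset ι) :
    derivative (subsetConv (fun S => C (f S)) (abelPoly k) I) =
      ∑ j ∈ I, taylor (k j) (subsetConv (fun S => C (f S)) (abelPoly k) (I.erase j)) := by
  have : derivative (subsetConv (fun S => C (f S)) (abelPoly k) I) =
      subsetConv (fun S => ∑ j ∈ S, taylor (k j) (abelPoly k (S.erase j)))
        (fun S => C (f S)) I := by
    rw [subsetConv_comm]
    simp only [subsetConv, derivative_sum, derivative_mul, derivative_C, mul_zero, add_zero,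
      derivative_abelPoly]
  rw [this, subsetConv_sum_erase fun j S => taylor (k j) (abelPoly k S)]
  refine Finset.sum_congr rfl fun j _ => ?_
  rw [subsetConv_comm]
  simp only [subsetConv, map_sum, taylor_mul, taylor_C]

/-- At `-(x + ∑_{i ∈ I} k_i)` the convolution becomes an alternating sum of values of
`X ^ (|I| - 1)`, that is, an iterated difference of too high an order. -/
lemma eval_subsetConv_abelPoly (k : ι → K) {x : K} (hx : x ≠ 0) {I : Finset ι}
    (hI : I.Nonempty) :
    (subsetConv (fun S => C (abelPow k 1 x S)) (abelPoly k) I).eval (-(x + ∑ i ∈ I, k i)) = 0 := by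
  have card_pos := hI.card_pos
  have difference := sum_neg_one_pow_card_mul_eval_eq_zero k x I (p := X ^ (I.card - 1)) (by
    rw [degree_X_pow]
    norm_cast
    lia)
  rw [subsetConv, eval_finsetSum, ← mul_zero ((-1) ^ I.card), ← difference, Finset.mul_sum]
  refine Finset.sum_congr rfl fun S hS => ?_
  have hSI := Finset.mem_powerset.mp hS
  have hcard : (I \ S).card + S.card = I.card := Finset.card_sdiff_add_card_eq_card hSI
  have hbase : -(x + ∑ i ∈ I, k i) + ∑ i ∈ I \ S, k i = -1 * (x + ∑ i ∈ S, k i) := by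
    rw [← Finset.sum_sdiff hSI]
    ring
  have hexp : ((S.card + (I \ S).card : ℤ) - 1) = ((I.card - 1 : ℕ) : ℤ) := by lia
  have hsign : (-1 : K) ^ (I \ S).card = (-1) ^ I.card * (-1) ^ S.card := by
    rw [← hcard, pow_add, mul_assoc, ← mul_pow]
    simp
  rw [eval_mul, eval_C, abelPoly, eval_pow, eval_add, eval_X, eval_C, hbase, mul_pow,
    mul_left_comm, abelPow_one_mul_pow k hx, hexp, zpow_natCast, eval_pow, eval_X, hsign, mul_assoc]

lemma mul_subsetConv_abelPow_add_one (k : ι → K) (r : ℤ) {x : K} (g : Finset ι → K) {I : Finset ι}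
    (h : ∀ S ⊆ I, x + ∑ i ∈ S, k i ≠ 0) :
    x * subsetConv (abelPow k (r + 1) x) g I = subsetConv (abelPow k r x) g I -
      ∑ j ∈ I, k j * subsetConv (abelPow k r (x + k j)) g (I.erase j) := by
  have pointed : ∑ j ∈ I, k j * subsetConv (abelPow k r (x + k j)) g (I.erase j) =
      subsetConv (fun S => ∑ j ∈ S, k j * abelPow k r (x + k j) (S.erase j)) g I := by
    rw [subsetConv_sum_erase fun j S => k j * abelPow k r (x + k j) S]
    simp only [subsetConv, Finset.mul_sum, mul_assoc]
  rw [subsetConv_congr_left g fun S hS => abelPow_eq_add_sum k r (h S hS), pointed]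
  simp only [subsetConv, add_mul, Finset.sum_add_distrib, Finset.mul_sum, mul_assoc,
    add_sub_cancel_right]

variable [CharZero K]

lemma C_mul_subsetConv_abelPoly (k : ι → K) {x : K} (hx : x ≠ 0) (I : Finset ι) :
    C x * subsetConv (fun S => C (abelPow k 1 x S)) (abelPoly k) I =
      taylor x (abelPoly k I) := by
  induction I using Finset.strongInduction with
  | H I ih =>
    rcases I.eq_empty_or_nonempty with rfl | hI
    · simp [subsetConv, abelPoly, abelPow, ← C_mul, hx]
    refine eq_of_derivative_eq_of_eval_eq (-(x + ∑ i ∈ I, k i)) ?_ ?_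
    · have derivative_taylor : derivative (taylor x (abelPoly k I)) =
          taylor x (derivative (abelPoly k I)) := by
        simp [taylor_apply, derivative_comp]
      rw [derivative_C_mul, derivative_subsetConv_abelPoly, derivative_taylor,
        derivative_abelPoly, map_sum, Finset.mul_sum]
      refine Finset.sum_congr rfl fun j hj => ?_
      rw [taylor_taylor, add_comm x, ← taylor_taylor, ← ih _ (Finset.erase_ssubset hj),
        taylor_mul, taylor_C]
    · rw [eval_mul, eval_subsetConv_abelPoly k hx hI, mul_zero, taylor_eval, eval_abelPoly,
        abelPow]
      simp [hI.ne_empty]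

theorem mul_subsetConv_abelPow_one_zero (k : ι → K) {x : K} (hx : x ≠ 0) (y : K) (I : Finset ι) :
    x * subsetConv (abelPow k 1 x) (abelPow k 0 y) I = abelPow k 0 (x + y) I := by
  have := congrArg (eval y) (C_mul_subsetConv_abelPoly k hx I)
  simpa only [subsetConv, eval_mul, eval_C, eval_finsetSum, eval_abelPoly, taylor_eval,
    add_comm y] using this

end Abel

section AbelOrdered

variable [Field K] [LinearOrder K] [IsStrictOrderedRing K] {k : ι → K} {I : Finset ι}

theorem mul_subsetConv_abelPow_one_one (hk : ∀ i ∈ I, 0 ≤ k i) {x y : K} (hx : 0 < x)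
    (hy : 0 < y) :
    x * y * subsetConv (abelPow k 1 x) (abelPow k 1 y) I = (x + y) * abelPow k 1 (x + y) I := by
  have lower := mul_subsetConv_abelPow_add_one k 0 (abelPow k 1 x)
    fun S hS => add_sum_subset_ne_zero hk hy hS
  rw [zero_add] at lower
  rw [subsetConv_comm, mul_assoc, lower, mul_sub, subsetConv_comm,
    mul_subsetConv_abelPow_one_zero k hx.ne', sub_eq_iff_eq_add,
    abelPow_eq_add_sum k 0 (add_sum_subset_ne_zero hk (add_pos hx hy) subset_rfl), zero_add,
    Finset.mul_sum]
  congr 1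
  refine Finset.sum_congr rfl fun j _ => ?_
  rw [mul_left_comm, subsetConv_comm, mul_subsetConv_abelPow_one_zero k hx.ne', add_assoc]

lemma mul_subsetConv_abelPow_one_two (hk : ∀ i ∈ I, 0 ≤ k i) {x y : K} (hx : 0 < x)
    (hy : 0 < y) :
    x * y ^ 2 * subsetConv (abelPow k 1 x) (abelPow k 2 y) I =
      (x + y) * abelPow k 1 (x + y) I -
        abelPow k 2 (x + y) I * ∑ j ∈ I, k j * (y / (y + k j)) * (x + y + k j) := by
  have lower := mul_subsetConv_abelPow_add_one k 1 (abelPow k 1 x)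
    fun S hS => add_sum_subset_ne_zero hk hy hS
  rw [one_add_one_eq_two] at lower
  calc x * y ^ 2 * subsetConv (abelPow k 1 x) (abelPow k 2 y) I
      = x * y * (y * subsetConv (abelPow k 2 y) (abelPow k 1 x) I) := by
        rw [subsetConv_comm]; ring
    _ = x * y * subsetConv (abelPow k 1 x) (abelPow k 1 y) I - ∑ j ∈ I, k j * (y / (y + k j)) *
          (x * (y + k j) * subsetConv (abelPow k 1 x) (abelPow k 1 (y + k j)) (I.erase j)) := by
        rw [lower, mul_sub, Finset.mul_sum, subsetConv_comm]
        congr 1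
        refine Finset.sum_congr rfl fun j hj => ?_
        have := add_pos_of_pos_of_nonneg hy (hk j hj)
        rw [subsetConv_comm]
        field_simp
    _ = _ := by
        rw [mul_subsetConv_abelPow_one_one hk hx hy, Finset.mul_sum]
        congr 1
        refine Finset.sum_congr rfl fun j hj => ?_
        rw [mul_subsetConv_abelPow_one_one (fun i hi => hk i (Finset.mem_of_mem_erase hi)) hx
          (add_pos_of_pos_of_nonneg hy (hk j hj)), ← add_assoc, abelPow_add_erase k 1 _ hj,
          one_add_one_eq_two]
        ring

lemma mul_subsetConv_abelPow_two_two_sum (hk : ∀ i ∈ I, 0 ≤ k i) {x y : K} (hx : 0 < x)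
    (hy : 0 < y) :
    x ^ 2 * y ^ 2 * subsetConv (abelPow k 2 x) (abelPow k 2 y) I =
      x * y ^ 2 * subsetConv (abelPow k 1 x) (abelPow k 2 y) I -
        ∑ j ∈ I, k j * (x / (x + k j)) * ((x + k j) * y ^ 2 *
          subsetConv (abelPow k 1 (x + k j)) (abelPow k 2 y) (I.erase j)) := by
  have lower := mul_subsetConv_abelPow_add_one k 1 (abelPow k 2 y)
    fun S hS => add_sum_subset_ne_zero hk hx hS
  rw [one_add_one_eq_two] at lower
  rw [show x ^ 2 * y ^ 2 * subsetConv (abelPow k 2 x) (abelPow k 2 y) I =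
    x * y ^ 2 * (x * subsetConv (abelPow k 2 x) (abelPow k 2 y) I) by ring, lower, mul_sub,
    Finset.mul_sum]
  congr 1
  refine Finset.sum_congr rfl fun j hj => ?_
  have := add_pos_of_pos_of_nonneg hx (hk j hj)
  field_simp

theorem mul_subsetConv_abelPow_two_two (hk : ∀ i ∈ I, 0 ≤ k i) {x y : K} (hx : 0 < x)
    (hy : 0 < y) :
    x ^ 2 * y ^ 2 * subsetConv (abelPow k 2 x) (abelPow k 2 y) I =
      (x + y) * abelPow k 1 (x + y) I -
        abelPow k 2 (x + y) I *
          ∑ j ∈ I, k j * (x / (x + k j) + y / (y + k j)) * (x + y + k j) +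
        x * y * abelPow k 3 (x + y) I *
          ∑ j ∈ I, k j * (1 / (x + k j) + 1 / (y + k j)) * ∑ l ∈ I.erase j, k l := by
  have inner : ∀ j ∈ I, k j * (x / (x + k j)) * ((x + k j) * y ^ 2 *
        subsetConv (abelPow k 1 (x + k j)) (abelPow k 2 y) (I.erase j)) =
      abelPow k 2 (x + y) I * (k j * (x / (x + k j)) * (x + y + k j)) -
        x * y * abelPow k 3 (x + y) I *
          (∑ l ∈ I.erase j, k j * k l / (x + k j) + ∑ l ∈ I.erase j, k j * k l / (y + k l)) := by
    intro j hj
    have hxj := add_pos_of_pos_of_nonneg hx (hk j hj)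
    rw [mul_subsetConv_abelPow_one_two (fun i hi => hk i (Finset.mem_of_mem_erase hi)) hxj hy,
      add_right_comm, abelPow_add_erase k 1 _ hj, abelPow_add_erase k 2 _ hj, mul_sub,
      ← Finset.sum_add_distrib, Finset.mul_sum, Finset.mul_sum, Finset.mul_sum]
    norm_num only
    congr 1
    · ring
    · refine Finset.sum_congr rfl fun l hl => ?_
      have := add_pos_of_pos_of_nonneg hy (hk l (Finset.mem_of_mem_erase hl))
      field_simp
      ring
  rw [mul_subsetConv_abelPow_two_two_sum hk hx hy, mul_subsetConv_abelPow_one_two hk hx hy,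
    Finset.sum_congr rfl inner, Finset.sum_sub_distrib, ← Finset.mul_sum, ← Finset.mul_sum,
    Finset.sum_add_distrib, sum_sum_erase_symm I fun j l => k j * k l / (y + k l)]
  simp only [mul_add, add_mul, Finset.sum_add_distrib, Finset.mul_sum, mul_one_div]
  simp only [div_mul_eq_mul_div, mul_comm (k _) (k _)]
  ring

end AbelOrdered

end SubsetConvolution

section TreeSeries

open PowerSeries Finset.HasAntidiagonal

/-- The coefficient `k ^ (k - 1) / k!` of the exponential generating function of rooted labelled
trees. The exponent is an integer, so that the value at `0` is `0`. -/
def treeCoeff (k : ℕ) : ℚ := (k : ℚ) ^ ((k : ℤ) - 1) / k.factorial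

/-- The coefficient `k ^ k / k!` of the exponential generating function of labelled trees with two
marked vertices (vertebrates), with value `0` at `0`. -/
def vertebrateCoeff (k : ℕ) : ℚ := k * treeCoeff k

/-- The weight `k ^ (k + 1) / k!` of a cycle of length `k` in genus-zero Hurwitz numbers. -/
def cycleWeight (k : ℕ) : ℚ := k ^ 2 * treeCoeff k

lemma treeCoeff_zero : treeCoeff 0 = 0 := by simp [treeCoeff]

lemma treeCoeff_one : treeCoeff 1 = 1 := by simp [treeCoeff]

lemma cycleWeight_one : cycleWeight 1 = 1 := by simp [cycleWeight, treeCoeff_one]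

lemma vertebrateCoeff_zero : vertebrateCoeff 0 = 0 := by simp [vertebrateCoeff]

lemma treeCoeff_succ (k : ℕ) : treeCoeff (k + 1) = (k + 1 : ℚ) ^ k / (k + 1).factorial := by
  simp [treeCoeff]

lemma vertebrateCoeff_of_pos {k : ℕ} (hk : 0 < k) :
    vertebrateCoeff k = (k : ℚ) ^ k / k.factorial := by
  obtain ⟨k, rfl⟩ := Nat.exists_eq_succ_of_ne_zero hk.ne'
  rw [vertebrateCoeff, Nat.succ_eq_add_one, treeCoeff_succ]
  push_cast
  ring

lemma treeCoeff_pos {k : ℕ} (hk : 0 < k) : 0 < treeCoeff k := by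
  unfold treeCoeff
  positivity

lemma cycleWeight_pos {k : ℕ} (hk : 0 < k) : 0 < cycleWeight k :=
  mul_pos (by positivity) (treeCoeff_pos hk)

/-- The exponential generating function of rooted labelled trees. -/
noncomputable def treeSeries : ℚ⟦X⟧ := mk treeCoeff

/-- The exponential generating function of vertebrates. -/
noncomputable def vertebrateSeries : ℚ⟦X⟧ := mk vertebrateCoeff

lemma sum_choose_mul_abel (n : ℕ) :
    ∑ ij ∈ antidiagonal n, (n.choose ij.1 : ℚ) *
      ((1 + ij.1 : ℚ) ^ ((ij.1 : ℤ) - 1) * (ij.2 : ℚ) ^ ij.2) = (1 + n : ℚ) ^ n := by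
  have abel := mul_subsetConv_abelPow_one_zero (fun _ : ℕ => (1 : ℚ)) one_ne_zero 0
    (Finset.range n)
  have card_sdiff : ∀ S ∈ (Finset.range n).powerset,
      abelPow (fun _ : ℕ => (1 : ℚ)) 1 1 S * abelPow (fun _ => 1) 0 0 (Finset.range n \ S) =
        (1 + S.card : ℚ) ^ ((S.card : ℤ) - 1) * ((n - S.card : ℕ) : ℚ) ^ (n - S.card) := by
    intro S hS
    simp [abelPow, Finset.card_sdiff_of_subset (Finset.mem_powerset.mp hS)]
  rw [one_mul, subsetConv, Finset.sum_congr rfl card_sdiff, Finset.sum_powerset_apply_card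
    (fun j : ℕ => (1 + j : ℚ) ^ ((j : ℤ) - 1) * ((n - j : ℕ) : ℚ) ^ (n - j))] at abel
  rw [Finset.Nat.sum_antidiagonal_eq_sum_range_succ_mk]
  simpa [abelPow] using abel

theorem treeSeries_mul_one_add_vertebrateSeries :
    treeSeries * (1 + vertebrateSeries) = vertebrateSeries := by
  ext n
  rcases n with _ | n
  · simp [treeSeries, vertebrateSeries, coeff_mul, treeCoeff_zero, vertebrateCoeff_zero]
  have coeff_one_add (j : ℕ) : coeff j (1 + vertebrateSeries) = (j : ℚ) ^ j / j.factorial := by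
    rcases j.eq_zero_or_pos with rfl | hj
    · simp [vertebrateSeries, vertebrateCoeff_zero]
    · simp [vertebrateSeries, vertebrateCoeff_of_pos hj, coeff_one, hj.ne']
  rw [coeff_mul, Finset.Nat.sum_antidiagonal_succ]
  simp only [coeff_one_add]
  simp only [treeSeries, vertebrateSeries, coeff_mk, treeCoeff_zero, zero_mul, zero_add]
  rw [vertebrateCoeff_of_pos n.succ_pos, Nat.factorial_succ, Nat.succ_eq_add_one, pow_succ]
  push_cast
  rw [mul_comm (n + 1 : ℚ) n.factorial, mul_div_mul_right _ _ (by positivity),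
    add_comm (n : ℚ) 1, ← sum_choose_mul_abel, Finset.sum_div]
  refine Finset.sum_congr rfl fun ⟨i, j⟩ hij => ?_
  obtain rfl := mem_antidiagonal.mp hij
  rw [treeCoeff_succ, Nat.cast_add_choose, Nat.factorial_succ, zpow_sub_one₀ (by positivity),
    zpow_natCast]
  push_cast
  field_simp
  ring

theorem mul_sum_treeCoeff_mul_treeCoeff (n : ℕ) :
    n * ∑ ij ∈ antidiagonal n, treeCoeff ij.1 * treeCoeff ij.2 =
      2 * (vertebrateCoeff n - treeCoeff n) := by
  have functional := congrArg (coeff n) treeSeries_mul_one_add_vertebrateSeries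
  rw [mul_add, mul_one, map_add, coeff_mul] at functional
  simp only [treeSeries, vertebrateSeries, coeff_mk] at functional
  calc n * ∑ ij ∈ antidiagonal n, treeCoeff ij.1 * treeCoeff ij.2
      = ∑ ij ∈ antidiagonal n, treeCoeff ij.1 * vertebrateCoeff ij.2 +
          ∑ ij ∈ antidiagonal n, treeCoeff ij.1 * vertebrateCoeff ij.2 := by
        nth_rw 3 [← Finset.Nat.sum_antidiagonal_swap]
        rw [Finset.mul_sum, ← Finset.sum_add_distrib]
        refine Finset.sum_congr rfl fun ij hij => ?_
        rw [← mem_antidiagonal.mp hij, Prod.fst_swap, Prod.snd_swap, vertebrateCoeff,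
          vertebrateCoeff]
        push_cast
        ring
    _ = _ := by linear_combination 2 * functional

end TreeSeries

section DoubleSeries

open PowerSeries Finset.HasAntidiagonal

variable {R : Type*}

lemma coeff_coeff_mul [CommSemiring R] (a b : ℕ) (F G : R⟦X⟧⟦X⟧) :
    coeff b (coeff a (F * G)) = ∑ i ∈ antidiagonal a, ∑ j ∈ antidiagonal b,
      coeff j.1 (coeff i.1 F) * coeff j.2 (coeff i.2 G) := by
  simp only [coeff_mul, map_sum]

lemma coeff_coeff_map_C_mul [CommSemiring R] (a b : ℕ) (f : R⟦X⟧) (G : R⟦X⟧⟦X⟧) :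
    coeff b (coeff a (map C f * G)) =
      ∑ i ∈ antidiagonal a, coeff i.1 f * coeff b (coeff i.2 G) := by
  simp only [coeff_mul a, map_sum, coeff_map, coeff_C_mul]

lemma coeff_coeff_C_mul [CommSemiring R] (a b : ℕ) (f : R⟦X⟧) (G : R⟦X⟧⟦X⟧) :
    coeff b (coeff a (C f * G)) =
      ∑ j ∈ antidiagonal b, coeff j.1 f * coeff j.2 (coeff a G) := by
  rw [coeff_C_mul, coeff_mul]

lemma coeff_coeff_map_C_mul_C [CommSemiring R] (a b : ℕ) (f g : R⟦X⟧) :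
    coeff b (coeff a (map C f * C g)) = coeff a f * coeff b g := by
  rw [mul_comm, coeff_C_mul, coeff_map, coeff_mul_C, mul_comm]

/-- The Euler operator `x ∂/∂x + y ∂/∂y` on power series in two variables. -/
noncomputable def euler : Derivation ℚ ℚ⟦X⟧⟦X⟧ ℚ⟦X⟧⟦X⟧ :=
  Derivation.mk'
    { toFun F := mk fun a => mk fun b => (a + b : ℚ) * coeff b (coeff a F)
      map_add' F G := by ext a b; simp [mul_add]
      map_smul' c F := by ext a b; simp; ring }
    (by
      intro F G
      ext a b
      simp only [LinearMap.coe_mk, AddHom.coe_mk, coeff_mk, smul_eq_mul, mul_comm G, map_add,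
        coeff_coeff_mul, Finset.mul_sum, ← Finset.sum_add_distrib]
      refine Finset.sum_congr rfl fun i hi => Finset.sum_congr rfl fun j hj => ?_
      rw [← mem_antidiagonal.mp hi, ← mem_antidiagonal.mp hj]
      push_cast
      ring)

lemma coeff_coeff_euler (a b : ℕ) (F : ℚ⟦X⟧⟦X⟧) :
    coeff b (coeff a (euler F)) = (a + b : ℚ) * coeff b (coeff a F) := by
  simp [euler]

lemma eq_zero_of_one_sub_mul_euler_eq_self {S Z : ℚ⟦X⟧⟦X⟧} (hS : coeff 0 (coeff 0 S) = 0)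
    (hZ : (1 - S) * euler Z = Z) (hx : coeff 0 (coeff 1 Z) = 0) (hy : coeff 1 (coeff 0 Z) = 0) :
    Z = 0 := by
  suffices ∀ N a b, a + b = N → coeff b (coeff a Z) = 0 by
    ext a b
    simpa using this _ a b rfl
  intro N
  induction N using Nat.strong_induction_on with
  | _ N ih =>
  intro a b hab
  have higher_order : coeff b (coeff a (S * euler Z)) = 0 := by
    rw [coeff_coeff_mul]
    refine Finset.sum_eq_zero fun i hi => Finset.sum_eq_zero fun j hj => ?_
    rw [mem_antidiagonal] at hi hj
    by_cases h0 : i.1 = 0 ∧ j.1 = 0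
    · rw [h0.1, h0.2, hS, zero_mul]
    · rw [coeff_coeff_euler, ih (i.2 + j.2) (by lia) i.2 j.2 rfl, mul_zero, mul_zero]
  have homogeneous : ((a + b : ℕ) - 1 : ℚ) * coeff b (coeff a Z) = 0 := by
    have := congrArg (fun F => coeff b (coeff a F)) hZ
    simp only [sub_mul, one_mul, map_sub, higher_order, coeff_coeff_euler] at this
    push_cast
    linear_combination this
  rcases mul_eq_zero.mp homogeneous with h1 | h0
  · have : a + b = 1 := by exact_mod_cast sub_eq_zero.mp h1
    obtain ⟨rfl, rfl⟩ | ⟨rfl, rfl⟩ : (a = 1 ∧ b = 0) ∨ (a = 0 ∧ b = 1) := by lia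
    exacts [hx, hy]
  · exact h0

/-- The right inverse of the Euler operator on series without constant term. -/
noncomputable def eulerInv (F : ℚ⟦X⟧⟦X⟧) : ℚ⟦X⟧⟦X⟧ :=
  mk fun a => mk fun b => coeff b (coeff a F) / (a + b : ℚ)

lemma coeff_coeff_eulerInv (a b : ℕ) (F : ℚ⟦X⟧⟦X⟧) :
    coeff b (coeff a (eulerInv F)) = coeff b (coeff a F) / (a + b : ℚ) := by
  simp [eulerInv]

lemma eulerInv_add (F G : ℚ⟦X⟧⟦X⟧) : eulerInv (F + G) = eulerInv F + eulerInv G := by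
  ext a b
  simp [coeff_coeff_eulerInv, add_div]

lemma euler_eulerInv {F : ℚ⟦X⟧⟦X⟧} (hF : coeff 0 (coeff 0 F) = 0) : euler (eulerInv F) = F := by
  ext a b
  rw [coeff_coeff_euler, coeff_coeff_eulerInv]
  obtain ⟨rfl, rfl⟩ | hab : (a = 0 ∧ b = 0) ∨ 0 < a + b := by lia
  · simpa using hF.symm
  · have : (0 : ℚ) < a + b := by exact_mod_cast hab
    field_simp

lemma eulerInv_euler {F : ℚ⟦X⟧⟦X⟧} (hF : coeff 0 (coeff 0 F) = 0) : eulerInv (euler F) = F := by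
  ext a b
  rw [coeff_coeff_eulerInv, coeff_coeff_euler]
  obtain ⟨rfl, rfl⟩ | hab : (a = 0 ∧ b = 0) ∨ 0 < a + b := by lia
  · simpa using hF.symm
  · have : (0 : ℚ) < a + b := by exact_mod_cast hab
    field_simp

lemma euler_map_C_mk (f : ℕ → ℚ) :
    euler (map C (mk f)) = map C (mk fun k => k * f k) := by
  ext a b
  rw [coeff_coeff_euler, coeff_map, coeff_map, coeff_C, coeff_C]
  split_ifs with hb <;> simp [hb]

lemma euler_C_mk (f : ℕ → ℚ) : euler (C (mk f)) = C (mk fun k => k * f k) := by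
  ext a b
  rw [coeff_coeff_euler, coeff_C, coeff_C]
  split_ifs with ha <;> simp [ha]

lemma euler_map_C_treeSeries : euler (map C treeSeries) = map C vertebrateSeries :=
  euler_map_C_mk treeCoeff

lemma euler_C_treeSeries : euler (C treeSeries) = C vertebrateSeries :=
  euler_C_mk treeCoeff

lemma X_eq_mk : (X : ℚ⟦X⟧) = mk fun k => if k = 1 then 1 else 0 := by
  ext k
  simp [coeff_X]

lemma mk_mul_X_eq_X : (mk fun k => k * if k = 1 then 1 else 0 : ℚ⟦X⟧) = X := by
  ext k
  rw [coeff_mk, coeff_X]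
  split_ifs with hk <;> simp [hk]

lemma euler_X : euler X = X := by
  rw [← map_X C, X_eq_mk, euler_map_C_mk, mk_mul_X_eq_X, ← X_eq_mk]

lemma euler_C_X : euler (C X) = C X := by
  rw [X_eq_mk, euler_C_mk, mk_mul_X_eq_X, ← X_eq_mk]

/-- The series `∑ treeCoeff (a + b) x ^ a y ^ b` over `a, b ≥ 1`. -/
noncomputable def mixedTreeSeries : ℚ⟦X⟧⟦X⟧ :=
  mk fun a => mk fun b => if a = 0 ∨ b = 0 then 0 else treeCoeff (a + b)

lemma mul_mixedTreeSeries :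
    (C X - X) * mixedTreeSeries = X * C treeSeries - C X * map C treeSeries := by
  ext a b
  rw [sub_mul, map_sub, map_sub, map_sub, map_sub, coeff_C_mul, coeff_C_mul]
  rcases a with _ | _ | a <;> rcases b with _ | _ | b <;>
    simp [mixedTreeSeries, treeSeries, treeCoeff_zero, treeCoeff_one, coeff_succ_X_mul,
      coeff_X, add_comm, add_left_comm]

lemma C_X_sub_X_ne_zero : (C X - X : ℚ⟦X⟧⟦X⟧) ≠ 0 := by
  intro h
  have := congrArg (fun F => coeff 0 (coeff 1 F)) h
  simp at this

lemma mul_euler_mixedTreeSeries :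
    (C X - X) * euler mixedTreeSeries =
      X * C vertebrateSeries - C X * map C vertebrateSeries := by
  have := congrArg euler mul_mixedTreeSeries
  simp only [Derivation.leibniz, map_sub, euler_X, euler_C_X, euler_map_C_treeSeries,
    euler_C_treeSeries, smul_eq_mul] at this
  linear_combination this - mul_mixedTreeSeries

lemma one_sub_mul_vertebrateSeries :
    (1 - treeSeries) * vertebrateSeries = treeSeries := by
  linear_combination -treeSeries_mul_one_add_vertebrateSeries

lemma one_sub_mul_map_C_vertebrateSeries :
    (1 - map C treeSeries) * map C vertebrateSeries = map (C (R := ℚ)) treeSeries := by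
  simpa using congrArg (map (C (R := ℚ))) one_sub_mul_vertebrateSeries

lemma one_sub_mul_C_vertebrateSeries :
    (1 - C treeSeries) * C vertebrateSeries = C (R := ℚ⟦X⟧) treeSeries := by
  simpa using congrArg (C (R := ℚ⟦X⟧)) one_sub_mul_vertebrateSeries

lemma one_sub_mul_one_sub_mul_euler_mixedTreeSeries :
    (1 - map C treeSeries) * (1 - C treeSeries) * euler mixedTreeSeries =
      mixedTreeSeries + map C treeSeries * C treeSeries := by
  apply mul_left_cancel₀ C_X_sub_X_ne_zero
  linear_combination (1 - map C treeSeries) * (1 - C treeSeries) * mul_euler_mixedTreeSeries +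
    (1 - map C treeSeries) * X * one_sub_mul_C_vertebrateSeries -
    (1 - C treeSeries) * C X * one_sub_mul_map_C_vertebrateSeries - mul_mixedTreeSeries

lemma one_sub_sq_mul_euler_map_C_vertebrateSeries :
    (1 - map C treeSeries) * ((1 - map C treeSeries) * euler (map C vertebrateSeries)) =
      map C vertebrateSeries := by
  have := congrArg euler one_sub_mul_map_C_vertebrateSeries
  simp only [Derivation.leibniz, map_sub, euler_map_C_treeSeries, Derivation.map_one_eq_zero,
    smul_eq_mul] at this
  linear_combination (1 - map C treeSeries) * this +
    map C vertebrateSeries * one_sub_mul_map_C_vertebrateSeries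

lemma coeff_coeff_eulerInv_euler_mul (a b : ℕ) :
    coeff b (coeff a (eulerInv (euler (map C vertebrateSeries) * C vertebrateSeries))) =
      a * vertebrateCoeff a * vertebrateCoeff b / (a + b) := by
  rw [coeff_coeff_eulerInv, vertebrateSeries, euler_map_C_mk, coeff_coeff_map_C_mul_C, coeff_mk,
    coeff_mk]

lemma coeff_coeff_eulerInv_mul_euler (a b : ℕ) :
    coeff b (coeff a (eulerInv (map C vertebrateSeries * euler (C vertebrateSeries)))) =
      vertebrateCoeff a * (b * vertebrateCoeff b) / (a + b) := by
  rw [coeff_coeff_eulerInv, vertebrateSeries, euler_C_mk, coeff_coeff_map_C_mul_C, coeff_mk,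
    coeff_mk]

lemma mul_eulerInv_add_mixedTreeSeries :
    (map C treeSeries - C treeSeries) *
        eulerInv (euler (map C vertebrateSeries) * C vertebrateSeries) + mixedTreeSeries =
      C treeSeries * map C vertebrateSeries := by
  set t : ℚ⟦X⟧⟦X⟧ := map C treeSeries
  set u : ℚ⟦X⟧⟦X⟧ := C treeSeries
  set H : ℚ⟦X⟧⟦X⟧ := map C vertebrateSeries
  set V : ℚ⟦X⟧⟦X⟧ := C vertebrateSeries
  set K := eulerInv (euler H * V)
  have euler_K : euler K = euler H * V := euler_eulerInv (by
    simp [V, coeff_mul, vertebrateSeries, vertebrateCoeff_zero])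
  have h1 : (1 - t) * H = t := one_sub_mul_map_C_vertebrateSeries
  have h2 : (1 - u) * V = u := one_sub_mul_C_vertebrateSeries
  rw [← sub_eq_zero]
  refine eq_zero_of_one_sub_mul_euler_eq_self (S := t + u - t * u) ?_ ?_ ?_ ?_
  · simp only [t, u, map_sub, map_add, coeff_coeff_map_C_mul, coeff_map, treeSeries, coeff_mk,
      treeCoeff_zero, map_zero, coeff_C]
    simp [treeCoeff_zero]
  · simp only [map_sub, map_add, Derivation.leibniz, smul_eq_mul, euler_K]
    rw [euler_map_C_treeSeries, euler_C_treeSeries]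
    linear_combination K * (1 - u) * h1 - K * (1 - t) * h2 +
      one_sub_mul_one_sub_mul_euler_mixedTreeSeries - (1 - t) * H * h2 - u * h1 -
      u * one_sub_sq_mul_euler_map_C_vertebrateSeries + (1 - t) * euler H * (t - u) * h2
  · simp only [sub_mul, map_sub, map_add, t, u, K, H, V, coeff_coeff_map_C_mul, coeff_coeff_C_mul,
      coeff_coeff_eulerInv_euler_mul]
    simp [Finset.Nat.antidiagonal_succ, treeSeries, mixedTreeSeries, vertebrateSeries,
      treeCoeff_zero, vertebrateCoeff_zero]
  · simp only [sub_mul, map_sub, map_add, t, u, K, H, V, coeff_coeff_map_C_mul, coeff_coeff_C_mul,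
      coeff_coeff_eulerInv_euler_mul]
    simp [Finset.Nat.antidiagonal_succ, treeSeries, mixedTreeSeries, vertebrateSeries,
      treeCoeff_zero, vertebrateCoeff_zero]

theorem mul_eulerInv_add_mul_eulerInv_add_mixedTreeSeries :
    map C treeSeries * eulerInv (euler (map C vertebrateSeries) * C vertebrateSeries) +
        C treeSeries * eulerInv (map C vertebrateSeries * euler (C vertebrateSeries)) +
        mixedTreeSeries =
      map C vertebrateSeries * C vertebrateSeries := by
  have sum_eulerInv : eulerInv (euler (map C vertebrateSeries) * C vertebrateSeries) +
      eulerInv (map C vertebrateSeries * euler (C vertebrateSeries)) =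
      map C vertebrateSeries * C vertebrateSeries := by
    rw [← eulerInv_add, ← eulerInv_euler (F := map C vertebrateSeries * C vertebrateSeries),
      Derivation.leibniz, smul_eq_mul, smul_eq_mul, mul_comm (C vertebrateSeries), add_comm]
    simp [coeff_mul, vertebrateSeries, vertebrateCoeff_zero]
  linear_combination mul_eulerInv_add_mixedTreeSeries + C treeSeries * sum_eulerInv -
    map C vertebrateSeries * one_sub_mul_C_vertebrateSeries

end DoubleSeries

open Finset.HasAntidiagonal in
/-- The total weight `∑ w_i T_j / (i + b)` over the splittings `i + j = a` of a cycle of length `a`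
into a part of length `i` which is joined to a cycle of length `b` and a part of length `j`
which is not; here `w` and `T` are `cycleWeight` and `treeCoeff`. -/
def splitSum (a b : ℕ) : ℚ :=
  ∑ ij ∈ antidiagonal a, cycleWeight ij.1 * treeCoeff ij.2 / (ij.1 + b)

theorem vertebrateCoeff_mul_vertebrateCoeff {a b : ℕ} (ha : 0 < a) (hb : 0 < b) :
    vertebrateCoeff a * vertebrateCoeff b = treeCoeff (a + b) +
      vertebrateCoeff b * splitSum a b + vertebrateCoeff a * splitSum b a := by
  have := congrArg (fun F => PowerSeries.coeff b (PowerSeries.coeff a F))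
    mul_eulerInv_add_mul_eulerInv_add_mixedTreeSeries
  simp only [map_add, coeff_coeff_map_C_mul_C] at this
  simp only [coeff_coeff_map_C_mul, coeff_coeff_C_mul,
    coeff_coeff_eulerInv_euler_mul, coeff_coeff_eulerInv_mul_euler] at this
  simp only [treeSeries, vertebrateSeries, mixedTreeSeries, PowerSeries.coeff_mk, ha.ne', hb.ne',
    or_self, if_false] at this
  rw [← this, splitSum, splitSum, Finset.mul_sum, Finset.mul_sum,
    ← Finset.Nat.sum_antidiagonal_swap, ← Finset.Nat.sum_antidiagonal_swap (n := b),
    add_comm _ (treeCoeff (a + b)), ← add_assoc]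
  congr 1
  · congr 1
    refine Finset.sum_congr rfl fun ij _ => ?_
    rw [cycleWeight, vertebrateCoeff, Prod.fst_swap, Prod.snd_swap]
    ring
  · refine Finset.sum_congr rfl fun ij _ => ?_
    rw [cycleWeight, vertebrateCoeff, vertebrateCoeff, Prod.fst_swap, Prod.snd_swap]
    ring

section CutAndJoin

open Finset.HasAntidiagonal

lemma vertebrateCoeff_pos {k : ℕ} (hk : 0 < k) : 0 < vertebrateCoeff k :=
  mul_pos (by exact_mod_cast hk) (treeCoeff_pos hk)

lemma two_mul_splitSum (a b : ℕ) :
    2 * splitSum a b = ∑ ij ∈ antidiagonal a, treeCoeff ij.1 * treeCoeff ij.2 *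
      ((ij.1 : ℚ) ^ 2 / (ij.1 + b) + (ij.2 : ℚ) ^ 2 / (ij.2 + b)) := by
  simp only [mul_add, Finset.sum_add_distrib]
  nth_rw 2 [← Finset.Nat.sum_antidiagonal_swap]
  rw [two_mul, splitSum]
  congr 1 <;>
  · refine Finset.sum_congr rfl fun ij _ => ?_
    simp only [cycleWeight, Prod.fst_swap, Prod.snd_swap]
    ring

lemma mul_sum_treeCoeff_mul_div_add_div (a : ℕ) {b : ℕ} (hb : 0 < b) :
    b * ∑ ij ∈ antidiagonal a, treeCoeff ij.1 * treeCoeff ij.2 *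
        ((ij.1 : ℚ) / (ij.1 + b) + ij.2 / (ij.2 + b)) =
      2 * (vertebrateCoeff a - treeCoeff a) - 2 * splitSum a b := by
  rw [two_mul_splitSum, ← mul_sum_treeCoeff_mul_treeCoeff, Finset.mul_sum, Finset.mul_sum,
    ← Finset.sum_sub_distrib]
  refine Finset.sum_congr rfl fun ij hij => ?_
  rw [← mem_antidiagonal.mp hij]
  field_simp
  push_cast
  ring

lemma mul_sum_treeCoeff_mul_mul_one_div_add_one_div (a : ℕ) {b : ℕ} (hb : 0 < b) :
    b * ∑ ij ∈ antidiagonal a, treeCoeff ij.1 * treeCoeff ij.2 *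
        (ij.1 * ij.2 * (1 / (ij.1 + b : ℚ) + 1 / (ij.2 + b))) =
      2 * a * (vertebrateCoeff a - treeCoeff a) - 2 * (a + b) * splitSum a b := by
  rw [mul_right_comm 2 (a + b : ℚ), two_mul_splitSum, mul_right_comm 2 (a : ℚ),
    ← mul_sum_treeCoeff_mul_treeCoeff, Finset.mul_sum, Finset.mul_sum, Finset.sum_mul,
    Finset.sum_mul, ← Finset.sum_sub_distrib]
  refine Finset.sum_congr rfl fun ij hij => ?_
  rw [← mem_antidiagonal.mp hij]
  field_simp
  push_cast
  ring

lemma abelPow_eq_mul_pow {ι K : Type*} [Field K] {κ : ι → K} {x : K} {S : Finset ι}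
    (h : x + ∑ i ∈ S, κ i ≠ 0) (r : ℤ) (m : ℕ) :
    abelPow κ r x S = abelPow κ (r + m) x S * (x + ∑ i ∈ S, κ i) ^ m := by
  rw [abelPow, abelPow, ← zpow_natCast, ← zpow_add₀ h]
  congr 1
  ring

variable {ι : Type*} [DecidableEq ι]

lemma cycleWeight_mul_subsetConv {k : ι → ℕ} {J : Finset ι} (p q : ℕ) :
    cycleWeight p * cycleWeight q *
        subsetConv (abelPow (fun i => (k i : ℚ)) 2 p) (abelPow (fun i => (k i : ℚ)) 2 q) J =
      treeCoeff p * treeCoeff q *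
        ((p + q) * abelPow (fun i => (k i : ℚ)) 1 (p + q) J -
          abelPow (fun i => (k i : ℚ)) 2 (p + q) J *
            ∑ j ∈ J, k j * (p / (p + k j : ℚ) + q / (q + k j)) * (p + q + k j) +
          p * q * abelPow (fun i => (k i : ℚ)) 3 (p + q) J *
            ∑ j ∈ J, k j * (1 / (p + k j : ℚ) + 1 / (q + k j)) * ∑ l ∈ J.erase j, (k l : ℚ)) := by
  rcases p.eq_zero_or_pos with rfl | hp
  · simp [cycleWeight, treeCoeff_zero]
  rcases q.eq_zero_or_pos with rfl | hq
  · simp [cycleWeight, treeCoeff_zero]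
  rw [← mul_subsetConv_abelPow_two_two (k := fun i => (k i : ℚ)) (fun i _ => by positivity)
    (Nat.cast_pos.mpr hp) (Nat.cast_pos.mpr hq), cycleWeight, cycleWeight]
  ring

lemma sum_antidiagonal_cycleWeight_mul_subsetConv_eq_sum {k : ι → ℕ} {J : Finset ι}
    (hk : ∀ i ∈ J, 0 < k i) (a : ℕ) :
    ∑ pq ∈ antidiagonal a, cycleWeight pq.1 * cycleWeight pq.2 *
        subsetConv (abelPow (fun i => (k i : ℚ)) 2 pq.1) (abelPow (fun i => (k i : ℚ)) 2 pq.2) J =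
      abelPow (fun i => (k i : ℚ)) 1 a J * (2 * (vertebrateCoeff a - treeCoeff a)) -
        abelPow (fun i => (k i : ℚ)) 2 a J * ∑ j ∈ J, (a + k j) *
          (2 * (vertebrateCoeff a - treeCoeff a) - 2 * splitSum a (k j)) +
        abelPow (fun i => (k i : ℚ)) 3 a J * ∑ j ∈ J, (∑ l ∈ J.erase j, (k l : ℚ)) *
          (2 * a * (vertebrateCoeff a - treeCoeff a) - 2 * (a + k j) * splitSum a (k j)) := by
  have at_sum : ∀ pq ∈ antidiagonal a, (pq.1 + pq.2 : ℚ) = a := fun pq hpq => by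
    exact_mod_cast mem_antidiagonal.mp hpq
  have second : ∀ j ∈ J, (a + k j) *
      (2 * (vertebrateCoeff a - treeCoeff a) - 2 * splitSum a (k j)) =
      ∑ pq ∈ antidiagonal a, treeCoeff pq.1 * treeCoeff pq.2 *
        (k j * (pq.1 / (pq.1 + k j : ℚ) + pq.2 / (pq.2 + k j)) * (a + k j)) := fun j hj => by
    rw [← mul_sum_treeCoeff_mul_div_add_div a (hk j hj), Finset.mul_sum, Finset.mul_sum]
    exact Finset.sum_congr rfl fun pq _ => by ring
  have third : ∀ j ∈ J, (∑ l ∈ J.erase j, (k l : ℚ)) *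
      (2 * a * (vertebrateCoeff a - treeCoeff a) - 2 * (a + k j) * splitSum a (k j)) =
      ∑ pq ∈ antidiagonal a, treeCoeff pq.1 * treeCoeff pq.2 * (pq.1 * pq.2 *
        (k j * (1 / (pq.1 + k j : ℚ) + 1 / (pq.2 + k j)) * ∑ l ∈ J.erase j, (k l : ℚ))) :=
    fun j hj => by
      rw [← mul_sum_treeCoeff_mul_mul_one_div_add_one_div a (hk j hj), Finset.mul_sum,
        Finset.mul_sum]
      exact Finset.sum_congr rfl fun pq _ => by ring
  rw [Finset.sum_congr rfl second, Finset.sum_congr rfl third, Finset.sum_comm,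
    Finset.sum_comm (s := J), ← mul_sum_treeCoeff_mul_treeCoeff, Finset.mul_sum, Finset.mul_sum,
    Finset.mul_sum, Finset.mul_sum, ← Finset.sum_sub_distrib, ← Finset.sum_add_distrib]
  refine Finset.sum_congr rfl fun pq hpq => ?_
  rw [cycleWeight_mul_subsetConv, at_sum pq hpq, ← Finset.mul_sum, ← Finset.mul_sum,
    ← Finset.mul_sum]
  ring

theorem sum_antidiagonal_cycleWeight_mul_subsetConv {k : ι → ℕ} {J : Finset ι}
    (hk : ∀ i ∈ J, 0 < k i) {a : ℕ} (ha : 0 < a) :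
    ∑ pq ∈ antidiagonal a, cycleWeight pq.1 * cycleWeight pq.2 *
        subsetConv (abelPow (fun i => (k i : ℚ)) 2 pq.1) (abelPow (fun i => (k i : ℚ)) 2 pq.2) J =
      abelPow (fun i => (k i : ℚ)) 3 a J *
        (2 * ∑ j ∈ J, (a + k j : ℚ) ^ 2 * splitSum a (k j) -
          2 * (J.card - 1) * a ^ 2 * (vertebrateCoeff a - treeCoeff a)) := by
  have base_ne_zero : (a : ℚ) + ∑ i ∈ J, (k i : ℚ) ≠ 0 := by positivity
  rw [sum_antidiagonal_cycleWeight_mul_subsetConv_eq_sum hk a,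
    abelPow_eq_mul_pow base_ne_zero 1 2, abelPow_eq_mul_pow base_ne_zero 2 1]
  norm_num only
  set D := vertebrateCoeff a - treeCoeff a
  set s := ∑ i ∈ J, (k i : ℚ) with hs
  have sum_erase : ∀ j ∈ J, ∑ l ∈ J.erase j, (k l : ℚ) = s - k j := fun j hj => by
    rw [hs, ← Finset.add_sum_erase J _ hj, add_sub_cancel_left]
  have termwise : (∑ j ∈ J, (∑ l ∈ J.erase j, (k l : ℚ)) *
        (2 * a * D - 2 * (a + k j) * splitSum a (k j))) -
      (a + s) * ∑ j ∈ J, (a + k j) * (2 * D - 2 * splitSum a (k j)) =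
      ∑ j ∈ J, (2 * ((a + k j : ℚ) ^ 2 * splitSum a (k j)) - 2 * a ^ 2 * D -
        2 * (2 * a + s) * D * k j) := by
    rw [Finset.mul_sum, ← Finset.sum_sub_distrib]
    refine Finset.sum_congr rfl fun j hj => ?_
    rw [sum_erase j hj]
    ring
  rw [Finset.sum_sub_distrib, Finset.sum_sub_distrib, Finset.sum_const, nsmul_eq_mul,
    ← Finset.mul_sum, ← Finset.mul_sum, ← hs] at termwise
  linear_combination abelPow (fun i => (k i : ℚ)) 3 a J * termwise

lemma mul_prod_erase_cycleWeight {k : ι → ℕ} {I : Finset ι} {i : ι} (hi : i ∈ I) (hk : 0 < k i) :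
    k i * ∏ l ∈ I.erase i, cycleWeight (k l) =
      (∏ l ∈ I, cycleWeight (k l)) / vertebrateCoeff (k i) := by
  rw [eq_div_iff (vertebrateCoeff_pos hk).ne', ← Finset.mul_prod_erase I _ hi, cycleWeight,
    vertebrateCoeff]
  ring

lemma mul_cycleWeight_mul_prod_erase_erase {k : ι → ℕ} {I : Finset ι} (hk : ∀ i ∈ I, 0 < k i)
    {i j : ι} (hi : i ∈ I) (hj : j ∈ I.erase i) :
    (k i * k j : ℚ) * (cycleWeight (k i + k j) *
        ∏ l ∈ (I.erase i).erase j, cycleWeight (k l)) =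
      (∏ l ∈ I, cycleWeight (k l)) * ((k i + k j : ℚ) ^ 2 * treeCoeff (k i + k j) /
        (vertebrateCoeff (k i) * vertebrateCoeff (k j))) := by
  have join_j := mul_prod_erase_cycleWeight hj (hk j (Finset.mem_of_mem_erase hj))
  have join_i := mul_prod_erase_cycleWeight hi (hk i hi)
  calc _ = cycleWeight (k i + k j) * (k i * (k j *
          ∏ l ∈ (I.erase i).erase j, cycleWeight (k l))) := by ring
    _ = _ := by
        rw [join_j, mul_div_assoc', join_i, cycleWeight]
        push_cast
        ring

lemma mul_sum_antidiagonal_mul_prod_erase {k : ι → ℕ} {I : Finset ι} (hk : ∀ i ∈ I, 0 < k i)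
    {i : ι} (hi : i ∈ I) :
    k i * (∑ pq ∈ antidiagonal (k i), cycleWeight pq.1 * cycleWeight pq.2 *
        subsetConv (abelPow (fun i => (k i : ℚ)) 2 pq.1) (abelPow (fun i => (k i : ℚ)) 2 pq.2)
          (I.erase i)) * ∏ l ∈ I.erase i, cycleWeight (k l) =
      (∑ l ∈ I, (k l : ℚ)) ^ ((I.card : ℤ) - 4) * (∏ l ∈ I, cycleWeight (k l)) *
        (2 * ∑ j ∈ I.erase i, (k i + k j : ℚ) ^ 2 * splitSum (k i) (k j) / vertebrateCoeff (k i) -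
          2 * (I.card - 2) * (k i ^ 2 - k i)) := by
  have vertebrate_pos := vertebrateCoeff_pos (hk i hi)
  have weight_pos : (0 : ℚ) < k i := Nat.cast_pos.mpr (hk i hi)
  have tree_div_vertebrate : treeCoeff (k i) = vertebrateCoeff (k i) / k i := by
    rw [vertebrateCoeff]
    field_simp
  have base : abelPow (fun i => (k i : ℚ)) 3 (k i) (I.erase i) =
      (∑ l ∈ I, (k l : ℚ)) ^ ((I.card : ℤ) - 4) := by
    rw [abelPow, Finset.add_sum_erase I (fun i => (k i : ℚ)) hi, ← Finset.card_erase_add_one hi]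
    congr 1
    push_cast
    ring
  have card_erase : ((I.erase i).card : ℚ) = I.card - 1 := by
    rw [← Finset.card_erase_add_one hi, Nat.cast_add_one, add_sub_cancel_right]
  rw [sum_antidiagonal_cycleWeight_mul_subsetConv
      (fun j hj => hk j (Finset.mem_of_mem_erase hj)) (hk i hi), base, mul_right_comm,
    mul_prod_erase_cycleWeight hi (hk i hi), card_erase, tree_div_vertebrate, ← Finset.sum_div]
  field_simp
  ring

lemma sum_sum_erase_treeCoeff_add_splitSum {k : ι → ℕ} {I : Finset ι} (hk : ∀ i ∈ I, 0 < k i) :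
    ∑ i ∈ I, ∑ j ∈ I.erase i, (k i + k j : ℚ) ^ 2 * treeCoeff (k i + k j) /
        (vertebrateCoeff (k i) * vertebrateCoeff (k j)) +
      2 * ∑ i ∈ I, ∑ j ∈ I.erase i,
        (k i + k j : ℚ) ^ 2 * splitSum (k i) (k j) / vertebrateCoeff (k i) =
      ∑ i ∈ I, ∑ j ∈ I.erase i, (k i + k j : ℚ) ^ 2 := by
  rw [two_mul]
  nth_rw 3 [sum_sum_erase_symm]
  simp only [← Finset.sum_add_distrib]
  refine Finset.sum_congr rfl fun i hi => Finset.sum_congr rfl fun j hj => ?_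
  have hj := hk j (Finset.mem_of_mem_erase hj)
  have := vertebrateCoeff_pos (hk i hi)
  have := vertebrateCoeff_pos hj
  field_simp
  linear_combination -(k i + k j : ℚ) ^ 2 * vertebrateCoeff_mul_vertebrateCoeff (hk i hi) hj

lemma sum_sum_erase_add_sq {R : Type*} [CommRing R] (x : ι → R) (I : Finset ι) :
    ∑ i ∈ I, ∑ j ∈ I.erase i, (x i + x j) ^ 2 =
      2 * (I.card - 2) * ∑ i ∈ I, x i ^ 2 + 2 * (∑ i ∈ I, x i) ^ 2 := by
  have erase : ∀ i ∈ I, ∑ j ∈ I.erase i, (x i + x j) ^ 2 =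
      ∑ j ∈ I, (x i + x j) ^ 2 - 4 * x i ^ 2 := fun i hi => by
    rw [← Finset.add_sum_erase I _ hi]
    ring
  rw [Finset.sum_congr rfl erase]
  simp only [add_sq, Finset.sum_add_distrib, Finset.sum_sub_distrib, Finset.sum_const,
    nsmul_eq_mul, ← Finset.mul_sum, ← Finset.sum_mul]
  ring

theorem two_mul_zpow_mul_prod_cycleWeight {k : ι → ℕ} {I : Finset ι} (hk : ∀ i ∈ I, 0 < k i) :
    2 * (∑ i ∈ I, (k i : ℚ) + I.card - 2) *
        ((∑ i ∈ I, (k i : ℚ)) ^ ((I.card : ℤ) - 3) * ∏ i ∈ I, cycleWeight (k i)) =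
      (∑ i ∈ I, (k i : ℚ)) ^ ((I.card : ℤ) - 4) * ∑ i ∈ I, ∑ j ∈ I.erase i,
          (k i * k j : ℚ) * (cycleWeight (k i + k j) *
            ∏ l ∈ (I.erase i).erase j, cycleWeight (k l)) +
        ∑ i ∈ I, k i * (∑ pq ∈ antidiagonal (k i), cycleWeight pq.1 * cycleWeight pq.2 *
          subsetConv (abelPow (fun i => (k i : ℚ)) 2 pq.1) (abelPow (fun i => (k i : ℚ)) 2 pq.2)
            (I.erase i)) * ∏ l ∈ I.erase i, cycleWeight (k l) := by
  rcases I.eq_empty_or_nonempty with rfl | hI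
  · simp
  have base_pos : (0 : ℚ) < ∑ i ∈ I, (k i : ℚ) :=
    Finset.sum_pos (fun i hi => Nat.cast_pos.mpr (hk i hi)) hI
  have exponent : (∑ i ∈ I, (k i : ℚ)) ^ ((I.card : ℤ) - 3) =
      (∑ i ∈ I, (k i : ℚ)) ^ ((I.card : ℤ) - 4) * ∑ i ∈ I, (k i : ℚ) := by
    rw [← zpow_add_one₀ base_pos.ne']
    congr 1
    ring
  have symmetrized := (sum_sum_erase_treeCoeff_add_splitSum hk).trans
    (sum_sum_erase_add_sq (fun i => (k i : ℚ)) I)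
  rw [Finset.sum_congr rfl fun i hi => Finset.sum_congr rfl fun j hj =>
      mul_cycleWeight_mul_prod_erase_erase hk hi hj,
    Finset.sum_congr rfl fun i hi => mul_sum_antidiagonal_mul_prod_erase hk hi, exponent]
  simp only [← Finset.mul_sum, Finset.sum_sub_distrib]
  linear_combination -(∑ i ∈ I, (k i : ℚ)) ^ ((I.card : ℤ) - 4) *
    (∏ i ∈ I, cycleWeight (k i)) * symmetrized

end CutAndJoin

section CycleRel

variable {α : Type*}

/-- The equivalence relation of lying in the same cycle of `π`. The relation
`cycleRel (swap a b)` is the smallest one relating `a` and `b`. -/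
abbrev cycleRel (π : Perm α) : Setoid α := Perm.SameCycle.setoid π

lemma cycleRel_apply_self (π : Perm α) (x : α) : cycleRel π x (π x) :=
  Perm.sameCycle_apply_right.mpr (Perm.SameCycle.refl π x)

lemma cycleRel_le_iff [Finite α] {π : Perm α} {R : Setoid α} :
    cycleRel π ≤ R ↔ ∀ x, R x (π x) := by
  refine ⟨fun h x => h (cycleRel_apply_self π x), fun h x y hxy => ?_⟩
  obtain ⟨n, rfl⟩ := Perm.SameCycle.exists_nat_pow_eq hxy
  induction n with
  | zero => exact R.refl' x
  | succ n ih =>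
    rw [pow_succ', Perm.mul_apply]
    exact R.trans' (ih ⟨n, by simp⟩) (h _)

lemma cycleRel_swap_le_iff [Finite α] [DecidableEq α] {a b : α} {R : Setoid α} :
    cycleRel (swap a b) ≤ R ↔ R a b := by
  refine cycleRel_le_iff.trans ⟨fun h => by simpa using h a, fun h x => ?_⟩
  rw [swap_apply_def]
  split_ifs with hxa hxb
  · exact hxa ▸ h
  · exact hxb ▸ R.symm' h
  · exact R.refl' x

lemma sup_cycleRel_swap_iff [Finite α] [DecidableEq α] {a b : α} {R : Setoid α} {x y : α} :
    (R ⊔ cycleRel (swap a b)) x y ↔ R x y ∨ (R x a ∧ R b y) ∨ (R x b ∧ R a y) := by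
  classical
  constructor
  · intro h
    let glued := Setoid.ker fun z => if R z b then Quotient.mk R a else Quotient.mk R z
    have le_glued : R ⊔ cycleRel (swap a b) ≤ glued := by
      refine sup_le (fun u v huv => ?_) (cycleRel_swap_le_iff.mpr ?_)
      · have : R u b ↔ R v b :=
          ⟨fun hu => R.trans' (R.symm' huv) hu, fun hv => R.trans' huv hv⟩
        simp only [glued, Setoid.ker_def, this, Quotient.sound huv]
      · simp [glued, Setoid.ker_def]
    have hxy := le_glued h
    simp only [glued, Setoid.ker_def] at hxy
    split_ifs at hxy with hx hy hy
    · exact Or.inl (R.trans' hx (R.symm' hy))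
    · exact Or.inr (Or.inr ⟨hx, Quotient.exact hxy⟩)
    · exact Or.inr (Or.inl ⟨Quotient.exact hxy, R.symm' hy⟩)
    · exact Or.inl (Quotient.exact hxy)
  · have le_sup : R ≤ R ⊔ cycleRel (swap a b) := le_sup_left
    have hab : (R ⊔ cycleRel (swap a b)) a b := cycleRel_swap_le_iff.mp le_sup_right
    rintro (h | ⟨hx, hy⟩ | ⟨hx, hy⟩)
    · exact le_sup h
    · exact Setoid.trans' _ (le_sup hx) (Setoid.trans' _ hab (le_sup hy))
    · exact Setoid.trans' _ (le_sup hx) (Setoid.trans' _ (Setoid.symm' _ hab) (le_sup hy))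

end CycleRel

section Blocks

variable {α : Type*} [DecidableEq α] {R Q : Setoid α} {x y : α} {S B : Finset α}

/-- The set `S` is a union of blocks of `R`. -/
def IsSaturated (R : Setoid α) (S : Finset α) : Prop := ∀ ⦃x y⦄, R x y → x ∈ S → y ∈ S

lemma IsSaturated.sdiff (hB : IsSaturated R B) (hS : IsSaturated R S) : IsSaturated R (B \ S) := by
  intro x y hxy hx
  rw [Finset.mem_sdiff] at *
  exact ⟨hB hxy hx.1, fun hy => hx.2 (hS (R.symm' hxy) hy)⟩

open scoped Classical in
/-- The unions of blocks of `R` inside `B` that contain `x` but not `y`. -/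
noncomputable def separatingSets (R : Setoid α) (B : Finset α) (x y : α) : Finset (Finset α) :=
  {S ∈ B.powerset | IsSaturated R S ∧ x ∈ S ∧ y ∉ S}

lemma mem_separatingSets :
    S ∈ separatingSets R B x y ↔ S ⊆ B ∧ IsSaturated R S ∧ x ∈ S ∧ y ∉ S := by
  simp [separatingSets]

variable [Fintype α]

/-- The partition of a finite type into the classes of `R`. -/
noncomputable def blocks (R : Setoid α) : Finpartition (Finset.univ : Finset α) :=
  letI := Classical.decRel R.r
  Finpartition.ofSetoid R

/-- The block of `x`, that is, the class of `x` as a finite set. -/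
noncomputable abbrev block (R : Setoid α) (x : α) : Finset α := (blocks R).part x

@[simp] lemma mem_block : y ∈ block R x ↔ R x y := by
  classical
  exact Finpartition.mem_part_ofSetoid_iff_rel

lemma self_mem_block (R : Setoid α) (x : α) : x ∈ block R x := mem_block.mpr (R.refl' x)

lemma block_mem_blocks (R : Setoid α) (x : α) : block R x ∈ (blocks R).parts := by simp

lemma block_eq_block_iff : block R x = block R y ↔ R x y := by
  rw [← (blocks R).mem_part_iff_part_eq_part (Finset.mem_univ x) (Finset.mem_univ y), mem_block]
  exact ⟨R.symm', R.symm'⟩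

lemma exists_block_eq {c : Finset α} (hc : c ∈ (blocks R).parts) : ∃ x, block R x = c := by
  obtain ⟨x, hx⟩ := (blocks R).nonempty_of_mem_parts hc
  exact ⟨x, (blocks R).part_eq_of_mem hc hx⟩

/-- The blocks of `R` contained in `S`. -/
noncomputable def blocksIn (R : Setoid α) (S : Finset α) : Finset (Finset α) :=
  {c ∈ (blocks R).parts | c ⊆ S}

lemma mem_blocksIn {c : Finset α} : c ∈ blocksIn R S ↔ c ∈ (blocks R).parts ∧ c ⊆ S :=
  Finset.mem_filter

lemma blocksIn_mono (h : S ⊆ B) : blocksIn R S ⊆ blocksIn R B := fun _ hc =>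
  mem_blocksIn.mpr ⟨(mem_blocksIn.mp hc).1, (mem_blocksIn.mp hc).2.trans h⟩

lemma card_pos_of_mem_blocksIn {c : Finset α} (hc : c ∈ blocksIn R S) : 0 < c.card :=
  ((blocks R).nonempty_of_mem_parts (mem_blocksIn.mp hc).1).card_pos

lemma IsSaturated.block_subset (hS : IsSaturated R S) (hx : x ∈ S) : block R x ⊆ S :=
  fun _ hy => hS (mem_block.mp hy) hx

lemma IsSaturated.block_mem_blocksIn (hS : IsSaturated R S) (hx : x ∈ S) :
    block R x ∈ blocksIn R S :=
  mem_blocksIn.mpr ⟨block_mem_blocks R x, hS.block_subset hx⟩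

lemma isSaturated_block (h : R ≤ Q) (x : α) : IsSaturated R (block Q x) := fun _ _ hyz hy =>
  mem_block.mpr (Q.trans' (mem_block.mp hy) (h hyz))

lemma IsSaturated.sum_block {K : Type*} [Semiring K] (hS : IsSaturated R S) (F : Finset α → K) :
    ∑ x ∈ S, F (block R x) = ∑ c ∈ blocksIn R S, c.card * F c := by
  rw [← Finset.sum_fiberwise_of_maps_to fun x hx => hS.block_mem_blocksIn hx]
  refine Finset.sum_congr rfl fun c hc => ?_
  have fiber : {x ∈ S | block R x = c} = c := by
    ext x
    rw [Finset.mem_filter, (blocks R).part_eq_iff_mem (mem_blocksIn.mp hc).1]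
    exact and_iff_right_of_imp fun hx => (mem_blocksIn.mp hc).2 hx
  rw [← nsmul_eq_mul, ← Finset.sum_const]
  exact Finset.sum_congr fiber fun x hx => congrArg F ((blocks R).part_eq_of_mem
    (mem_blocksIn.mp hc).1 (fiber ▸ hx))

lemma IsSaturated.sum_card_blocksIn (hS : IsSaturated R S) :
    ∑ c ∈ blocksIn R S, (c.card : ℚ) = S.card := by
  simpa using (hS.sum_block fun _ => (1 : ℚ)).symm

lemma IsSaturated.biUnion_blocksIn (hS : IsSaturated R S) : (blocksIn R S).biUnion id = S := by
  ext x
  rw [Finset.mem_biUnion]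
  exact ⟨fun ⟨c, hc, hx⟩ => (mem_blocksIn.mp hc).2 hx,
    fun hx => ⟨block R x, hS.block_mem_blocksIn hx, self_mem_block R x⟩⟩

lemma mem_biUnion_blocks_iff {T : Finset (Finset α)} (hT : T ⊆ (blocks R).parts) :
    x ∈ T.biUnion id ↔ block R x ∈ T := by
  rw [Finset.mem_biUnion]
  refine ⟨fun ⟨c, hc, hx⟩ => ?_, fun h => ⟨_, h, self_mem_block R x⟩⟩
  rwa [block, (blocks R).part_eq_of_mem (hT hc) hx]

lemma isSaturated_biUnion {T : Finset (Finset α)} (hT : T ⊆ (blocks R).parts) :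
    IsSaturated R (T.biUnion id) := by
  intro x y hxy hx
  rw [mem_biUnion_blocks_iff hT] at *
  rwa [← block_eq_block_iff.mpr hxy]

lemma blocksIn_biUnion {T : Finset (Finset α)} (hT : T ⊆ (blocks R).parts) :
    blocksIn R (T.biUnion id) = T := by
  ext c
  rw [mem_blocksIn]
  refine ⟨fun ⟨hc, hcT⟩ => ?_, fun hc => ⟨hT hc, Finset.subset_biUnion_of_mem id hc⟩⟩
  obtain ⟨x, rfl⟩ := exists_block_eq hc
  exact (mem_biUnion_blocks_iff hT).mp (hcT (self_mem_block R x))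

lemma IsSaturated.blocksIn_sdiff (hS : IsSaturated R S) :
    blocksIn R (B \ S) = blocksIn R B \ blocksIn R S := by
  ext c
  rw [Finset.mem_sdiff, mem_blocksIn, mem_blocksIn, mem_blocksIn]
  constructor
  · rintro ⟨hc, hcBS⟩
    obtain ⟨x, hx⟩ := (blocks R).nonempty_of_mem_parts hc
    exact ⟨⟨hc, hcBS.trans Finset.sdiff_subset⟩,
      fun h => (Finset.mem_sdiff.mp (hcBS hx)).2 (h.2 hx)⟩
  · rintro ⟨⟨hc, hcB⟩, hcS⟩
    refine ⟨hc, fun x hx => Finset.mem_sdiff.mpr ⟨hcB hx, fun hxS => hcS ⟨hc, ?_⟩⟩⟩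
    rw [← (blocks R).part_eq_of_mem hc hx]
    exact hS.block_subset hxS

lemma blocksIn_block (R : Setoid α) (x : α) : blocksIn R (block R x) = {block R x} := by
  simpa using blocksIn_biUnion (R := R) (T := {block R x}) (by simp)

/-- With `n = |B|` and `c` running through the blocks of `R` in `B`, the number
`m! * n ^ (#blocks - 3) * ∏ cycleWeight |c|` counts minimal transitive factorizations into `m`
transpositions of a permutation of `B` with cycles `c`; `localWeight` drops the factor `m!`. -/
noncomputable def localWeight (R : Setoid α) (B : Finset α) : ℚ :=
  (B.card : ℚ) ^ (((blocksIn R B).card : ℤ) - 3) * ∏ c ∈ blocksIn R B, cycleWeight c.card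

lemma biUnion_insert_mem_separatingSets (hB : IsSaturated R B) (hx : x ∈ B) (hxy : ¬ R x y)
    {T : Finset (Finset α)} (hT : T ⊆ ((blocksIn R B).erase (block R x)).erase (block R y)) :
    (insert (block R x) T).biUnion id ∈ separatingSets R B x y := by
  have hTB : insert (block R x) T ⊆ blocksIn R B := Finset.insert_subset
    (hB.block_mem_blocksIn hx)
    (hT.trans ((Finset.erase_subset _ _).trans (Finset.erase_subset _ _)))
  have hTR : insert (block R x) T ⊆ (blocks R).parts := hTB.trans (Finset.filter_subset _ _)
  refine mem_separatingSets.mpr ⟨?_, isSaturated_biUnion hTR, ?_, ?_⟩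
  · exact Finset.biUnion_subset.mpr fun c hc => (mem_blocksIn.mp (hTB hc)).2
  · exact (mem_biUnion_blocks_iff hTR).mpr (Finset.mem_insert_self _ _)
  · rw [mem_biUnion_blocks_iff hTR, Finset.mem_insert, not_or]
    exact ⟨fun h => hxy (block_eq_block_iff.mp h.symm),
      fun h => Finset.notMem_erase _ _ (hT h)⟩

lemma blocksIn_sdiff_eq_insert (hB : IsSaturated R B) (hy : y ∈ B)
    (hS : S ∈ separatingSets R B x y) :
    blocksIn R (B \ S) = insert (block R y) (((blocksIn R B).erase (block R x)).erase (block R y) \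
      (blocksIn R S).erase (block R x)) := by
  obtain ⟨-, hSat, hxS, hyS⟩ := mem_separatingSets.mp hS
  have hyB := hB.block_mem_blocksIn hy
  have hxS' := hSat.block_mem_blocksIn hxS
  have hyS' : block R y ∉ blocksIn R S := fun h => hyS ((mem_blocksIn.mp h).2 (self_mem_block R y))
  rw [hSat.blocksIn_sdiff]
  grind

lemma localWeight_mul_localWeight_sdiff (hB : IsSaturated R B) (hy : y ∈ B)
    (hS : S ∈ separatingSets R B x y) :
    localWeight R S * localWeight R (B \ S) = (∏ c ∈ blocksIn R B, cycleWeight c.card) *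
      (abelPow (fun c => (c.card : ℚ)) 2 (block R x).card ((blocksIn R S).erase (block R x)) *
        abelPow (fun c => (c.card : ℚ)) 2 (block R y).card
          (((blocksIn R B).erase (block R x)).erase (block R y) \
            (blocksIn R S).erase (block R x))) := by
  obtain ⟨hSB, hSat, hxS, -⟩ := mem_separatingSets.mp hS
  have parts_S := Finset.insert_erase (hSat.block_mem_blocksIn hxS)
  have parts_sdiff := blocksIn_sdiff_eq_insert hB hy hS
  have weights : ∏ c ∈ blocksIn R B, cycleWeight c.card =
      (∏ c ∈ blocksIn R S, cycleWeight c.card) * ∏ c ∈ blocksIn R (B \ S), cycleWeight c.card := by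
    rw [hSat.blocksIn_sdiff, mul_comm, Finset.prod_sdiff (blocksIn_mono hSB)]
  have power_S : (S.card : ℚ) ^ (((blocksIn R S).card : ℤ) - 3) =
      abelPow (fun c => (c.card : ℚ)) 2 (block R x).card ((blocksIn R S).erase (block R x)) := by
    rw [← hSat.sum_card_blocksIn, ← parts_S, Finset.sum_insert (Finset.notMem_erase _ _),
      Finset.card_insert_of_notMem (Finset.notMem_erase _ _), abelPow, parts_S]
    congr 1
    push_cast
    ring
  have power_sdiff : ((B \ S).card : ℚ) ^ (((blocksIn R (B \ S)).card : ℤ) - 3) =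
      abelPow (fun c => (c.card : ℚ)) 2 (block R y).card
        (((blocksIn R B).erase (block R x)).erase (block R y) \
          (blocksIn R S).erase (block R x)) := by
    have notMem : block R y ∉ ((blocksIn R B).erase (block R x)).erase (block R y) \
      (blocksIn R S).erase (block R x) := by simp
    rw [← (hB.sdiff hSat).sum_card_blocksIn, parts_sdiff, Finset.sum_insert notMem,
      Finset.card_insert_of_notMem notMem, abelPow]
    congr 1
    push_cast
    ring
  rw [localWeight, localWeight, power_S, power_sdiff, weights]
  ring

theorem sum_separatingSets_localWeight (hB : IsSaturated R B) (hx : x ∈ B) (hy : y ∈ B)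
    (hxy : ¬ R x y) :
    ∑ S ∈ separatingSets R B x y, localWeight R S * localWeight R (B \ S) =
      (∏ c ∈ blocksIn R B, cycleWeight c.card) *
        subsetConv (abelPow (fun c => (c.card : ℚ)) 2 (block R x).card)
          (abelPow (fun c => (c.card : ℚ)) 2 (block R y).card)
          (((blocksIn R B).erase (block R x)).erase (block R y)) := by
  rw [subsetConv, Finset.mul_sum]
  refine Finset.sum_nbij' (fun S => (blocksIn R S).erase (block R x))
    (fun T => (insert (block R x) T).biUnion id) ?_ ?_ ?_ ?_
    fun S hS => localWeight_mul_localWeight_sdiff hB hy hS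
  · intro S hS
    obtain ⟨hSB, -, -, hyS⟩ := mem_separatingSets.mp hS
    have hyS' : block R y ∉ blocksIn R S := fun h =>
      hyS ((mem_blocksIn.mp h).2 (self_mem_block R y))
    have := blocksIn_mono (R := R) hSB
    grind
  · intro T hT
    exact biUnion_insert_mem_separatingSets hB hx hxy (Finset.mem_powerset.mp hT)
  · intro S hS
    obtain ⟨-, hSat, hxS, -⟩ := mem_separatingSets.mp hS
    rw [Finset.insert_erase (hSat.block_mem_blocksIn hxS), hSat.biUnion_blocksIn]
  · intro T hT
    have hTB := Finset.mem_powerset.mp hT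
    have hTR : insert (block R x) T ⊆ (blocks R).parts := Finset.insert_subset
      (block_mem_blocks R x) (hTB.trans ((Finset.erase_subset _ _).trans
        ((Finset.erase_subset _ _).trans (Finset.filter_subset _ _))))
    rw [blocksIn_biUnion hTR, Finset.erase_insert fun h => by simpa using hTB h]

end Blocks

section MergeAndSplit

variable {α : Type*} {R P Q : Setoid α} {a b : α} {B S : Finset α}

/-- The relation obtained from `P` by cutting each of its classes along `S`. -/
def splitAlong (P : Setoid α) (S : Finset α) : Setoid α := P ⊓ Setoid.ker (· ∈ S)

lemma splitAlong_iff {x y : α} : splitAlong P S x y ↔ P x y ∧ (x ∈ S ↔ y ∈ S) :=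
  ⟨fun h => ⟨h.1, iff_of_eq h.2⟩, fun h => ⟨h.1, propext h.2⟩⟩

lemma le_splitAlong (h : R ≤ P) (hS : IsSaturated R S) : R ≤ splitAlong P S := fun _ _ hxy =>
  splitAlong_iff.mpr ⟨h hxy, hS hxy, hS (R.symm' hxy)⟩

variable [DecidableEq α] [Fintype α]

lemma block_sup_swap_left : block (R ⊔ cycleRel (swap a b)) a = block R a ∪ block R b := by
  ext x
  have := R.refl' a
  simp only [mem_block, Finset.mem_union, sup_cycleRel_swap_iff]
  tauto

lemma block_sup_swap_right : block (R ⊔ cycleRel (swap a b)) b = block R a ∪ block R b := by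
  rw [swap_comm, block_sup_swap_left, Finset.union_comm]

lemma block_sup_swap_of_not {x : α} (ha : ¬ R x a) (hb : ¬ R x b) :
    block (R ⊔ cycleRel (swap a b)) x = block R x := by
  ext y
  simp only [mem_block, sup_cycleRel_swap_iff]
  tauto

lemma parts_blocks_sup_swap :
    (blocks (R ⊔ cycleRel (swap a b))).parts = insert (block R a ∪ block R b)
      (((blocks R).parts.erase (block R a)).erase (block R b)) := by
  ext c
  rw [Finset.mem_insert, Finset.mem_erase, Finset.mem_erase]
  constructor
  · intro hc
    obtain ⟨x, rfl⟩ := exists_block_eq hc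
    by_cases ha : R x a
    · rw [← block_sup_swap_left]
      exact Or.inl (block_eq_block_iff.mpr (sup_cycleRel_swap_iff.mpr (Or.inl ha)))
    by_cases hb : R x b
    · rw [← block_sup_swap_right]
      exact Or.inl (block_eq_block_iff.mpr (sup_cycleRel_swap_iff.mpr (Or.inl hb)))
    rw [block_sup_swap_of_not ha hb]
    exact Or.inr ⟨fun h => hb (block_eq_block_iff.mp h), fun h => ha (block_eq_block_iff.mp h),
      block_mem_blocks R x⟩
  · rintro (rfl | ⟨hb, ha, hc⟩)
    · rw [← block_sup_swap_left]
      exact block_mem_blocks _ a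
    · obtain ⟨x, rfl⟩ := exists_block_eq hc
      rw [← block_sup_swap_of_not (fun h => ha (block_eq_block_iff.mpr h))
        (fun h => hb (block_eq_block_iff.mpr h))]
      exact block_mem_blocks _ x

lemma block_union_block_notMem (hab : ¬ R a b) : block R a ∪ block R b ∉ (blocks R).parts := by
  intro h
  have ha := (blocks R).part_eq_of_mem h (Finset.mem_union_left _ (self_mem_block R a))
  have hb := (blocks R).part_eq_of_mem h (Finset.mem_union_right _ (self_mem_block R b))
  exact hab (block_eq_block_iff.mp (ha.trans hb.symm))

lemma disjoint_block (hab : ¬ R a b) : Disjoint (block R a) (block R b) :=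
  (blocks R).disjoint (block_mem_blocks R a) (block_mem_blocks R b)
    fun h => hab (block_eq_block_iff.mp h)

lemma card_blocks_sup_swap (hab : ¬ R a b) :
    (blocks (R ⊔ cycleRel (swap a b))).parts.card + 1 = (blocks R).parts.card := by
  have hne : block R b ≠ block R a := fun h => hab (block_eq_block_iff.mp h.symm)
  rw [parts_blocks_sup_swap, Finset.card_insert_of_notMem fun h => block_union_block_notMem hab
      (Finset.mem_of_mem_erase (Finset.mem_of_mem_erase h)),
    Finset.card_erase_add_one (Finset.mem_erase.mpr ⟨hne, block_mem_blocks R b⟩),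
    Finset.card_erase_add_one (block_mem_blocks R a)]

lemma blocksIn_sup_swap (hB : IsSaturated R B) (ha : a ∈ B) (hb : b ∈ B) :
    blocksIn (R ⊔ cycleRel (swap a b)) B =
      insert (block R a ∪ block R b) (((blocksIn R B).erase (block R a)).erase (block R b)) := by
  rw [blocksIn, parts_blocks_sup_swap, Finset.filter_insert,
    if_pos (Finset.union_subset (hB.block_subset ha) (hB.block_subset hb)), Finset.filter_erase,
    Finset.filter_erase, blocksIn]

lemma blocksIn_sup_swap_of_notMem (ha : a ∉ B) (hb : b ∉ B) :
    blocksIn (R ⊔ cycleRel (swap a b)) B = blocksIn R B := by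
  have notMem : ∀ x ∉ B, block R x ∉ blocksIn R B := fun x hx h =>
    hx ((mem_blocksIn.mp h).2 (self_mem_block R x))
  rw [blocksIn, parts_blocks_sup_swap, Finset.filter_insert,
    if_neg fun h => ha (h (Finset.mem_union_left _ (self_mem_block R a))), Finset.filter_erase,
    Finset.filter_erase, ← blocksIn, Finset.erase_eq_of_notMem (notMem a ha),
    Finset.erase_eq_of_notMem (notMem b hb)]

lemma localWeight_sup_swap_of_notMem (ha : a ∉ B) (hb : b ∉ B) :
    localWeight (R ⊔ cycleRel (swap a b)) B = localWeight R B := by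
  rw [localWeight, localWeight, blocksIn_sup_swap_of_notMem ha hb]

lemma block_splitAlong_of_mem (ha : a ∈ S) (hS : S ⊆ block P a) :
    block (splitAlong P S) a = S := by
  ext z
  rw [mem_block, splitAlong_iff]
  exact ⟨fun h => h.2.mp ha, fun h => ⟨mem_block.mp (hS h), by simp [ha, h]⟩⟩

lemma block_splitAlong_of_notMem (hb : b ∉ S) : block (splitAlong P S) b = block P b \ S := by
  ext z
  rw [mem_block, splitAlong_iff, Finset.mem_sdiff, mem_block]
  tauto

lemma splitAlong_sup_swap (hab : P a b) (ha : a ∈ S) (hb : b ∉ S) (hS : S ⊆ block P a) :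
    splitAlong P S ⊔ cycleRel (swap a b) = P := by
  refine le_antisymm (sup_le inf_le_left (cycleRel_swap_le_iff.mpr hab)) fun u v huv => ?_
  refine sup_cycleRel_swap_iff.mpr ?_
  simp only [splitAlong_iff, ha, hb, iff_true, iff_false, true_iff, false_iff]
  have mem_S : ∀ z ∈ S, P z a := fun z hz => P.symm' (mem_block.mp (hS hz))
  by_cases hu : u ∈ S <;> by_cases hv : v ∈ S
  · exact Or.inl ⟨huv, by simp [hu, hv]⟩
  · exact Or.inr (Or.inl ⟨⟨mem_S u hu, hu⟩,
      P.trans' (P.symm' hab) (P.trans' (P.symm' (mem_S u hu)) huv), hv⟩)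
  · exact Or.inr (Or.inr ⟨⟨P.trans' huv (P.trans' (mem_S v hv) hab), hu⟩, P.symm' (mem_S v hv),
      hv⟩)
  · exact Or.inl ⟨huv, by simp [hu, hv]⟩

lemma splitAlong_block_of_not (hab : ¬ Q a b) :
    splitAlong (Q ⊔ cycleRel (swap a b)) (block Q a) = Q := by
  ext u v
  rw [splitAlong_iff, sup_cycleRel_swap_iff, mem_block, mem_block]
  constructor
  · rintro ⟨huv | ⟨hu, hv⟩ | ⟨hu, hv⟩, hiff⟩
    · exact huv
    · exact absurd (Q.trans' (hiff.mp (Q.symm' hu)) (Q.symm' hv)) hab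
    · exact absurd (Q.trans' (hiff.mpr hv) hu) hab
  · intro huv
    exact ⟨Or.inl huv, fun h => Q.trans' h huv, fun h => Q.trans' h (Q.symm' huv)⟩

open scoped Classical in
/-- If `Q` joined with `a ∼ b` is `P`, either `Q` already is `P`, or it arises from `P` by
splitting the block of `a` along a unique separating set, namely `block Q a`. -/
lemma ite_sup_swap_eq {K : Type*} [Semiring K] (hab : P a b) (hRQ : R ≤ Q) :
    (if Q ⊔ cycleRel (swap a b) = P then (1 : K) else 0) = (if Q = P then 1 else 0) +
      ∑ S ∈ separatingSets R (block P a) a b, if Q = splitAlong P S then 1 else 0 := by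
  by_cases hQ : Q a b
  · rw [sup_eq_left.mpr (cycleRel_swap_le_iff.mpr hQ), Finset.sum_eq_zero, add_zero]
    intro S hS
    obtain ⟨-, -, ha, hb⟩ := mem_separatingSets.mp hS
    refine if_neg fun h => hb ((splitAlong_iff.mp (h ▸ hQ)).2.mp ha)
  have hne : Q ≠ P := fun h => hQ (h ▸ hab)
  rw [if_neg hne, zero_add]
  by_cases hsup : Q ⊔ cycleRel (swap a b) = P
  · have hQP : Q ≤ P := hsup ▸ le_sup_left
    have hmem : block Q a ∈ separatingSets R (block P a) a b := mem_separatingSets.mpr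
      ⟨fun z hz => mem_block.mpr (hQP (mem_block.mp hz)), isSaturated_block hRQ a,
        self_mem_block Q a, fun h => hQ (mem_block.mp h)⟩
    rw [if_pos hsup, Finset.sum_eq_single_of_mem _ hmem fun S hS hSne => if_neg fun h => hSne ?_,
      if_pos (hsup ▸ (splitAlong_block_of_not hQ).symm)]
    obtain ⟨hSP, -, ha, -⟩ := mem_separatingSets.mp hS
    rw [h, block_splitAlong_of_mem ha hSP]
  · rw [if_neg hsup, Finset.sum_eq_zero]
    intro S hS
    obtain ⟨hSP, -, ha, hb⟩ := mem_separatingSets.mp hS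
    refine if_neg fun h => hsup ?_
    rw [h, splitAlong_sup_swap hab ha hb hSP]

end MergeAndSplit

section SwapMul

variable {α : Type*} {π : Perm α} {a b : α}

lemma iterate_inj_of_lt_minimalPeriod {i j : ℕ} (hi : i < Function.minimalPeriod π a)
    (hj : j < Function.minimalPeriod π a) : π^[i] a = π^[j] a ↔ i = j :=
  Function.iterate_injOn_Iio_minimalPeriod.eq_iff hi hj

variable [Finite α]

lemma cycleRel_mul_le (σ π : Perm α) : cycleRel (σ * π) ≤ cycleRel σ ⊔ cycleRel π := by
  refine cycleRel_le_iff.mpr fun x => ?_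
  have le_left : cycleRel σ ≤ cycleRel σ ⊔ cycleRel π := le_sup_left
  have le_right : cycleRel π ≤ cycleRel σ ⊔ cycleRel π := le_sup_right
  exact Setoid.trans' _ (le_right (cycleRel_apply_self π x))
    (le_left (cycleRel_apply_self σ (π x)))

lemma cycleRel_iff_exists_iterate {x : α} :
    cycleRel π a x ↔ ∃ i < Function.minimalPeriod π a, π^[i] a = x := by
  constructor
  · intro h
    obtain ⟨i, rfl⟩ := Perm.SameCycle.exists_nat_pow_eq h
    have periodic : 0 < Function.minimalPeriod π a := Function.minimalPeriod_pos_of_mem_periodicPts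
      (Function.Injective.mem_periodicPts π.injective a)
    exact ⟨_, Nat.mod_lt i periodic, by rw [Function.iterate_mod_minimalPeriod_eq, Perm.coe_pow]⟩
  · rintro ⟨i, -, rfl⟩
    exact ⟨i, by rw [zpow_natCast, Perm.coe_pow]⟩

variable [DecidableEq α]

lemma cycleRel_swap_mul_le {P : Setoid α} (hP : cycleRel π ≤ P) (hab : P a b) :
    cycleRel (swap a b * π) ≤ P :=
  (cycleRel_mul_le _ _).trans (sup_le (cycleRel_swap_le_iff.mpr hab) hP)

lemma cycleRel_swap_mul_of_cycleRel (hab : ¬ cycleRel π a b) {x : α} (hx : cycleRel π a x) :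
    cycleRel (swap a b * π) a x := by
  obtain ⟨n, rfl⟩ := Perm.SameCycle.exists_nat_pow_eq hx
  clear hx
  induction n with
  | zero => exact Setoid.refl' _ a
  | succ n ih =>
    rw [pow_succ', Perm.mul_apply]
    by_cases h_eq : π ((π ^ n) a) = a
    · rw [h_eq]
    · have h_ne : π ((π ^ n) a) ≠ b := fun h =>
        hab ⟨(n + 1 : ℕ), by rw [zpow_natCast, pow_succ', Perm.mul_apply, h]⟩
      have := cycleRel_apply_self (swap a b * π) ((π ^ n) a)
      rw [Perm.mul_apply, swap_apply_of_ne_of_ne h_eq h_ne] at this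
      exact Setoid.trans' _ ih this

lemma cycleRel_swap_mul_of_not (hab : ¬ cycleRel π a b) :
    cycleRel (swap a b * π) = cycleRel π ⊔ cycleRel (swap a b) := by
  refine le_antisymm (sup_comm (cycleRel π) _ ▸ cycleRel_mul_le _ _) ?_
  have from_a : ∀ x, cycleRel π a x → cycleRel (swap a b * π) a x := fun _ =>
    cycleRel_swap_mul_of_cycleRel hab
  have from_b : ∀ x, cycleRel π b x → cycleRel (swap a b * π) b x := fun _ hx =>
    swap_comm a b ▸ cycleRel_swap_mul_of_cycleRel (fun h => hab (Setoid.symm' _ h)) hx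
  have glued : cycleRel (swap a b * π) a b := by
    have h_inv := from_a (π⁻¹ a) (Setoid.symm' _ (by simpa using cycleRel_apply_self π (π⁻¹ a)))
    exact Setoid.trans' _ h_inv (by simpa using cycleRel_apply_self (swap a b * π) (π⁻¹ a))
  refine sup_le (cycleRel_le_iff.mpr fun x => ?_) (cycleRel_swap_le_iff.mpr glued)
  have h_symm := Setoid.symm' _ (cycleRel_apply_self π x)
  by_cases ha : π x = a
  · rw [ha] at h_symm ⊢
    exact Setoid.symm' _ (from_a x h_symm)
  by_cases hb : π x = b
  · rw [hb] at h_symm ⊢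
    exact Setoid.symm' _ (from_b x h_symm)
  have := cycleRel_apply_self (swap a b * π) x
  rwa [Perm.mul_apply, swap_apply_of_ne_of_ne ha hb] at this

/-- Multiplying by the transposition of `a` and `π^[j] a` closes up the first `j` points of the
cycle of `a`. -/
lemma cycleRel_swap_iterate_mul_iff {j : ℕ} (hj : 0 < j) (hjk : j < Function.minimalPeriod π a)
    {x : α} : cycleRel (swap a (π^[j] a) * π) a x ↔ ∃ i < j, π^[i] a = x := by
  set ρ := swap a (π^[j] a) * π with hρ
  have advance : ∀ i, i + 1 < j → ρ (π^[i] a) = π^[i + 1] a := by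
    intro i hi
    rw [hρ, Perm.mul_apply, ← Function.iterate_succ_apply' π i a]
    apply swap_apply_of_ne_of_ne
    · exact fun h => i.succ_ne_zero
        ((iterate_inj_of_lt_minimalPeriod (j := 0) (by lia) (by lia)).mp h)
    · exact fun h => hi.ne ((iterate_inj_of_lt_minimalPeriod (by lia) hjk).mp h)
  have return_to_start : ρ (π^[j - 1] a) = a := by
    rw [hρ, Perm.mul_apply, ← Function.iterate_succ_apply' π (j - 1) a, Nat.succ_eq_add_one,
      Nat.sub_add_cancel hj, swap_apply_right]
  constructor
  · intro h
    obtain ⟨n, rfl⟩ := Perm.SameCycle.exists_nat_pow_eq h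
    clear h
    induction n with
    | zero => exact ⟨0, hj, rfl⟩
    | succ n ih =>
      obtain ⟨i, hi, h⟩ := ih
      rw [pow_succ', Perm.mul_apply, ← h]
      obtain hi' | rfl : i + 1 < j ∨ i = j - 1 := by lia
      · exact ⟨i + 1, hi', (advance i hi').symm⟩
      · exact ⟨0, hj, return_to_start.symm⟩
  · rintro ⟨i, hi, rfl⟩
    induction i with
    | zero => exact Setoid.refl' _ a
    | succ i ih =>
      exact Setoid.trans' _ (ih (by lia)) (advance i hi ▸ cycleRel_apply_self ρ (π^[i] a))

lemma not_cycleRel_swap_mul (hne : a ≠ b) (hab : cycleRel π a b) :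
    ¬ cycleRel (swap a b * π) a b := by
  obtain ⟨j, hj, rfl⟩ := cycleRel_iff_exists_iterate.mp hab
  have hj0 : 0 < j := Nat.pos_of_ne_zero fun h => hne (by simp [h])
  rw [cycleRel_swap_iterate_mul_iff hj0 hj]
  rintro ⟨i, hi, h⟩
  exact hi.ne ((iterate_inj_of_lt_minimalPeriod (hi.trans hj) hj).mp h)

lemma cycleRel_swap_mul_sup (hne : a ≠ b) (hab : cycleRel π a b) :
    cycleRel (swap a b * π) ⊔ cycleRel (swap a b) = cycleRel π := by
  rw [← cycleRel_swap_mul_of_not (not_cycleRel_swap_mul hne hab), ← mul_assoc, swap_mul_self,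
    one_mul]

end SwapMul

section CutAndJoinBlocks

open Finset.HasAntidiagonal

variable {α : Type*} {π : Perm α} {a b : α} {B : Finset α}

lemma card_eq_of_mem_iff_iterate {s : Finset α} {j : ℕ} (hj : j ≤ Function.minimalPeriod π a)
    (hs : ∀ x, x ∈ s ↔ ∃ i < j, π^[i] a = x) : s.card = j := by
  classical
  have : s = (Finset.range j).image fun i => π^[i] a := by
    ext x
    simp only [hs, Finset.mem_image, Finset.mem_range]
  rw [this, Finset.card_image_of_injOn, Finset.card_range]
  intro i hi i' hi' h
  exact (iterate_inj_of_lt_minimalPeriod ((Finset.mem_range.mp hi).trans_le hj)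
    ((Finset.mem_range.mp hi').trans_le hj)).mp h

variable [Fintype α] [DecidableEq α]

lemma card_block_cycleRel (π : Perm α) (a : α) :
    (block (cycleRel π) a).card = Function.minimalPeriod π a :=
  card_eq_of_mem_iff_iterate le_rfl fun _ => mem_block.trans cycleRel_iff_exists_iterate

lemma card_block_cycleRel_swap_iterate_mul {j : ℕ} (hj : 0 < j)
    (hjk : j < Function.minimalPeriod π a) :
    (block (cycleRel (swap a (π^[j] a) * π)) a).card = j :=
  card_eq_of_mem_iff_iterate hjk.le fun _ =>
    mem_block.trans (cycleRel_swap_iterate_mul_iff hj hjk)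

lemma card_block_add_card_block_swap_mul (hne : a ≠ b) (hab : cycleRel π a b) :
    (block (cycleRel (swap a b * π)) a).card + (block (cycleRel (swap a b * π)) b).card =
      (block (cycleRel π) a).card := by
  rw [← Finset.card_union_of_disjoint (disjoint_block (not_cycleRel_swap_mul hne hab)),
    ← block_sup_swap_left, cycleRel_swap_mul_sup hne hab]

lemma sum_block_erase_swap_mul {M : Type*} [AddCommMonoid M] (π : Perm α) (a : α)
    {F : ℕ → ℕ → M} (zero_left : ∀ k, F 0 k = 0) (zero_right : ∀ k, F k 0 = 0) :
    ∑ b ∈ (block (cycleRel π) a).erase a, F (block (cycleRel (swap a b * π)) a).card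
        (block (cycleRel (swap a b * π)) b).card =
      ∑ pq ∈ antidiagonal (block (cycleRel π) a).card, F pq.1 pq.2 := by
  set k := (block (cycleRel π) a).card
  have period : Function.minimalPeriod π a = k := (card_block_cycleRel π a).symm
  have hk0 : 0 < k := Finset.card_pos.mpr ⟨a, self_mem_block _ a⟩
  rw [Finset.Nat.sum_antidiagonal_eq_sum_range_succ F, Finset.sum_range_succ, Nat.sub_self,
    zero_right, add_zero, Finset.range_eq_Ico, Finset.sum_eq_sum_Ico_succ_bot hk0, zero_left,
    zero_add]
  symm
  refine Finset.sum_bij (fun j _ => π^[j] a) ?_ ?_ ?_ ?_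
  · intro j hj
    obtain ⟨hj0, hjk⟩ := Finset.mem_Ico.mp hj
    refine Finset.mem_erase.mpr ⟨fun h => ?_, mem_block.mpr
      (cycleRel_iff_exists_iterate.mpr ⟨j, by lia, rfl⟩)⟩
    have := (iterate_inj_of_lt_minimalPeriod (j := 0) (by lia) (by lia)).mp h
    lia
  · intro i hi j hj h
    rw [Finset.mem_Ico] at hi hj
    exact (iterate_inj_of_lt_minimalPeriod (by lia) (by lia)).mp h
  · intro b hb
    rw [Finset.mem_erase, mem_block] at hb
    obtain ⟨hne, hb⟩ := hb
    obtain ⟨j, hj, rfl⟩ := cycleRel_iff_exists_iterate.mp hb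
    exact ⟨j, Finset.mem_Ico.mpr ⟨Nat.pos_of_ne_zero fun h => hne (by simp [h]), by lia⟩, rfl⟩
  · intro j hj
    obtain ⟨hj0, hjk⟩ := Finset.mem_Ico.mp hj
    have hne : a ≠ π^[j] a := fun h => by
      have := (iterate_inj_of_lt_minimalPeriod (i := 0) (by lia) (by lia)).mp h
      lia
    have card_left := card_block_cycleRel_swap_iterate_mul hj0 (period.symm ▸ hjk)
    have card_add := card_block_add_card_block_swap_mul hne
      (cycleRel_iff_exists_iterate.mpr ⟨j, by lia, rfl⟩)
    rw [card_left] at card_add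
    rw [card_left, show k - j = (block (cycleRel (swap a (π^[j] a) * π)) (π^[j] a)).card by lia]

/-- The contribution of the factorizations starting with the transposition of `a` and `b` to
those of `π` on `B`: the remaining transpositions factor `swap a b * π`, and they either connect
`B` or, if `a` and `b` share a cycle of `π`, connect two parts of `B` separating `a` from `b`. -/
noncomputable def swapContribution (π : Perm α) (B : Finset α) (a b : α) : ℚ :=
  open scoped Classical in
  if cycleRel π a b then
    ∑ S ∈ separatingSets (cycleRel (swap a b * π)) B a b,
      localWeight (cycleRel (swap a b * π)) S * localWeight (cycleRel (swap a b * π)) (B \ S)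
  else localWeight (cycleRel (swap a b * π)) B

lemma erase_erase_block_eq_erase {R : Setoid α} (hB : IsSaturated R B) (ha : a ∈ B) (hb : b ∈ B)
    (hab : ¬ R a b) :
    ((blocksIn R B).erase (block R a)).erase (block R b) =
      (blocksIn (R ⊔ cycleRel (swap a b)) B).erase (block (R ⊔ cycleRel (swap a b)) a) := by
  rw [blocksIn_sup_swap hB ha hb, block_sup_swap_left, Finset.erase_insert]
  exact fun h => block_union_block_notMem hab
    (mem_blocksIn.mp (Finset.mem_of_mem_erase (Finset.mem_of_mem_erase h))).1

lemma swapContribution_of_not (hB : IsSaturated (cycleRel π) B) (ha : a ∈ B) (hb : b ∈ B)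
    (hab : ¬ cycleRel π a b) :
    swapContribution π B a b = (B.card : ℚ) ^ (((blocksIn (cycleRel π) B).card : ℤ) - 4) *
      (cycleWeight ((block (cycleRel π) a).card + (block (cycleRel π) b).card) *
        ∏ c ∈ ((blocksIn (cycleRel π) B).erase (block (cycleRel π) a)).erase
          (block (cycleRel π) b), cycleWeight c.card) := by
  have hne : block (cycleRel π) b ≠ block (cycleRel π) a := fun h =>
    hab (block_eq_block_iff.mp h.symm)
  have mem_a := hB.block_mem_blocksIn ha
  have mem_b := Finset.mem_erase.mpr ⟨hne, hB.block_mem_blocksIn hb⟩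
  have notMem : block (cycleRel π) a ∪ block (cycleRel π) b ∉
      ((blocksIn (cycleRel π) B).erase (block (cycleRel π) a)).erase (block (cycleRel π) b) :=
    fun h => block_union_block_notMem hab
      (mem_blocksIn.mp (Finset.mem_of_mem_erase (Finset.mem_of_mem_erase h))).1
  rw [swapContribution, if_neg hab, localWeight, cycleRel_swap_mul_of_not hab,
    blocksIn_sup_swap hB ha hb, Finset.prod_insert notMem,
    Finset.card_union_of_disjoint (disjoint_block hab), Finset.card_insert_of_notMem notMem,
    ← Finset.card_erase_add_one mem_a, ← Finset.card_erase_add_one mem_b]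
  congr 2
  push_cast
  ring

lemma swapContribution_of_cycleRel (hB : IsSaturated (cycleRel π) B) (hne : a ≠ b) (ha : a ∈ B)
    (hb : b ∈ B) (hab : cycleRel π a b) :
    swapContribution π B a b =
      (cycleWeight (block (cycleRel (swap a b * π)) a).card *
        cycleWeight (block (cycleRel (swap a b * π)) b).card *
        subsetConv (abelPow (fun c => (c.card : ℚ)) 2 (block (cycleRel (swap a b * π)) a).card)
          (abelPow (fun c => (c.card : ℚ)) 2 (block (cycleRel (swap a b * π)) b).card)
          ((blocksIn (cycleRel π) B).erase (block (cycleRel π) a))) *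
        ∏ c ∈ (blocksIn (cycleRel π) B).erase (block (cycleRel π) a), cycleWeight c.card := by
  have hcut := not_cycleRel_swap_mul hne hab
  have hsup := cycleRel_swap_mul_sup hne hab
  rw [swapContribution, if_pos hab]
  set R := cycleRel (swap a b * π)
  have hBR : IsSaturated R B := fun _ _ hxy => hB (hsup ▸ (le_sup_left : R ≤ _) hxy)
  have mem_b : block R b ∈ (blocksIn R B).erase (block R a) := Finset.mem_erase.mpr
    ⟨fun h => hcut (block_eq_block_iff.mp h.symm), hBR.block_mem_blocksIn hb⟩
  rw [sum_separatingSets_localWeight hBR ha hb hcut,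
    ← Finset.mul_prod_erase _ _ (hBR.block_mem_blocksIn ha), ← Finset.mul_prod_erase _ _ mem_b,
    erase_erase_block_eq_erase hBR ha hb hcut, hsup]
  ring

lemma blocksIn_sdiff_block {R : Setoid α} (a : α) :
    blocksIn R (B \ block R a) = (blocksIn R B).erase (block R a) := by
  rw [(isSaturated_block le_rfl a).blocksIn_sdiff, blocksIn_block, Finset.sdiff_singleton_eq_erase]

lemma sum_sdiff_block_swapContribution (hB : IsSaturated (cycleRel π) B) :
    ∑ a ∈ B, ∑ b ∈ B \ block (cycleRel π) a, swapContribution π B a b =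
      (B.card : ℚ) ^ (((blocksIn (cycleRel π) B).card : ℤ) - 4) *
        ∑ c ∈ blocksIn (cycleRel π) B, ∑ d ∈ (blocksIn (cycleRel π) B).erase c,
          (c.card * d.card : ℚ) * (cycleWeight (c.card + d.card) *
            ∏ e ∈ ((blocksIn (cycleRel π) B).erase c).erase d, cycleWeight e.card) := by
  set I := blocksIn (cycleRel π) B with hI
  set power := (B.card : ℚ) ^ ((I.card : ℤ) - 4)
  calc ∑ a ∈ B, ∑ b ∈ B \ block (cycleRel π) a, swapContribution π B a b
      = ∑ a ∈ B, ∑ d ∈ I.erase (block (cycleRel π) a), (d.card : ℚ) * (power *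
          (cycleWeight ((block (cycleRel π) a).card + d.card) *
            ∏ e ∈ (I.erase (block (cycleRel π) a)).erase d, cycleWeight e.card)) := by
        refine Finset.sum_congr rfl fun a ha => ?_
        rw [hI, ← blocksIn_sdiff_block,
          ← (hB.sdiff (isSaturated_block le_rfl a)).sum_block]
        refine Finset.sum_congr rfl fun b hb => ?_
        rw [Finset.mem_sdiff, mem_block] at hb
        rw [swapContribution_of_not hB ha hb.1 hb.2, blocksIn_sdiff_block]
    _ = _ := by
        rw [hB.sum_block fun c => ∑ d ∈ I.erase c, (d.card : ℚ) * (power *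
          (cycleWeight (c.card + d.card) * ∏ e ∈ (I.erase c).erase d, cycleWeight e.card))]
        simp only [Finset.mul_sum]
        exact Finset.sum_congr rfl fun c _ => Finset.sum_congr rfl fun d _ => by ring

lemma sum_erase_block_swapContribution (hB : IsSaturated (cycleRel π) B) :
    ∑ a ∈ B, ∑ b ∈ (block (cycleRel π) a).erase a, swapContribution π B a b =
      ∑ c ∈ blocksIn (cycleRel π) B, c.card *
        ((∑ pq ∈ antidiagonal c.card, cycleWeight pq.1 * cycleWeight pq.2 *
          subsetConv (abelPow (fun c => (c.card : ℚ)) 2 pq.1)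
            (abelPow (fun c => (c.card : ℚ)) 2 pq.2) ((blocksIn (cycleRel π) B).erase c)) *
          ∏ e ∈ (blocksIn (cycleRel π) B).erase c, cycleWeight e.card) := by
  rw [← hB.sum_block]
  refine Finset.sum_congr rfl fun a ha => ?_
  rw [← sum_block_erase_swap_mul π a (F := fun p q => cycleWeight p * cycleWeight q *
      subsetConv (abelPow (fun c : Finset α => (c.card : ℚ)) 2 p)
        (abelPow (fun c => (c.card : ℚ)) 2 q) _) (by simp [cycleWeight]) (by simp [cycleWeight]),
    Finset.sum_mul]
  refine Finset.sum_congr rfl fun b hb => ?_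
  obtain ⟨hne, hb⟩ := Finset.mem_erase.mp hb
  exact swapContribution_of_cycleRel hB hne.symm ha (hB.block_subset ha hb) (mem_block.mp hb)

theorem sum_swapContribution (hB : IsSaturated (cycleRel π) B) :
    ∑ a ∈ B, ∑ b ∈ B.erase a, swapContribution π B a b =
      2 * ((B.card : ℚ) + (blocksIn (cycleRel π) B).card - 2) * localWeight (cycleRel π) B := by
  have h := two_mul_zpow_mul_prod_cycleWeight (I := blocksIn (cycleRel π) B) (k := Finset.card)
    fun c hc => card_pos_of_mem_blocksIn hc
  rw [hB.sum_card_blocksIn] at h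
  rw [localWeight, h, ← sum_sdiff_block_swapContribution hB]
  have erase_eq : ∀ a ∈ B, B.erase a =
      (B \ block (cycleRel π) a).disjUnion ((block (cycleRel π) a).erase a)
        (Finset.sdiff_disjoint.mono_right (Finset.erase_subset _ _)) := by
    intro a ha
    have := hB.block_subset ha
    have := self_mem_block (cycleRel π) a
    ext x
    rw [Finset.disjUnion_eq_union]
    grind
  rw [Finset.sum_congr rfl fun a ha => by rw [erase_eq a ha, Finset.sum_disjUnion],
    Finset.sum_add_distrib, sum_erase_block_swapContribution hB]
  simp only [mul_assoc]

end CutAndJoinBlocks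

section Swaps

variable {α : Type*} [DecidableEq α]

lemma eq_swap_apply_of_isSwap {τ : Perm α} (hτ : τ.IsSwap) {x : α} (hx : τ x ≠ x) :
    τ = swap x (τ x) := by
  obtain ⟨c, d, -, rfl⟩ := hτ
  obtain rfl | rfl : x = c ∨ x = d := by
    by_contra! h
    exact hx (swap_apply_of_ne_of_ne h.1 h.2)
  · rw [swap_apply_left]
  · rw [swap_apply_right, swap_comm]

lemma mul_eq_iff_eq_mul_of_isSwap {τ ρ π : Perm α} (hτ : τ.IsSwap) : τ * ρ = π ↔ ρ = τ * π := by
  obtain ⟨a, b, -, rfl⟩ := hτ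
  rw [← eq_inv_mul_iff_mul_eq, swap_inv]

variable [Fintype α]

variable (α) in
open scoped Classical in
/-- The transpositions of `α`. -/
noncomputable def swaps : Finset (Perm α) := {τ | τ.IsSwap}

@[simp] lemma mem_swaps {τ : Perm α} : τ ∈ swaps α ↔ τ.IsSwap := by simp [swaps]

lemma sum_swaps_apply_ne {M : Type*} [AddCommMonoid M] (f : Perm α → M) (x : α) :
    ∑ τ ∈ swaps α with τ x ≠ x, f τ = ∑ b ∈ Finset.univ.erase x, f (swap x b) := by
  have eq_swap : ∀ τ ∈ {τ ∈ swaps α | τ x ≠ x}, τ = swap x (τ x) := fun τ hτ =>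
    eq_swap_apply_of_isSwap (mem_swaps.mp (Finset.mem_filter.mp hτ).1) (Finset.mem_filter.mp hτ).2
  refine Finset.sum_nbij' (fun τ => τ x) (fun b => swap x b) ?_ ?_ ?_ ?_ ?_
  · exact fun τ hτ => by simpa using (Finset.mem_filter.mp hτ).2
  · intro b hb
    have hne := (Finset.mem_erase.mp hb).1
    exact Finset.mem_filter.mpr ⟨mem_swaps.mpr ⟨x, b, hne.symm, rfl⟩, by simpa using hne⟩
  · exact fun τ hτ => (eq_swap τ hτ).symm
  · exact fun b _ => swap_apply_left x b
  · exact fun τ hτ => congrArg f (eq_swap τ hτ)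

lemma two_mul_sum_swaps {K : Type*} [Semiring K] (f : Perm α → K) :
    2 * ∑ τ ∈ swaps α, f τ = ∑ a, ∑ b ∈ Finset.univ.erase a, f (swap a b) := by
  have moved_points : ∀ τ ∈ swaps α, 2 * f τ = ∑ x, if τ x ≠ x then f τ else 0 := by
    intro τ hτ
    have support : ({x | τ x ≠ x} : Finset α) = τ.support := by ext x; simp
    rw [← Finset.sum_filter, Finset.sum_const, nsmul_eq_mul, support,
      Perm.card_support_eq_two.mpr (mem_swaps.mp hτ), Nat.cast_two]
  rw [Finset.mul_sum, Finset.sum_congr rfl moved_points, Finset.sum_comm]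
  simp only [← Finset.sum_filter, sum_swaps_apply_ne]

end Swaps

section Tuples

variable {α : Type*} {m : ℕ}

/-- The orbit relation of the group generated by the entries of `τ`. -/
def tupleRel (τ : Fin m → Perm α) : Setoid α := ⨆ i, cycleRel (τ i)

lemma tupleRel_zero (τ : Fin 0 → Perm α) : tupleRel τ = ⊥ := iSup_of_empty _

lemma tupleRel_cons (σ : Perm α) (τ : Fin m → Perm α) :
    tupleRel (Fin.cons σ τ : Fin (m + 1) → Perm α) = cycleRel σ ⊔ tupleRel τ := by
  rw [tupleRel, ← Finset.sup_univ_eq_iSup, Fin.univ_succ, Finset.sup_cons, Finset.sup_map,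
    Finset.sup_univ_eq_iSup]
  rfl

lemma cycleRel_one : cycleRel (1 : Perm α) = ⊥ :=
  Setoid.ext fun _ _ => Perm.sameCycle_one

lemma cycleRel_prod_le_tupleRel [Finite α] : ∀ {m : ℕ} (τ : Fin m → Perm α),
    cycleRel (List.ofFn τ).prod ≤ tupleRel τ
  | 0, τ => by rw [List.ofFn_zero, List.prod_nil, cycleRel_one]; exact bot_le
  | m + 1, τ => by
    rw [← Fin.cons_self_tail τ, List.ofFn_cons, List.prod_cons, tupleRel_cons]
    exact (cycleRel_mul_le _ _).trans (sup_le_sup_left (cycleRel_prod_le_tupleRel _) _)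

variable [Fintype α] [DecidableEq α] {π : Perm α} {P R : Setoid α} {a b : α}

open scoped Classical in
/-- The number of factorizations of `π` into `m` transpositions whose orbits, joined with the
classes of `R`, are the classes of `P`. -/
noncomputable def numFactorizations (m : ℕ) (π : Perm α) (R P : Setoid α) : ℕ :=
  Finset.card {τ : Fin m → Perm α | (∀ i, (τ i).IsSwap) ∧ (List.ofFn τ).prod = π ∧
    tupleRel τ ⊔ R = P}

lemma numFactorizations_succ (m : ℕ) (π : Perm α) (R P : Setoid α) :
    numFactorizations (m + 1) π R P =
      ∑ σ ∈ swaps α, numFactorizations m (σ * π) (cycleRel σ ⊔ R) P := by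
  classical
  simp only [numFactorizations, Finset.card_filter, swaps, Finset.sum_filter]
  rw [← (Fin.consEquiv fun _ : Fin (m + 1) => Perm α).sum_comp, Fintype.sum_prod_type]
  refine Finset.sum_congr rfl fun σ _ => ?_
  have consEquiv_mk (v : Fin m → Perm α) :
      Fin.consEquiv (fun _ : Fin (m + 1) => Perm α) (σ, v) = Fin.cons σ v := rfl
  simp only [consEquiv_mk, Fin.forall_fin_succ, Fin.cons_zero, Fin.cons_succ, List.ofFn_cons,
    List.prod_cons, tupleRel_cons]
  split_ifs with hσ
  · simp only [hσ, true_and, mul_eq_iff_eq_mul_of_isSwap hσ, sup_assoc, sup_left_comm]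
  · simp only [hσ, false_and, if_false, Finset.sum_const_zero]

lemma two_mul_numFactorizations_succ (m : ℕ) (π : Perm α) (R P : Setoid α) :
    2 * numFactorizations (m + 1) π R P = ∑ a, ∑ b ∈ Finset.univ.erase a,
      numFactorizations m (swap a b * π) (cycleRel (swap a b) ⊔ R) P := by
  rw [numFactorizations_succ, two_mul_sum_swaps]

lemma numFactorizations_congr {R' : Setoid α} (h : cycleRel π ⊔ R = cycleRel π ⊔ R') :
    numFactorizations m π R P = numFactorizations m π R' P := by
  classical
  refine congrArg Finset.card (Finset.filter_congr fun τ _ => and_congr_right fun _ =>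
    and_congr_right fun hπ => ?_)
  have hle : cycleRel π ≤ tupleRel τ := hπ ▸ cycleRel_prod_le_tupleRel τ
  rw [← sup_eq_left.mpr hle, sup_assoc, h, sup_assoc]

lemma numFactorizations_eq_zero_of_not_le (h : ¬ R ≤ P) : numFactorizations m π R P = 0 := by
  classical
  exact Finset.card_eq_zero.mpr
    (Finset.filter_eq_empty_iff.mpr fun τ _ hτ => h (hτ.2.2 ▸ le_sup_right))

lemma numFactorizations_swap_of_not (hab : ¬ cycleRel π a b) :
    numFactorizations m (swap a b * π) (cycleRel (swap a b)) P =
      numFactorizations m (swap a b * π) ⊥ P := by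
  refine numFactorizations_congr ?_
  rw [sup_bot_eq, cycleRel_swap_mul_of_not hab, sup_assoc, sup_idem]

lemma numFactorizations_swap (hab : P a b) :
    numFactorizations m π (cycleRel (swap a b)) P = numFactorizations m π ⊥ P +
      ∑ S ∈ separatingSets (cycleRel π) (block P a) a b,
        numFactorizations m π ⊥ (splitAlong P S) := by
  classical
  simp only [numFactorizations, Finset.card_filter, sup_bot_eq]
  rw [Finset.sum_comm, ← Finset.sum_add_distrib]
  refine Finset.sum_congr rfl fun τ _ => ?_
  by_cases hτ : (∀ i, (τ i).IsSwap) ∧ (List.ofFn τ).prod = π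
  · simp only [hτ.1, hτ.2, implies_true, true_and]
    exact ite_sup_swap_eq hab (hτ.2 ▸ cycleRel_prod_le_tupleRel τ)
  · simp only [← and_assoc, hτ, false_and, if_false, Finset.sum_const_zero, add_zero]

end Tuples

section Rank

variable {α : Type*} [DecidableEq α] [Fintype α] {π : Perm α} {P R : Setoid α} {a b : α}
  {B S : Finset α}

lemma card_blocks_eq_sum (hRP : R ≤ P) :
    (blocks R).parts.card = ∑ B ∈ (blocks P).parts, (blocksIn R B).card := by
  rw [← Finset.card_biUnion]
  · congr 1
    ext c
    refine ⟨fun hc => ?_, fun hc => ?_⟩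
    · obtain ⟨x, rfl⟩ := exists_block_eq hc
      exact Finset.mem_biUnion.mpr ⟨block P x, block_mem_blocks P x,
        (isSaturated_block hRP x).block_mem_blocksIn (self_mem_block P x)⟩
    · obtain ⟨B, -, hc⟩ := Finset.mem_biUnion.mp hc
      exact (mem_blocksIn.mp hc).1
  · intro B hB B' hB' hne
    refine Finset.disjoint_left.mpr fun c hc hc' => hne ?_
    obtain ⟨x, hx⟩ := (blocks R).nonempty_of_mem_parts (mem_blocksIn.mp hc).1
    exact (blocks P).eq_of_mem_parts hB hB' ((mem_blocksIn.mp hc).2 hx) ((mem_blocksIn.mp hc').2 hx)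

/-- The number of transpositions in a minimal factorization of `π` into transpositions whose
orbits are the classes of `P`, according to the Riemann–Hurwitz formula. -/
noncomputable def rank (π : Perm α) (P : Setoid α) : ℤ :=
  Fintype.card α + (blocks (cycleRel π)).parts.card - 2 * (blocks P).parts.card

lemma rank_eq_sum (hP : cycleRel π ≤ P) :
    rank π P = ∑ B ∈ (blocks P).parts, ((B.card : ℤ) + (blocksIn (cycleRel π) B).card - 2) := by
  rw [rank, card_blocks_eq_sum hP, ← Finset.card_univ, ← (blocks P).sum_card_parts,
    Finset.sum_sub_distrib, Finset.sum_add_distrib, Finset.sum_const]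
  push_cast
  ring

lemma rank_swap_mul_of_not (hab : ¬ cycleRel π a b) : rank (swap a b * π) P = rank π P - 1 := by
  rw [rank, rank, cycleRel_swap_mul_of_not hab, ← card_blocks_sup_swap hab]
  push_cast
  ring

lemma rank_swap_mul (hne : a ≠ b) (hab : cycleRel π a b) :
    rank (swap a b * π) P = rank π P + 1 := by
  have := rank_swap_mul_of_not (P := P) (not_cycleRel_swap_mul hne hab)
  rw [swap_mul_self_mul] at this
  lia

lemma rank_sup_swap_of_not (hab : ¬ P a b) :
    rank π (P ⊔ cycleRel (swap a b)) = rank π P + 2 := by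
  rw [rank, rank, ← card_blocks_sup_swap hab]
  push_cast
  ring

lemma rank_splitAlong (hab : P a b) (ha : a ∈ S) (hb : b ∉ S) (hS : S ⊆ block P a) :
    rank π (splitAlong P S) = rank π P - 2 := by
  have := rank_sup_swap_of_not (π := π) (P := splitAlong P S) (a := a) (b := b)
    fun h => hb ((splitAlong_iff.mp h).2.mp ha)
  rw [splitAlong_sup_swap hab ha hb hS] at this
  lia

lemma rank_swap_mul_sup_le (hP : cycleRel π ≤ P) (hne : a ≠ b) :
    rank (swap a b * π) (P ⊔ cycleRel (swap a b)) ≤ rank π P + 1 := by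
  by_cases hπ : cycleRel π a b
  · rw [sup_eq_left.mpr (cycleRel_swap_le_iff.mpr (hP hπ)), rank_swap_mul hne hπ]
  rw [rank_swap_mul_of_not hπ]
  by_cases hab : P a b
  · rw [sup_eq_left.mpr (cycleRel_swap_le_iff.mpr hab)]
    lia
  · rw [rank_sup_swap_of_not hab]
    lia

lemma block_bot (x : α) : block ⊥ x = {x} := by
  ext y
  rw [mem_block, Finset.mem_singleton]
  exact eq_comm

lemma card_blocks_bot : (blocks (⊥ : Setoid α)).parts.card = Fintype.card α := by
  rw [← Finset.card_univ, ← (blocks (⊥ : Setoid α)).sum_card_parts, Finset.card_eq_sum_ones]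
  refine Finset.sum_congr rfl fun c hc => ?_
  obtain ⟨x, rfl⟩ := exists_block_eq hc
  rw [block_bot, Finset.card_singleton]

lemma rank_one_bot : rank (1 : Perm α) ⊥ = 0 := by
  rw [rank, cycleRel_one, card_blocks_bot]
  ring

lemma rank_prod_le : ∀ {m : ℕ} (τ : Fin m → Perm α), (∀ i, (τ i).IsSwap) →
    rank (List.ofFn τ).prod (tupleRel τ) ≤ m
  | 0, τ, _ => by
    rw [List.ofFn_zero, List.prod_nil, tupleRel_zero, rank_one_bot]
    rfl
  | m + 1, τ, hτ => by
    obtain ⟨a, b, hne, hab⟩ := hτ 0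
    have ih := rank_prod_le (Fin.tail τ) fun i => hτ i.succ
    have key := rank_swap_mul_sup_le (cycleRel_prod_le_tupleRel (Fin.tail τ)) hne
    rw [← Fin.cons_self_tail τ, List.ofFn_cons, List.prod_cons, tupleRel_cons, hab, sup_comm]
    push_cast
    lia

lemma numFactorizations_eq_zero {m : ℕ} (hm : m < rank π P) : numFactorizations m π ⊥ P = 0 := by
  classical
  refine Finset.card_eq_zero.mpr (Finset.filter_eq_empty_iff.mpr ?_)
  rintro τ - ⟨hτ, rfl, rfl⟩
  rw [sup_bot_eq] at hm
  exact (rank_prod_le τ hτ).not_gt hm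

end Rank

section MinimalFactorizations

variable {α : Type*} [DecidableEq α] [Fintype α] {π : Perm α} {P : Setoid α} {a b : α}
  {B S : Finset α} {m : ℕ}

lemma prod_blocks_splitAlong {M : Type*} [CommMonoid M] (hab : P a b) (ha : a ∈ S) (hb : b ∉ S)
    (hS : S ⊆ block P a) (F : Finset α → M) :
    ∏ B ∈ (blocks (splitAlong P S)).parts, F B =
      F S * F (block P a \ S) * ∏ B ∈ (blocks P).parts.erase (block P a), F B := by
  have hnot : ¬ splitAlong P S a b := fun h => hb ((splitAlong_iff.mp h).2.mp ha)
  have block_a := block_splitAlong_of_mem ha hS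
  have block_b : block (splitAlong P S) b = block P a \ S := by
    rw [block_splitAlong_of_notMem hb, block_eq_block_iff.mpr hab]
  have block_b_mem : block P a \ S ∈ (blocks (splitAlong P S)).parts.erase S := by
    refine Finset.mem_erase.mpr ⟨fun h => ?_, block_b ▸ block_mem_blocks _ b⟩
    exact (Finset.mem_sdiff.mp (h ▸ ha)).2 ha
  have erase_eq : (blocks P).parts.erase (block P a) =
      ((blocks (splitAlong P S)).parts.erase S).erase (block P a \ S) := by
    have parts_eq := parts_blocks_sup_swap (R := splitAlong P S) (a := a) (b := b)
    have union_notMem := block_union_block_notMem hnot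
    rw [splitAlong_sup_swap hab ha hb hS, block_a, block_b, Finset.union_sdiff_of_subset hS] at *
    rw [parts_eq, Finset.erase_insert fun h =>
      union_notMem (Finset.mem_of_mem_erase (Finset.mem_of_mem_erase h))]
  rw [← Finset.mul_prod_erase _ _ (block_a ▸ block_mem_blocks _ a),
    ← Finset.mul_prod_erase _ _ block_b_mem, erase_eq, mul_assoc]

lemma localWeight_swap_mul_of_notMem (ha : a ∉ B) (hb : b ∉ B) :
    localWeight (cycleRel (swap a b * π)) B = localWeight (cycleRel π) B := by
  rcases eq_or_ne a b with rfl | hne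
  · rw [swap_self, ← Perm.one_def, one_mul]
  by_cases hab : cycleRel π a b
  · rw [← localWeight_sup_swap_of_notMem ha hb, cycleRel_swap_mul_sup hne hab]
  · rw [cycleRel_swap_mul_of_not hab, localWeight_sup_swap_of_notMem ha hb]

lemma prod_erase_localWeight_swap_mul (hab : P a b) :
    ∏ B ∈ (blocks P).parts.erase (block P a), localWeight (cycleRel (swap a b * π)) B =
      ∏ B ∈ (blocks P).parts.erase (block P a), localWeight (cycleRel π) B := by
  refine Finset.prod_congr rfl fun B hB => ?_
  obtain ⟨hne, hB⟩ := Finset.mem_erase.mp hB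
  have notMem : ∀ x, P a x → x ∉ B := fun x hx h => hne <| by
    rw [block_eq_block_iff.mpr hx, block, (blocks P).part_eq_of_mem hB h]
  exact localWeight_swap_mul_of_notMem (notMem a (P.refl' a)) (notMem b hab)

lemma block_card_eq_one_of_rank_eq_zero (hP : cycleRel π ≤ P) (h : rank π P = 0) (x : α) :
    (block P x).card = 1 := by
  have pos : ∀ B ∈ (blocks P).parts, 1 ≤ B.card ∧ 1 ≤ (blocksIn (cycleRel π) B).card := by
    intro B hB
    obtain ⟨y, rfl⟩ := exists_block_eq hB
    exact ⟨((blocks P).nonempty_of_mem_parts hB).card_pos, Finset.card_pos.mpr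
      ⟨_, (isSaturated_block hP y).block_mem_blocksIn (self_mem_block P y)⟩⟩
  rw [rank_eq_sum hP, Finset.sum_eq_zero_iff_of_nonneg fun B hB => by have := pos B hB; lia] at h
  have := h _ (block_mem_blocks P x)
  have := pos _ (block_mem_blocks P x)
  lia

lemma eq_bot_of_rank_eq_zero (hP : cycleRel π ≤ P) (h : rank π P = 0) : P = ⊥ := by
  refine le_bot_iff.mp fun x y hxy => ?_
  exact Finset.card_le_one.mp (block_card_eq_one_of_rank_eq_zero hP h x).le x (self_mem_block P x)
    y (mem_block.mpr hxy)

lemma localWeight_block_bot (x : α) : localWeight ⊥ (block ⊥ x) = 1 := by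
  have hx : (block (⊥ : Setoid α) x).card = 1 :=
    block_card_eq_one_of_rank_eq_zero (cycleRel_one (α := α)).le rank_one_bot x
  rw [localWeight, blocksIn_block, Finset.prod_singleton, hx, cycleWeight_one, Nat.cast_one,
    one_zpow, one_mul]

lemma numFactorizations_zero_of_rank_eq_zero (hP : cycleRel π ≤ P) (h : rank π P = 0) :
    (numFactorizations 0 π ⊥ P : ℚ) = ∏ B ∈ (blocks P).parts, localWeight (cycleRel π) B := by
  classical
  obtain rfl := eq_bot_of_rank_eq_zero hP h
  obtain rfl : π = 1 := by
    ext x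
    exact (hP (cycleRel_apply_self π x)).symm
  rw [cycleRel_one, Finset.prod_eq_one fun B hB => by
    obtain ⟨x, rfl⟩ := exists_block_eq hB
    exact localWeight_block_bot x]
  simp [numFactorizations, tupleRel_zero]

/-- The formula for the number of minimal factorizations into `m` transpositions; used as the
induction hypothesis in its own proof. -/
def CountsMinimalFactorizations (α : Type*) [DecidableEq α] [Fintype α] (m : ℕ) : Prop :=
  ∀ ⦃π : Perm α⦄ ⦃P : Setoid α⦄, cycleRel π ≤ P → rank π P = m →
    (numFactorizations m π ⊥ P : ℚ) =
      m.factorial * ∏ B ∈ (blocks P).parts, localWeight (cycleRel π) B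

lemma CountsMinimalFactorizations.numFactorizations_swap_mul
    (ih : CountsMinimalFactorizations α m) (hP : cycleRel π ≤ P) (hm : rank π P = m + 1)
    (hne : a ≠ b) (hab : P a b) :
    (numFactorizations m (swap a b * π) (cycleRel (swap a b)) P : ℚ) =
      m.factorial * (swapContribution π (block P a) a b *
        ∏ B ∈ (blocks P).parts.erase (block P a), localWeight (cycleRel π) B) := by
  have hle := cycleRel_swap_mul_le hP hab
  rw [← prod_erase_localWeight_swap_mul hab, swapContribution]
  split_ifs with hπ
  · have hrank := rank_swap_mul (P := P) hne hπ
    rw [numFactorizations_swap hab, numFactorizations_eq_zero (by lia), zero_add, Finset.sum_mul,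
      Finset.mul_sum, Nat.cast_sum]
    refine Finset.sum_congr rfl fun S hS => ?_
    obtain ⟨hSP, hS, ha, hb⟩ := mem_separatingSets.mp hS
    rw [ih (le_splitAlong hle hS) (by rw [rank_splitAlong hab ha hb hSP]; lia),
      prod_blocks_splitAlong hab ha hb hSP]
  · rw [numFactorizations_swap_of_not hπ, ih hle (by rw [rank_swap_mul_of_not hπ]; lia),
      ← Finset.mul_prod_erase _ _ (block_mem_blocks P a)]

lemma CountsMinimalFactorizations.sum_block (ih : CountsMinimalFactorizations α m)
    (hP : cycleRel π ≤ P) (hm : rank π P = m + 1) (hB : B ∈ (blocks P).parts) :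
    ∑ a ∈ B, ∑ b ∈ Finset.univ.erase a,
        (numFactorizations m (swap a b * π) (cycleRel (swap a b)) P : ℚ) =
      2 * m.factorial * ((B.card : ℚ) + (blocksIn (cycleRel π) B).card - 2) *
        ∏ B ∈ (blocks P).parts, localWeight (cycleRel π) B := by
  have key : ∀ a ∈ B, ∑ b ∈ Finset.univ.erase a,
        (numFactorizations m (swap a b * π) (cycleRel (swap a b)) P : ℚ) =
      ∑ b ∈ B.erase a, m.factorial * (swapContribution π B a b *
        ∏ B ∈ (blocks P).parts.erase B, localWeight (cycleRel π) B) := by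
    intro a ha
    have hBa : block P a = B := (blocks P).part_eq_of_mem hB ha
    rw [← Finset.sum_subset (Finset.erase_subset_erase a (Finset.subset_univ B))]
    · refine Finset.sum_congr rfl fun b hb => ?_
      obtain ⟨hne, hb⟩ := Finset.mem_erase.mp hb
      rw [ih.numFactorizations_swap_mul hP hm hne.symm (mem_block.mp (hBa ▸ hb)), hBa]
    · intro b hb hb'
      refine Nat.cast_eq_zero.mpr (numFactorizations_eq_zero_of_not_le fun hle => hb' ?_)
      exact Finset.mem_erase.mpr ⟨(Finset.mem_erase.mp hb).1,
        hBa ▸ mem_block.mpr (cycleRel_swap_le_iff.mp hle)⟩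
  obtain ⟨x, rfl⟩ := exists_block_eq hB
  rw [Finset.sum_congr rfl key]
  simp only [← Finset.mul_sum, ← Finset.sum_mul]
  rw [sum_swapContribution (isSaturated_block hP x), ← Finset.mul_prod_erase _ _ hB]
  ring

theorem countsMinimalFactorizations : ∀ m, CountsMinimalFactorizations α m
  | 0, π, P, hP, h => by
    rw [numFactorizations_zero_of_rank_eq_zero hP h, Nat.factorial_zero, Nat.cast_one, one_mul]
  | m + 1, π, P, hP, h => by
    have ih := countsMinimalFactorizations m
    have h' : rank π P = m + 1 := by exact_mod_cast h
    have sum_ranks : ∑ B ∈ (blocks P).parts, ((B.card : ℚ) + (blocksIn (cycleRel π) B).card - 2) =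
        m + 1 := by exact_mod_cast (rank_eq_sum hP).symm.trans h'
    have two_mul_eq : (2 * numFactorizations (m + 1) π ⊥ P : ℚ) =
        2 * ((m + 1).factorial * ∏ B ∈ (blocks P).parts, localWeight (cycleRel π) B) := by
      have sum_parts (f : α → ℚ) : ∑ a, f a = ∑ B ∈ (blocks P).parts, ∑ a ∈ B, f a :=
        (Finset.sum_congr (blocks P).biUnion_parts.symm fun _ _ => rfl).trans
          (Finset.sum_biUnion (blocks P).disjoint)
      have two_mul_sum := congrArg (Nat.cast : ℕ → ℚ) (two_mul_numFactorizations_succ m π ⊥ P)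
      simp only [sup_bot_eq, Nat.cast_mul, Nat.cast_sum, Nat.cast_ofNat] at two_mul_sum
      rw [two_mul_sum, sum_parts, Finset.sum_congr rfl fun B hB => ih.sum_block hP h' hB,
        ← Finset.sum_mul, ← Finset.mul_sum, sum_ranks, Nat.factorial_succ]
      push_cast
      ring
    linarith

end MinimalFactorizations

section BlockSizes

lemma isSaturated_univ {α : Type*} [Fintype α] (R : Setoid α) : IsSaturated R Finset.univ :=
  fun _ _ _ _ => Finset.mem_univ _

variable {α : Type*} [DecidableEq α] [Fintype α] {R : Setoid α} {a b : α}

/-- The size of the block of `x`. -/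
noncomputable abbrev blockSize (R : Setoid α) (x : α) : ℕ := (block R x).card

/-- The sum of `ψ` over the sizes of the blocks of `R`. -/
noncomputable def blockSum (R : Setoid α) (ψ : ℕ → ℚ) : ℚ := ∑ c ∈ (blocks R).parts, ψ c.card

/-- The product of the cycle weights of the sizes of the blocks of `R`. -/
noncomputable def blockProd (R : Setoid α) : ℚ := ∏ c ∈ (blocks R).parts, cycleWeight c.card

lemma blockSize_pos (R : Setoid α) (x : α) : 0 < blockSize R x :=
  Finset.card_pos.mpr ⟨x, self_mem_block R x⟩

lemma blockSize_sup_swap_left (hab : ¬ R a b) :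
    blockSize (R ⊔ cycleRel (swap a b)) a = blockSize R a + blockSize R b := by
  rw [blockSize, block_sup_swap_left, Finset.card_union_of_disjoint (disjoint_block hab)]

lemma blockSize_sup_swap_of_not {x : α} (ha : ¬ R x a) (hb : ¬ R x b) :
    blockSize (R ⊔ cycleRel (swap a b)) x = blockSize R x := by
  rw [blockSize, block_sup_swap_of_not ha hb]

lemma block_mem_erase_block (hab : ¬ R a b) : block R b ∈ (blocks R).parts.erase (block R a) :=
  Finset.mem_erase.mpr ⟨fun h => hab (block_eq_block_iff.mp h.symm), block_mem_blocks R b⟩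

lemma sum_erase_block_erase_block (hab : ¬ R a b) (f : Finset α → ℚ) :
    ∑ c ∈ ((blocks R).parts.erase (block R a)).erase (block R b), f c =
      ∑ c ∈ (blocks R).parts, f c - f (block R a) - f (block R b) := by
  rw [Finset.sum_erase_eq_sub (block_mem_erase_block hab),
    Finset.sum_erase_eq_sub (block_mem_blocks R a)]

lemma blockSum_sup_swap (hab : ¬ R a b) (ψ : ℕ → ℚ) :
    blockSum (R ⊔ cycleRel (swap a b)) ψ =
      blockSum R ψ - ψ (blockSize R a) - ψ (blockSize R b) + ψ (blockSize R a + blockSize R b) := by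
  rw [blockSum, parts_blocks_sup_swap, Finset.sum_insert fun h => block_union_block_notMem hab
      (Finset.mem_of_mem_erase (Finset.mem_of_mem_erase h)),
    sum_erase_block_erase_block hab, Finset.card_union_of_disjoint (disjoint_block hab), blockSum]
  ring

lemma blockProd_sup_swap (hab : ¬ R a b) :
    blockProd (R ⊔ cycleRel (swap a b)) =
      blockProd R * cycleWeight (blockSize R a + blockSize R b) /
        (cycleWeight (blockSize R a) * cycleWeight (blockSize R b)) := by
  have ha := cycleWeight_pos (blockSize_pos R a)
  have hb := cycleWeight_pos (blockSize_pos R b)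
  rw [blockProd, parts_blocks_sup_swap, Finset.prod_insert fun h => block_union_block_notMem hab
      (Finset.mem_of_mem_erase (Finset.mem_of_mem_erase h)),
    Finset.card_union_of_disjoint (disjoint_block hab), blockProd,
    ← Finset.mul_prod_erase _ _ (block_mem_blocks R a),
    ← Finset.mul_prod_erase _ _ (block_mem_erase_block hab), eq_div_iff (by positivity)]
  ring

lemma blocksIn_univ (R : Setoid α) : blocksIn R Finset.univ = (blocks R).parts := by
  simp [blocksIn]

lemma sum_blockSize (R : Setoid α) (f : ℕ → ℚ) :
    ∑ x, f (blockSize R x) = blockSum R fun k => k * f k := by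
  rw [(isSaturated_univ R).sum_block fun c => f c.card, blocksIn_univ, blockSum]

lemma sum_block_blockSize (R : Setoid α) (x : α) (f : ℕ → ℚ) :
    ∑ y ∈ block R x, f (blockSize R y) = blockSize R x * f (blockSize R x) := by
  rw [(isSaturated_block le_rfl x).sum_block fun c => f c.card, blocksIn_block,
    Finset.sum_singleton]

lemma sum_not_rel_blockSize (R : Setoid α) [DecidableRel R] (x : α) (f : ℕ → ℚ) :
    ∑ y with ¬ R x y, f (blockSize R y) =
      blockSum R (fun k => k * f k) - blockSize R x * f (blockSize R x) := by
  have related : ({y | R x y} : Finset α) = block R x := by ext y; simp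
  rw [← sum_blockSize, ← sum_block_blockSize, eq_sub_iff_add_eq', ← related,
    Finset.sum_filter_add_sum_filter_not]

lemma block_top (x : α) : block (⊤ : Setoid α) x = Finset.univ := by
  ext y
  simp

lemma parts_blocks_top [Nonempty α] : (blocks (⊤ : Setoid α)).parts = {Finset.univ} := by
  ext c
  rw [Finset.mem_singleton]
  constructor
  · intro hc
    obtain ⟨x, rfl⟩ := exists_block_eq hc
    exact block_top x
  · rintro rfl
    simpa only [block_top] using block_mem_blocks (⊤ : Setoid α) (Classical.arbitrary α)

end BlockSizes

section CycleSizes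

variable {α : Type*} [DecidableEq α] [Fintype α]

lemma block_cycleRel_eq_singleton {π : Perm α} {x : α} (hx : x ∉ π.support) :
    block (cycleRel π) x = {x} := by
  ext y
  rw [mem_block, Finset.mem_singleton]
  refine ⟨fun h => (h.eq_of_left (Perm.notMem_support.mp hx)).symm, ?_⟩
  rintro rfl
  exact Perm.SameCycle.refl _ _

lemma block_cycleRel_eq_support {π : Perm α} {x : α} (hx : x ∈ π.support) :
    block (cycleRel π) x = (π.cycleOf x).support := by
  ext y
  rw [mem_block, Perm.mem_support_cycleOf_iff' (Perm.mem_support.mp hx)]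
  rfl

lemma parts_blocks_cycleRel (π : Perm α) :
    (blocks (cycleRel π)).parts =
      π.cycleFactorsFinset.image Perm.support ∪ π.supportᶜ.image fun x => {x} := by
  ext c
  simp only [Finset.mem_union, Finset.mem_image, Finset.mem_compl]
  constructor
  · intro hc
    obtain ⟨x, rfl⟩ := exists_block_eq hc
    by_cases hx : x ∈ π.support
    · exact Or.inl ⟨π.cycleOf x, Perm.cycleOf_mem_cycleFactorsFinset_iff.mpr hx,
        (block_cycleRel_eq_support hx).symm⟩
    · exact Or.inr ⟨x, hx, (block_cycleRel_eq_singleton hx).symm⟩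
  · rintro (⟨f, hf, rfl⟩ | ⟨x, hx, rfl⟩)
    · obtain ⟨x, hx⟩ := (Perm.mem_cycleFactorsFinset_iff.mp hf).1.nonempty_support
      rw [Perm.cycle_is_cycleOf hx hf,
        ← block_cycleRel_eq_support (Perm.mem_cycleFactorsFinset_support_le hf hx)]
      exact block_mem_blocks _ _
    · rw [← block_cycleRel_eq_singleton hx]
      exact block_mem_blocks _ _

lemma map_card_blocks_cycleRel (π : Perm α) :
    (blocks (cycleRel π)).parts.val.map Finset.card = π.partition.parts := by
  have support_injOn : Set.InjOn Perm.support (π.cycleFactorsFinset : Set (Perm α)) := by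
    intro f hf g hg hfg
    obtain ⟨x, hx⟩ := (Perm.mem_cycleFactorsFinset_iff.mp hf).1.nonempty_support
    rw [Perm.cycle_is_cycleOf hx hf, Perm.cycle_is_cycleOf (hfg ▸ hx) hg]
  have disjoint : Disjoint (π.cycleFactorsFinset.image Perm.support)
      (π.supportᶜ.image fun x => ({x} : Finset α)) := by
    simp only [Finset.disjoint_left, Finset.mem_image, Finset.mem_compl, not_exists, not_and]
    rintro _ ⟨f, hf, rfl⟩ x hx h
    exact hx (Perm.mem_cycleFactorsFinset_support_le hf (h ▸ Finset.mem_singleton_self x))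
  rw [parts_blocks_cycleRel, ← Finset.disjUnion_eq_union _ _ disjoint, Finset.disjUnion_val,
    Multiset.map_add, Finset.image_val_of_injOn support_injOn,
    Finset.image_val_of_injOn (Finset.singleton_injective.injOn), Perm.parts_partition,
    Perm.cycleType_def, Multiset.map_map, Multiset.map_map]
  congr 1
  simp [Finset.card_compl]

end CycleSizes

section ConnectedCounts

variable {α : Type*} [DecidableEq α] [Fintype α] {m : ℕ} {π : Perm α} {R : Setoid α} {x y : α}

lemma rank_top [Nonempty α] (π : Perm α) :
    rank π ⊤ = Fintype.card α + (blocks (cycleRel π)).parts.card - 2 := by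
  rw [rank, parts_blocks_top, Finset.card_singleton]
  rfl

lemma numFactorizations_top_eq_zero [Nonempty α] (hR : R ≤ cycleRel π)
    (hm : (m : ℤ) < Fintype.card α + (blocks (cycleRel π)).parts.card - 2) :
    numFactorizations m π R ⊤ = 0 := by
  rw [numFactorizations_congr (R' := ⊥) (by rw [sup_eq_left.mpr hR, sup_bot_eq]),
    numFactorizations_eq_zero (by rwa [rank_top])]

lemma numFactorizations_top [Nonempty α] (hR : R ≤ cycleRel π)
    (hm : (m : ℤ) = Fintype.card α + (blocks (cycleRel π)).parts.card - 2) :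
    (numFactorizations m π R ⊤ : ℚ) =
      m.factorial * ((Fintype.card α : ℚ) ^ (((blocks (cycleRel π)).parts.card : ℤ) - 3) *
        blockProd (cycleRel π)) := by
  rw [numFactorizations_congr (R' := ⊥) (by rw [sup_eq_left.mpr hR, sup_bot_eq]),
    countsMinimalFactorizations m le_top (by rw [rank_top, hm]), parts_blocks_top,
    Finset.prod_singleton, localWeight, blocksIn_univ, Finset.card_univ, blockProd]

/-- With `N` points, `l` cycles and `S ψ` the sum of `ψ` over the cycle lengths of `π`, this times
the product of the cycle weights counts (up to `m!`) the factorizations of `π` which become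
transitive only after joining two points on different cycles, of lengths `p` and `q`. The sums
over the remaining cycles are kept as values of `S`, so that they visibly vanish when there is no
cycle left and the powers of `N` are negative. -/
def separationValue (N : ℚ) (l : ℤ) (S : (ℕ → ℚ) → ℚ) (p q : ℕ) : ℚ :=
  let ψ₁ : ℕ → ℚ := fun k => k * (p / (p + k) + q / (q + k)) * (p + q + k)
  let ψ₂ : ℕ → ℚ := fun k => k * (1 / (p + k) + 1 / (q + k)) * (N - p - q - k)
  ((p + q) * N ^ (l - 3) - N ^ (l - 4) * (S ψ₁ - ψ₁ p - ψ₁ q) +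
    p * q * N ^ (l - 5) * (S ψ₂ - ψ₂ p - ψ₂ q)) / (p ^ 2 * q ^ 2)

lemma sum_separatingSets_univ_localWeight (hxy : ¬ R x y) :
    ∑ S ∈ separatingSets R Finset.univ x y,
        localWeight R S * localWeight R (Finset.univ \ S) =
      blockProd R * subsetConv (abelPow (fun c : Finset α => (c.card : ℚ)) 2 (blockSize R x))
        (abelPow (fun c => (c.card : ℚ)) 2 (blockSize R y))
        (((blocks R).parts.erase (block R x)).erase (block R y)) := by
  rw [sum_separatingSets_localWeight (isSaturated_univ R) (Finset.mem_univ x) (Finset.mem_univ y)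
    hxy, blocksIn_univ, blockProd]

lemma subsetConv_abelPow_eq_separationValue (hxy : ¬ R x y) :
    subsetConv (abelPow (fun c : Finset α => (c.card : ℚ)) 2 (blockSize R x))
        (abelPow (fun c => (c.card : ℚ)) 2 (blockSize R y))
        (((blocks R).parts.erase (block R x)).erase (block R y)) =
      separationValue (Fintype.card α) (blocks R).parts.card (blockSum R)
        (blockSize R x) (blockSize R y) := by
  have hp := blockSize_pos R x
  have hq := blockSize_pos R y
  generalize hI : ((blocks R).parts.erase (block R x)).erase (block R y) = I
  have sum_I (f : ℕ → ℚ) :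
      ∑ c ∈ I, f c.card = blockSum R f - f (blockSize R x) - f (blockSize R y) := by
    rw [← hI, sum_erase_block_erase_block hxy fun c => f c.card, blockSum]
  have card_I : (I.card : ℤ) = (blocks R).parts.card - 2 := by
    have hy := Finset.card_erase_add_one (block_mem_erase_block hxy)
    have hx := Finset.card_erase_add_one (block_mem_blocks R x)
    lia
  have sum_card : (blockSize R x : ℚ) + blockSize R y + ∑ c ∈ I, (c.card : ℚ) =
      Fintype.card α := by
    have := sum_blockSize R fun _ => 1
    rw [sum_I fun k => k, ← funext fun k : ℕ => mul_one (k : ℚ), ← this]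
    simp
  have sum_erase : ∀ c ∈ I, ∑ d ∈ I.erase c, (d.card : ℚ) =
      Fintype.card α - blockSize R x - blockSize R y - c.card := by
    intro c hc
    linarith [Finset.sum_erase_eq_sub (f := fun d : Finset α => (d.card : ℚ)) hc]
  have conv := mul_subsetConv_abelPow_two_two (k := fun c : Finset α => (c.card : ℚ)) (I := I)
    (fun _ _ => by positivity) (x := blockSize R x) (y := blockSize R y)
    (by positivity) (by positivity)
  simp only [abelPow, sum_card, card_I, sub_sub] at conv
  rw [separationValue, eq_div_iff (by positivity), mul_comm, conv, ← sum_I, ← sum_I,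
    Finset.sum_congr rfl fun c hc => congrArg _ (sum_erase c hc)]
  norm_num

lemma numFactorizations_top_of_not_rel (hR : cycleRel π ⊔ R = cycleRel π ⊔ cycleRel (swap x y))
    (hxy : ¬ cycleRel π x y)
    (hm : (m : ℤ) = Fintype.card α + (blocks (cycleRel π)).parts.card - 4) :
    (numFactorizations m π R ⊤ : ℚ) =
      m.factorial * (blockProd (cycleRel π) *
        separationValue (Fintype.card α) (blocks (cycleRel π)).parts.card
          (blockSum (cycleRel π)) (blockSize (cycleRel π) x) (blockSize (cycleRel π) y)) := by
  have : Nonempty α := ⟨x⟩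
  have htop : (⊤ : Setoid α) x y := trivial
  rw [numFactorizations_congr hR, numFactorizations_swap htop,
    numFactorizations_eq_zero (by rw [rank_top]; lia), zero_add, block_top,
    ← subsetConv_abelPow_eq_separationValue hxy, ← sum_separatingSets_univ_localWeight hxy,
    Finset.mul_sum, Nat.cast_sum]
  refine Finset.sum_congr rfl fun S hS => ?_
  obtain ⟨-, hS, hx, hy⟩ := mem_separatingSets.mp hS
  have hSP : S ⊆ block (⊤ : Setoid α) x := by rw [block_top]; exact Finset.subset_univ S
  rw [countsMinimalFactorizations m (le_splitAlong le_top hS)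
      (by rw [rank_splitAlong htop hx hy hSP, rank_top]; lia),
    prod_blocks_splitAlong htop hx hy hSP, block_top, parts_blocks_top,
    Finset.erase_singleton, Finset.prod_empty, mul_one]

end ConnectedCounts

section SwapPairs

lemma cycleRel_swap_sup_swap {α : Type*} [Finite α] [DecidableEq α] (x y z : α) :
    cycleRel (swap x y) ⊔ cycleRel (swap y z) = cycleRel (swap x y) ⊔ cycleRel (swap z x) := by
  have hxy (R : Setoid α) : (cycleRel (swap x y) ⊔ R) x y :=
    cycleRel_swap_le_iff.mp le_sup_left
  have hr (R : Setoid α) {a b : α} : (R ⊔ cycleRel (swap a b)) a b :=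
    cycleRel_swap_le_iff.mp le_sup_right
  refine le_antisymm (sup_le le_sup_left (cycleRel_swap_le_iff.mpr ?_))
    (sup_le le_sup_left (cycleRel_swap_le_iff.mpr ?_))
  · exact Setoid.symm' _ (Setoid.trans' _ (hr _) (hxy _))
  · exact Setoid.symm' _ (Setoid.trans' _ (hxy _) (hr _))

variable {α : Type*} [DecidableEq α] [Fintype α] {m : ℕ} {π : Perm α} {R : Setoid α} {x y z : α}

/-- The number of ways to complete the transpositions `(x y)`, `(y z)` and the permutation `π` to
a transitive factorization of the identity by `m` further transpositions. -/
noncomputable def numCompletions (m : ℕ) (π : Perm α) (x y z : α) : ℕ :=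
  numFactorizations m (swap x y * (swap y z * π))
    (cycleRel (swap x y) ⊔ (cycleRel (swap y z) ⊔ cycleRel π)) ⊤

lemma numCompletions_rotate (hxy : x ≠ y) (hyz : y ≠ z) (hxz : x ≠ z) :
    numCompletions m π x y z = numCompletions m π y z x := by
  have swaps_eq : swap x y * swap y z = swap y z * swap z x := by
    ext u
    simp only [Perm.mul_apply, swap_apply_def]
    split_ifs <;> simp_all
  have rels_eq : cycleRel (swap x y) ⊔ cycleRel (swap y z) =
      cycleRel (swap y z) ⊔ cycleRel (swap z x) := by
    rw [cycleRel_swap_sup_swap y z x, sup_comm]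
  rw [numCompletions, numCompletions, ← mul_assoc, swaps_eq, mul_assoc, ← sup_assoc, rels_eq,
    sup_assoc]

/-- The number (up to `m!`) of completions of `(x y)`, `(y z)` and a permutation with `x`, `y`, `z`
on different cycles, of lengths `a`, `b`, `c`, which get joined. The number of points, the number
of cycles, and the product of the cycle weights are denoted `N`, `l`, `W`. -/
def joinValue (N : ℚ) (l : ℤ) (W : ℚ) (a b c : ℕ) : ℚ :=
  W * (N ^ (l - 5) *
    (cycleWeight (a + b + c) / (cycleWeight a * cycleWeight b * cycleWeight c)))

lemma numCompletions_of_not_rel (hxy : ¬ cycleRel π x y) (hyz : ¬ cycleRel π y z)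
    (hxz : ¬ cycleRel π x z)
    (hm : (m : ℤ) = Fintype.card α + (blocks (cycleRel π)).parts.card - 4) :
    (numCompletions m π x y z : ℚ) = m.factorial *
      joinValue (Fintype.card α) (blocks (cycleRel π)).parts.card (blockProd (cycleRel π))
        (blockSize (cycleRel π) x) (blockSize (cycleRel π) y) (blockSize (cycleRel π) z) := by
  have : Nonempty α := ⟨x⟩
  have hxy' : ¬ cycleRel (swap y z * π) x y := by
    rw [cycleRel_swap_mul_of_not hyz, ← mem_block, block_sup_swap_of_not hxy hxz, mem_block]
    exact hxy
  have card_yz := card_blocks_sup_swap hyz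
  have card_xy := card_blocks_sup_swap hxy'
  have weight_pos := cycleWeight_pos (Nat.add_pos_left (blockSize_pos (cycleRel π) y)
    (blockSize (cycleRel π) z))
  rw [← cycleRel_swap_mul_of_not hxy', cycleRel_swap_mul_of_not hyz] at card_xy
  rw [numCompletions, numFactorizations_top _ (by lia), show
    ((blocks (cycleRel (swap x y * (swap y z * π)))).parts.card : ℤ) - 3 =
      (blocks (cycleRel π)).parts.card - 5 by lia]
  · rw [cycleRel_swap_mul_of_not hxy', blockProd_sup_swap hxy', cycleRel_swap_mul_of_not hyz,
      blockProd_sup_swap hyz, blockSize_sup_swap_of_not hxy hxz, blockSize_sup_swap_left hyz,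
      ← add_assoc, joinValue]
    field_simp
  · rw [cycleRel_swap_mul_of_not hxy', cycleRel_swap_mul_of_not hyz]
    exact sup_le le_sup_right (sup_le (le_sup_of_le_left le_sup_right)
      (le_sup_of_le_left le_sup_left))

lemma blockSize_cycleRel_swap_mul (hyz : y ≠ z) (h : cycleRel π y z)
    (hy : blockSize (cycleRel π) y = 2) :
    blockSize (cycleRel (swap y z * π)) y = 1 ∧ blockSize (cycleRel (swap y z * π)) z = 1 := by
  have := card_block_add_card_block_swap_mul hyz h
  have := blockSize_pos (cycleRel (swap y z * π)) y
  have := blockSize_pos (cycleRel (swap y z * π)) z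
  lia

lemma blockSum_sup_swap_exchange (hyz : ¬ R y z) (hxy : ¬ R x y) (hy : blockSize R y = 1)
    (hz : blockSize R z = 1) (ψ : ℕ → ℚ) :
    blockSum (R ⊔ cycleRel (swap x y)) ψ = blockSum (R ⊔ cycleRel (swap y z)) ψ - ψ 2 + ψ 1 -
      ψ (blockSize R x) + ψ (blockSize R x + 1) := by
  rw [blockSum_sup_swap hyz, blockSum_sup_swap hxy, hy, hz]
  ring

lemma blockProd_sup_swap_exchange (hyz : ¬ R y z) (hxy : ¬ R x y) (hy : blockSize R y = 1)
    (hz : blockSize R z = 1) :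
    blockProd (R ⊔ cycleRel (swap x y)) = blockProd (R ⊔ cycleRel (swap y z)) / cycleWeight 2 *
      (cycleWeight (blockSize R x + 1) / cycleWeight (blockSize R x)) := by
  have := cycleWeight_pos two_pos
  rw [blockProd_sup_swap hyz, blockProd_sup_swap hxy, hy, hz, cycleWeight_one, one_add_one_eq_two]
  field_simp

/-- The number (up to `m!`) of completions of `(x y)`, `(y z)` and a permutation with `y` and `z`
on a common `2`-cycle and `x` on another cycle, of length `k`: the first two transpositions move
`y` to the cycle of `x` and leave `z` as a fixed point. The number of points, the number of
cycles, and the sums and the product over the cycle lengths are denoted `N`, `l`, `S`, `W`. -/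
def transferValue (N : ℚ) (l : ℤ) (S : (ℕ → ℚ) → ℚ) (W : ℚ) (k : ℕ) : ℚ :=
  W / cycleWeight 2 * (cycleWeight (k + 1) / cycleWeight k) *
    separationValue N l (fun ψ => S ψ - ψ 2 + ψ 1 - ψ k + ψ (k + 1)) 1 (k + 1)

lemma numCompletions_of_rel (hyz : y ≠ z) (h : cycleRel π y z) (hxy : ¬ cycleRel π x y)
    (hy : blockSize (cycleRel π) y = 2)
    (hm : (m : ℤ) = Fintype.card α + (blocks (cycleRel π)).parts.card - 4) :
    (numCompletions m π x y z : ℚ) = m.factorial *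
      transferValue (Fintype.card α) (blocks (cycleRel π)).parts.card (blockSum (cycleRel π))
        (blockProd (cycleRel π)) (blockSize (cycleRel π) x) := by
  obtain ⟨hy, hz⟩ := blockSize_cycleRel_swap_mul hyz h hy
  have cut := not_cycleRel_swap_mul hyz h
  have join := cycleRel_swap_mul_sup hyz h
  have hxz : ¬ cycleRel π x z := fun hxz => hxy (Setoid.trans' _ hxz (Setoid.symm' _ h))
  rw [numCompletions]
  generalize swap y z * π = ρ at *
  rw [← join] at hxy hxz hm ⊢
  have hxy' : ¬ cycleRel ρ x y := fun h => hxy (le_sup_left (b := cycleRel (swap y z)) h)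
  have hxz' : ¬ cycleRel ρ x z := fun h => hxz (le_sup_left (b := cycleRel (swap y z)) h)
  have hzx' : ¬ cycleRel ρ z x := fun h => hxz' (Setoid.symm' _ h)
  have hzy' : ¬ cycleRel ρ z y := fun h => cut (Setoid.symm' _ h)
  have hzx : ¬ cycleRel (swap x y * ρ) z x := by
    rwa [cycleRel_swap_mul_of_not hxy', ← mem_block, block_sup_swap_of_not hzx' hzy', mem_block]
  have card_yz := card_blocks_sup_swap cut
  have card_xy := card_blocks_sup_swap hxy'
  rw [numFactorizations_top_of_not_rel (x := z) (y := x) _ hzx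
    (by rw [cycleRel_swap_mul_of_not hxy']; lia)]
  · rw [cycleRel_swap_mul_of_not hxy', blockSize_sup_swap_of_not hzx' hzy',
      blockSize_sup_swap_left hxy', blockSize_sup_swap_of_not hxy' hxz', hy, hz, transferValue,
      blockProd_sup_swap_exchange cut hxy' hy hz,
      funext (blockSum_sup_swap_exchange cut hxy' hy hz)]
    rw [show (blocks (cycleRel ρ ⊔ cycleRel (swap x y))).parts.card =
      (blocks (cycleRel ρ ⊔ cycleRel (swap y z))).parts.card by lia]
  · rw [cycleRel_swap_mul_of_not hxy', sup_assoc (cycleRel ρ) _ (cycleRel (swap z x)),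
      ← cycleRel_swap_sup_swap]
    simp only [sup_assoc, sup_left_comm, sup_idem, sup_left_idem]

end SwapPairs

section BlockSizeSums

variable {α : Type*} [DecidableEq α] [Fintype α] {R : Setoid α} [DecidableRel R] {x y : α}
  {a b : ℚ}

lemma sum_not_rel_not_rel_blockSize (hxy : ¬ R x y) (f : ℕ → ℚ) :
    ∑ z with ¬ R x z ∧ ¬ R y z, f (blockSize R z) = blockSum R (fun k => k * f k) -
      blockSize R x * f (blockSize R x) - blockSize R y * f (blockSize R y) := by
  have related : ({z | ¬ R x z ∧ ¬ ¬ R y z} : Finset α) = block R y := by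
    ext z
    have := fun h : R y z => mt (fun h' => R.trans' h' (R.symm' h)) hxy
    simpa using this
  rw [← sum_not_rel_blockSize, ← sum_block_blockSize R y, eq_sub_iff_add_eq, ← related,
    ← Finset.filter_filter, ← Finset.filter_filter, Finset.sum_filter_add_sum_filter_not]

lemma sum_unrelated_pairs (hR : ∀ ψ, blockSum R ψ = a * ψ 1 + b * ψ 2) (F : ℕ → ℕ → ℚ) :
    ∑ x, ∑ y with ¬ R x y, F (blockSize R x) (blockSize R y) =
      a * (a - 1) * F 1 1 + 2 * a * b * (F 1 2 + F 2 1) + 4 * b * (b - 1) * F 2 2 := by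
  simp only [sum_not_rel_blockSize]
  rw [sum_blockSize R fun j => blockSum R (fun k => k * F j k) - j * F j j]
  simp only [hR]
  push_cast
  ring

lemma sum_unrelated_triples (hR : ∀ ψ, blockSum R ψ = a * ψ 1 + b * ψ 2) (F : ℕ → ℕ → ℕ → ℚ) :
    ∑ x, ∑ y with ¬ R x y, ∑ z with ¬ R x z ∧ ¬ R y z,
        F (blockSize R x) (blockSize R y) (blockSize R z) =
      a * (a - 1) * (a - 2) * F 1 1 1 + 2 * a * (a - 1) * b * (F 1 1 2 + F 1 2 1 + F 2 1 1) +
        4 * a * b * (b - 1) * (F 1 2 2 + F 2 1 2 + F 2 2 1) +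
          8 * b * (b - 1) * (b - 2) * F 2 2 2 := by
  have inner (x : α) : ∀ y ∈ ({y | ¬ R x y} : Finset α), ∑ z with ¬ R x z ∧ ¬ R y z,
      F (blockSize R x) (blockSize R y) (blockSize R z) = _ := fun y hy =>
    sum_not_rel_not_rel_blockSize (Finset.mem_filter.mp hy).2 _
  rw [Finset.sum_congr rfl fun x _ => Finset.sum_congr rfl (inner x),
    sum_unrelated_pairs hR fun i j => blockSum R (fun k => k * F i j k) - i * F i j i - j * F i j j]
  simp only [hR]
  push_cast
  ring

lemma sum_related_pairs (hR : ∀ ψ, blockSum R ψ = a * ψ 1 + b * ψ 2) (G : ℕ → ℚ) :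
    ∑ y, ∑ _z ∈ (block R y).erase y, ∑ x with ¬ R y x, G (blockSize R x) =
      2 * b * (a * G 1 + 2 * (b - 1) * G 2) := by
  have card_erase (y : α) : (((block R y).erase y).card : ℚ) = blockSize R y - 1 := by
    rw [eq_sub_iff_add_eq]
    exact_mod_cast Finset.card_erase_add_one (self_mem_block R y)
  simp only [Finset.sum_const, nsmul_eq_mul, card_erase, sum_not_rel_blockSize]
  rw [sum_blockSize R fun j => ((j : ℚ) - 1) * (blockSum R (fun k => k * G k) - j * G j)]
  simp only [hR]
  push_cast
  ring

end BlockSizeSums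

section DistinctTriples

variable {α M : Type*} [Fintype α] {R : Setoid α} {x y z : α}

lemma not_rel_of_blockSize_le_two [DecidableEq α] (hR : ∀ x, blockSize R x ≤ 2)
    (hxy : x ≠ y) (hyz : y ≠ z) (hxz : x ≠ z) (h : R y z) : ¬ R y x := by
  intro hx
  have hsub : ({x, y, z} : Finset α) ⊆ block R y := by
    simp [Finset.insert_subset_iff, mem_block, h, hx]
  have := Finset.card_le_card hsub
  rw [Finset.card_eq_three.mpr ⟨x, y, z, hxy, hxz, hyz, rfl⟩] at this
  exact absurd (hR y) (by lia)

variable [AddCommMonoid M]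

lemma sum_rotate (f : α → α → α → M) : ∑ x, ∑ y, ∑ z, f y z x = ∑ x, ∑ y, ∑ z, f x y z := by
  rw [Finset.sum_comm]
  exact Finset.sum_congr rfl fun _ _ => Finset.sum_comm

variable [DecidableEq α] [DecidableRel R]

/-- The contribution of `(x, y, z)` to the part of a sum over triples in which `y` and `z` are
distinct but related and `x` is unrelated to both. -/
def relatedPairTerm (R : Setoid α) [DecidableRel R] (g : α → α → α → M) (x y z : α) : M :=
  if z ≠ y ∧ R y z ∧ ¬ R y x then g x y z else 0

/-- With classes of size at most two, a triple of distinct points is either pairwise unrelated or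
has exactly one related pair. -/
lemma ite_distinct_eq_add (hR : ∀ x, blockSize R x ≤ 2) (g : α → α → α → M)
    (hg : ∀ x y z, x ≠ y → y ≠ z → x ≠ z → g x y z = g y z x) (x y z : α) :
    (if z ≠ y ∧ x ≠ z ∧ x ≠ y then g x y z else 0) =
      (if ¬ R x y ∧ ¬ R x z ∧ ¬ R y z then g x y z else 0) +
        (relatedPairTerm R g x y z + relatedPairTerm R g y z x + relatedPairTerm R g z x y) := by
  have symm {u v} : R u v ↔ R v u := R.comm'
  have refl (u) : R u u := R.refl' u
  by_cases hd : z ≠ y ∧ x ≠ z ∧ x ≠ y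
  · obtain ⟨hzy, hxz, hxy⟩ := hd
    have hyzx := hg x y z hxy hzy.symm hxz
    have hzxy := hg y z x hzy.symm hxz.symm hxy.symm
    have hx := not_rel_of_blockSize_le_two hR hxy hzy.symm hxz
    have hy := not_rel_of_blockSize_le_two hR hzy.symm hxz.symm hxy.symm
    have hz := not_rel_of_blockSize_le_two hR hxz.symm hxy hzy
    simp only [relatedPairTerm]
    grind
  · simp only [relatedPairTerm]
    grind

lemma sum_distinct_triples (hR : ∀ x, blockSize R x ≤ 2) (g : α → α → α → M)
    (hg : ∀ x y z, x ≠ y → y ≠ z → x ≠ z → g x y z = g y z x) :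
    ∑ y, ∑ z ∈ Finset.univ.erase y, ∑ x ∈ (Finset.univ.erase y).erase z, g x y z =
      ∑ x, ∑ y with ¬ R x y, ∑ z with ¬ R x z ∧ ¬ R y z, g x y z +
        3 • ∑ y, ∑ z ∈ (block R y).erase y, ∑ x with ¬ R y x, g x y z := by
  have distinct : ∑ y, ∑ z ∈ Finset.univ.erase y, ∑ x ∈ (Finset.univ.erase y).erase z, g x y z =
      ∑ x, ∑ y, ∑ z, if z ≠ y ∧ x ≠ z ∧ x ≠ y then g x y z else 0 := by
    rw [← sum_rotate, ← sum_rotate]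
    refine Finset.sum_congr rfl fun y _ => ?_
    simp only [← Finset.filter_ne', Finset.filter_filter, Finset.sum_filter]
    refine Finset.sum_congr rfl fun z _ => ?_
    split_ifs with hz <;> simp [hz, and_comm]
  have unrelated : ∑ x, ∑ y with ¬ R x y, ∑ z with ¬ R x z ∧ ¬ R y z, g x y z =
      ∑ x, ∑ y, ∑ z, if ¬ R x y ∧ ¬ R x z ∧ ¬ R y z then g x y z else 0 := by
    refine Finset.sum_congr rfl fun x _ => ?_
    rw [Finset.sum_filter]
    refine Finset.sum_congr rfl fun y _ => ?_
    split_ifs with hxy <;> simp [hxy, Finset.sum_filter]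
  have related : ∑ y, ∑ z ∈ (block R y).erase y, ∑ x with ¬ R y x, g x y z =
      ∑ x, ∑ y, ∑ z, relatedPairTerm R g x y z := by
    rw [← sum_rotate, ← sum_rotate]
    refine Finset.sum_congr rfl fun y _ => ?_
    have mem_iff (z : α) : z ∈ (block R y).erase y ↔ z ≠ y ∧ R y z := by simp [mem_block]
    rw [← Finset.filter_univ_mem ((block R y).erase y), Finset.sum_filter]
    refine Finset.sum_congr rfl fun z _ => ?_
    simp only [mem_iff, relatedPairTerm]
    split_ifs with hz <;> simp [hz, Finset.sum_filter, ← and_assoc]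
  rw [distinct, unrelated, related]
  simp only [ite_distinct_eq_add hR g hg, Finset.sum_add_distrib]
  rw [sum_rotate (relatedPairTerm R g), ← sum_rotate fun x y z => relatedPairTerm R g z x y,
    succ_nsmul, two_nsmul]

end DistinctTriples

section SwapsOverlap

variable {α M : Type*} [DecidableEq α] {y z : α}

lemma disjoint_swap_iff {τ : Perm α} (hyz : y ≠ z) :
    τ.Disjoint (swap y z) ↔ τ y = y ∧ τ z = z := by
  refine ⟨fun h => ⟨(h y).resolve_right ?_, (h z).resolve_right ?_⟩, fun ⟨hy, hz⟩ u => ?_⟩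
  · simpa using hyz.symm
  · simpa using hyz
  · by_cases hu : u = y ∨ u = z
    · exact Or.inl (by rcases hu with rfl | rfl <;> assumption)
    · exact Or.inr (swap_apply_of_ne_of_ne (by tauto) (by tauto))

variable [Fintype α] [AddCommMonoid M]

lemma sum_swaps_apply_eq_apply_ne (f : Perm α → M) (hyz : y ≠ z) :
    ∑ τ ∈ swaps α with τ y = y ∧ τ z ≠ z, f τ =
      ∑ x ∈ (Finset.univ.erase y).erase z, f (swap x z) := by
  have moved := sum_swaps_apply_ne (fun τ => if τ y = y then f τ else 0) z
  rw [← Finset.sum_filter, Finset.filter_filter,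
    ← Finset.add_sum_erase _ _ (Finset.mem_erase.mpr ⟨hyz, Finset.mem_univ y⟩),
    if_neg (by simpa using hyz.symm), zero_add] at moved
  simp only [and_comm (a := _ = y)]
  rw [moved, Finset.erase_right_comm]
  refine Finset.sum_congr rfl fun x hx => ?_
  simp only [Finset.mem_erase, Finset.mem_univ, and_true] at hx
  rw [if_pos (swap_apply_of_ne_of_ne hyz hx.2.symm), swap_comm]

open scoped Classical in
lemma sum_swaps_eq_add_disjoint (f : Perm α → M) (hyz : y ≠ z) :
    ∑ τ ∈ swaps α, f τ = f (swap y z) +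
      ∑ x ∈ (Finset.univ.erase y).erase z, (f (swap x y) + f (swap x z)) +
        ∑ τ ∈ swaps α with τ.Disjoint (swap y z), f τ := by
  simp only [disjoint_swap_iff hyz]
  rw [← Finset.sum_filter_add_sum_filter_not (swaps α) (fun τ => τ y ≠ y), sum_swaps_apply_ne,
    ← Finset.add_sum_erase _ _ (Finset.mem_erase.mpr ⟨hyz.symm, Finset.mem_univ z⟩),
    Finset.sum_add_distrib, ← sum_swaps_apply_eq_apply_ne f hyz]
  simp only [swap_comm y, not_not]
  rw [← Finset.sum_filter_add_sum_filter_not ({τ ∈ swaps α | τ y = y}) (fun τ => τ z ≠ z)]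
  simp only [Finset.filter_filter, not_not]
  abel

end SwapsOverlap

section DoubleSwaps

lemma cycleRel_mul_of_disjoint {α : Type*} [Finite α] {σ τ : Perm α}
    (h : σ.Disjoint τ) : cycleRel (σ * τ) = cycleRel σ ⊔ cycleRel τ := by
  have le_of_disjoint {σ τ : Perm α} (h : σ.Disjoint τ) : cycleRel σ ≤ cycleRel (σ * τ) := by
    refine cycleRel_le_iff.mpr fun x => ?_
    rcases h x with hx | hx
    · rw [hx]
    · simpa [hx] using cycleRel_apply_self (σ * τ) x
  refine le_antisymm (cycleRel_mul_le σ τ) (sup_le (le_of_disjoint h) ?_)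
  rw [h.commute.eq]
  exact le_of_disjoint h.symm

variable {α : Type*} [DecidableEq α] [Fintype α] {σ τ : Perm α}

variable (α) in
/-- The permutations of cycle type `(2, 2)`, that is, of reduced ramification type `1 ^ 2`. -/
def doubleSwaps : Finset (Perm α) := {σ | σ.cycleType = {2, 2}}

lemma mem_doubleSwaps : σ ∈ doubleSwaps α ↔ σ.cycleType = {2, 2} := by simp [doubleSwaps]

lemma mul_mem_doubleSwaps (hσ : σ.IsSwap) (hτ : τ.IsSwap) (h : σ.Disjoint τ) :
    σ * τ ∈ doubleSwaps α := by
  rw [mem_doubleSwaps, h.cycleType_mul, Perm.isSwap_iff_cycleType.mp hσ,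
    Perm.isSwap_iff_cycleType.mp hτ]
  rfl

lemma isSwap_of_mem_cycleFactorsFinset (hσ : σ ∈ doubleSwaps α) (hτ : τ ∈ σ.cycleFactorsFinset) :
    τ.IsSwap := by
  have mem_cycleType : τ.support.card ∈ σ.cycleType := by
    rw [Perm.cycleType_def]
    exact Multiset.mem_map.mpr ⟨τ, hτ, rfl⟩
  rw [mem_doubleSwaps.mp hσ] at mem_cycleType
  exact Perm.card_support_eq_two.mp (by simpa using mem_cycleType)

lemma isSwap_mul_inv_of_mem_cycleFactorsFinset (hσ : σ ∈ doubleSwaps α)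
    (hτ : τ ∈ σ.cycleFactorsFinset) : (σ * τ⁻¹).IsSwap := by
  have cycleType_add := (Perm.disjoint_mul_inv_of_mem_cycleFactorsFinset hτ).cycleType_mul
  rw [inv_mul_cancel_right, mem_doubleSwaps.mp hσ,
    Perm.isSwap_iff_cycleType.mp (isSwap_of_mem_cycleFactorsFinset hσ hτ),
    show ({2, 2} : Multiset ℕ) = {2} + {2} from rfl] at cycleType_add
  exact Perm.isSwap_iff_cycleType.mpr (add_right_cancel cycleType_add).symm

lemma card_cycleFactorsFinset_of_mem_doubleSwaps (hσ : σ ∈ doubleSwaps α) :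
    σ.cycleFactorsFinset.card = 2 := by
  have := congrArg Multiset.card (mem_doubleSwaps.mp hσ)
  rwa [Perm.cycleType_def, Multiset.card_map] at this

lemma mul_self_of_mem_doubleSwaps (hσ : σ ∈ doubleSwaps α) : σ * σ = 1 := by
  have : orderOf σ = 2 := by rw [← Perm.lcm_cycleType, mem_doubleSwaps.mp hσ]; rfl
  rw [← sq, ← this, pow_orderOf_eq_one]

open scoped Classical in
lemma sum_disjoint_swaps {M : Type*} [AddCommMonoid M] (f : Perm α → M) :
    ∑ τ₁ ∈ swaps α, ∑ τ₂ ∈ swaps α with τ₂.Disjoint τ₁, f (τ₂ * τ₁) =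
      2 • ∑ σ ∈ doubleSwaps α, f σ := by
  have double_count : 2 • ∑ σ ∈ doubleSwaps α, f σ =
      ∑ σ ∈ doubleSwaps α, ∑ _τ ∈ σ.cycleFactorsFinset, f σ := by
    rw [Finset.smul_sum]
    refine Finset.sum_congr rfl fun σ hσ => ?_
    rw [Finset.sum_const, card_cycleFactorsFinset_of_mem_doubleSwaps hσ]
  rw [double_count, Finset.sum_sigma', Finset.sum_sigma']
  refine Finset.sum_bij' (fun p _ => ⟨p.2 * p.1, p.1⟩) (fun p _ => ⟨p.2, p.1 * p.2⁻¹⟩)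
    ?_ ?_ (by simp) (by simp) (fun _ _ => rfl)
  · rintro ⟨τ₁, τ₂⟩ hp
    simp only [Finset.mem_sigma, Finset.mem_filter, mem_swaps] at hp ⊢
    obtain ⟨h₁, h₂, hd⟩ := hp
    refine ⟨mul_mem_doubleSwaps h₂ h₁ hd, ?_⟩
    rw [hd.cycleFactorsFinset_mul_eq_union, h₁.isCycle.cycleFactorsFinset_eq_singleton]
    simp
  · rintro ⟨σ, τ⟩ hp
    simp only [Finset.mem_sigma, Finset.mem_filter, mem_swaps] at hp ⊢
    exact ⟨isSwap_of_mem_cycleFactorsFinset hp.1 hp.2,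
      isSwap_mul_inv_of_mem_cycleFactorsFinset hp.1 hp.2,
      Perm.disjoint_mul_inv_of_mem_cycleFactorsFinset hp.2⟩

lemma card_doubleSwaps_mul (hα : 4 ≤ Fintype.card α) :
    (doubleSwaps α).card * ((Fintype.card α - 4).factorial * 8) = (Fintype.card α).factorial := by
  have := Perm.card_of_cycleType_mul_eq α {2, 2}
  rw [if_pos ⟨hα, by simp⟩, mul_assoc _ (Multiset.prod _)] at this
  exact this

end DoubleSwaps

section ExpansionOfSwapPairs

variable {α : Type*} [DecidableEq α] [Fintype α]

/-- With `K₂`, `K₃`, `K₂₂` the sums of the transpositions, the `3`-cycles and the permutations of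
type `(2, 2)`, this refines `K₂ ^ 2 = n (n - 1) / 2 + 3 K₃ + 2 K₂₂`. -/
lemma two_mul_sum_swaps_sum_swaps {K : Type*} [Semiring K] (f : Perm α → Perm α → K)
    (g : Perm α → K) (hfg : ∀ σ τ, σ.Disjoint τ → f σ τ = g (σ * τ)) :
    2 * ∑ τ₁ ∈ swaps α, ∑ τ₂ ∈ swaps α, f τ₂ τ₁ =
      ∑ y, ∑ z ∈ Finset.univ.erase y, f (swap y z) (swap y z) +
        2 * ∑ y, ∑ z ∈ Finset.univ.erase y, ∑ x ∈ (Finset.univ.erase y).erase z,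
          f (swap x y) (swap y z) +
        4 * ∑ σ ∈ doubleSwaps α, g σ := by
  classical
  have split (y : α) : ∀ z ∈ Finset.univ.erase y, ∑ τ ∈ swaps α, f τ (swap y z) = _ :=
    fun z hz => sum_swaps_eq_add_disjoint (fun τ => f τ (swap y z)) (Finset.mem_erase.mp hz).1.symm
  have symm : ∑ y, ∑ z ∈ Finset.univ.erase y, ∑ x ∈ (Finset.univ.erase y).erase z,
      f (swap x z) (swap y z) = ∑ y, ∑ z ∈ Finset.univ.erase y,
        ∑ x ∈ (Finset.univ.erase y).erase z, f (swap x y) (swap y z) := by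
    rw [Finset.sum_comm' (t' := Finset.univ) (s' := fun z => Finset.univ.erase z)
      (by simp [eq_comm])]
    simp only [Finset.erase_right_comm, swap_comm]
  have disjoint : ∑ y, ∑ z ∈ Finset.univ.erase y,
      ∑ τ ∈ swaps α with τ.Disjoint (swap y z), f τ (swap y z) = 4 * ∑ σ ∈ doubleSwaps α, g σ := by
    rw [← two_mul_sum_swaps fun τ₁ => ∑ τ ∈ swaps α with τ.Disjoint τ₁, f τ τ₁,
      show (4 : K) = 2 * 2 by norm_num, mul_assoc, two_mul (∑ σ ∈ _, g σ), ← two_nsmul,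
      ← sum_disjoint_swaps]
    refine congrArg (2 * ·) (Finset.sum_congr rfl fun τ₁ _ => Finset.sum_congr rfl fun τ₂ h => ?_)
    exact hfg τ₂ τ₁ (Finset.mem_filter.mp h).2
  rw [two_mul_sum_swaps fun τ₁ => ∑ τ₂ ∈ swaps α, f τ₂ τ₁,
    Finset.sum_congr rfl fun y _ => Finset.sum_congr rfl (split y)]
  simp only [Finset.sum_add_distrib, symm, disjoint, two_mul]

lemma two_mul_numFactorizations_add_two (m : ℕ) (π : Perm α) :
    2 * numFactorizations (m + 2) π (cycleRel π) ⊤ =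
      ∑ y, ∑ z ∈ Finset.univ.erase y,
          numFactorizations m π (cycleRel π ⊔ cycleRel (swap y z)) ⊤ +
        2 * ∑ y, ∑ z ∈ Finset.univ.erase y, ∑ x ∈ (Finset.univ.erase y).erase z,
          numCompletions m π x y z +
        4 * ∑ σ ∈ doubleSwaps α, numFactorizations m (σ * π) (cycleRel σ ⊔ cycleRel π) ⊤ := by
  simp only [numFactorizations_succ]
  rw [two_mul_sum_swaps_sum_swaps
    (fun τ₂ τ₁ => numFactorizations m (τ₂ * (τ₁ * π)) (cycleRel τ₂ ⊔ (cycleRel τ₁ ⊔ cycleRel π)) ⊤)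
    (fun σ => numFactorizations m (σ * π) (cycleRel σ ⊔ cycleRel π) ⊤)
    fun σ τ h => by rw [cycleRel_mul_of_disjoint h, mul_assoc, sup_assoc]]
  simp only [← mul_assoc, swap_mul_self, one_mul, ← sup_assoc, sup_idem, numCompletions]
  simp only [sup_comm (cycleRel π)]

end ExpansionOfSwapPairs

section CycleWeightValues

lemma cycleWeight_two : cycleWeight 2 = 4 := by
  norm_num [cycleWeight, treeCoeff_succ, Nat.factorial]

lemma cycleWeight_three : cycleWeight 3 = 27 / 2 := by
  norm_num [cycleWeight, treeCoeff_succ, Nat.factorial]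

lemma cycleWeight_four : cycleWeight 4 = 128 / 3 := by
  norm_num [cycleWeight, treeCoeff_succ, Nat.factorial]

lemma cycleWeight_five : cycleWeight 5 = 3125 / 24 := by
  norm_num [cycleWeight, treeCoeff_succ, Nat.factorial]

end CycleWeightValues

section DoubleSwapBlocks

variable {α : Type*} [DecidableEq α] [Fintype α] {σ : Perm α}

lemma card_support_of_mem_doubleSwaps (hσ : σ ∈ doubleSwaps α) : σ.support.card = 4 := by
  rw [← Perm.sum_cycleType, mem_doubleSwaps.mp hσ]
  rfl

lemma four_le_card_of_mem_doubleSwaps (hσ : σ ∈ doubleSwaps α) : 4 ≤ Fintype.card α :=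
  card_support_of_mem_doubleSwaps hσ ▸ σ.support.card_le_univ

lemma map_card_blocks_of_mem_doubleSwaps (hσ : σ ∈ doubleSwaps α) :
    (blocks (cycleRel σ)).parts.val.map Finset.card =
      {2, 2} + Multiset.replicate (Fintype.card α - 4) 1 := by
  rw [map_card_blocks_cycleRel, Perm.parts_partition, mem_doubleSwaps.mp hσ,
    card_support_of_mem_doubleSwaps hσ]

lemma card_blocks_of_mem_doubleSwaps (hσ : σ ∈ doubleSwaps α) :
    (blocks (cycleRel σ)).parts.card + 2 = Fintype.card α := by
  have card_eq := congrArg Multiset.card (map_card_blocks_of_mem_doubleSwaps hσ)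
  rw [Multiset.card_map, Multiset.card_add, Multiset.card_replicate] at card_eq
  have := four_le_card_of_mem_doubleSwaps hσ
  rw [Finset.card_def, card_eq, Multiset.card_pair]
  lia

lemma blockSum_of_mem_doubleSwaps (hσ : σ ∈ doubleSwaps α) (ψ : ℕ → ℚ) :
    blockSum (cycleRel σ) ψ = (Fintype.card α - 4) * ψ 1 + 2 * ψ 2 := by
  have sum_eq := congrArg (fun s => (s.map ψ).sum) (map_card_blocks_of_mem_doubleSwaps hσ)
  simp only [Multiset.map_map, Multiset.map_add, Multiset.map_replicate, Multiset.sum_add,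
    Multiset.sum_replicate, nsmul_eq_mul, Nat.cast_sub (four_le_card_of_mem_doubleSwaps hσ)]
    at sum_eq
  refine sum_eq.trans ?_
  simp only [Multiset.insert_eq_cons, Multiset.map_cons, Multiset.map_singleton,
    Multiset.sum_cons, Multiset.sum_singleton]
  push_cast
  ring

lemma blockProd_of_mem_doubleSwaps (hσ : σ ∈ doubleSwaps α) : blockProd (cycleRel σ) = 16 := by
  have prod_eq := congrArg (fun s => (s.map cycleWeight).prod)
    (map_card_blocks_of_mem_doubleSwaps hσ)
  simp only [Multiset.map_map, Multiset.map_add, Multiset.map_replicate, Multiset.prod_add,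
    Multiset.prod_replicate, cycleWeight_one, one_pow, mul_one] at prod_eq
  refine prod_eq.trans ?_
  norm_num [cycleWeight_two]

lemma blockSize_le_two_of_mem_doubleSwaps (hσ : σ ∈ doubleSwaps α) (x : α) :
    blockSize (cycleRel σ) x ≤ 2 := by
  have mem : blockSize (cycleRel σ) x ∈ (blocks (cycleRel σ)).parts.val.map Finset.card :=
    Multiset.mem_map_of_mem _ (block_mem_blocks _ x)
  rw [map_card_blocks_of_mem_doubleSwaps hσ] at mem
  simp only [Multiset.insert_eq_cons, Multiset.mem_add, Multiset.mem_cons, Multiset.mem_singleton,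
    Multiset.mem_replicate] at mem
  lia

end DoubleSwapBlocks

section DoubleSwapSums

variable {α : Type*} [DecidableEq α] [Fintype α] {σ : Perm α} {m : ℕ}

lemma numFactorizations_doubleSwap (hσ : σ ∈ doubleSwaps α) (hm : m + 6 = 2 * Fintype.card α) :
    (numFactorizations (m + 2) σ (cycleRel σ) ⊤ : ℚ) =
      (m + 2).factorial * (16 * (Fintype.card α : ℚ) ^ ((Fintype.card α : ℤ) - 5)) := by
  have hl := card_blocks_of_mem_doubleSwaps hσ
  have : Nonempty α := Fintype.card_pos_iff.mp (by lia)
  rw [numFactorizations_top le_rfl (by lia), blockProd_of_mem_doubleSwaps hσ, mul_comm (16 : ℚ),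
    show ((blocks (cycleRel σ)).parts.card : ℤ) - 3 = Fintype.card α - 5 by lia]

lemma zpow_sub_four_eq {N : ℚ} (hN : N ≠ 0) (l : ℤ) : N ^ (l - 4) = N * N ^ (l - 5) := by
  rw [← zpow_one_add₀ hN]
  ring_nf

lemma zpow_sub_three_eq {N : ℚ} (hN : N ≠ 0) (l : ℤ) : N ^ (l - 3) = N ^ 2 * N ^ (l - 5) := by
  rw [← zpow_natCast, ← zpow_add₀ hN]
  ring_nf

lemma cast_card_ne_zero_of_mem_doubleSwaps (hσ : σ ∈ doubleSwaps α) :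
    (Fintype.card α : ℚ) ≠ 0 := by
  have := four_le_card_of_mem_doubleSwaps hσ
  positivity

open scoped Classical in
lemma sum_pairs_numFactorizations_doubleSwap (hσ : σ ∈ doubleSwaps α)
    (hm : m + 6 = 2 * Fintype.card α) :
    ∑ y, ∑ z ∈ Finset.univ.erase y,
      (numFactorizations m σ (cycleRel σ ⊔ cycleRel (swap y z)) ⊤ : ℚ) =
    ∑ y, ∑ z with ¬ cycleRel σ y z, m.factorial * (16 * separationValue (Fintype.card α)
      (Fintype.card α - 2) (fun ψ => (Fintype.card α - 4) * ψ 1 + 2 * ψ 2)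
      (blockSize (cycleRel σ) y) (blockSize (cycleRel σ) z)) := by
  have hl := card_blocks_of_mem_doubleSwaps hσ
  refine Finset.sum_congr rfl fun y _ => ?_
  refine (Finset.sum_subset_zero_on_sdiff (fun z hz => ?_) (fun z hz => ?_) fun z hz => ?_).symm
  · rw [Finset.mem_filter] at hz
    refine Finset.mem_erase.mpr ⟨?_, hz.1⟩
    rintro rfl
    exact hz.2 (Setoid.refl' _ _)
  · have : Nonempty α := ⟨y⟩
    have related : cycleRel σ y z := by
      by_contra unrelated
      exact (Finset.mem_sdiff.mp hz).2 (Finset.mem_filter.mpr ⟨Finset.mem_univ z, unrelated⟩)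
    rw [Nat.cast_eq_zero]
    exact numFactorizations_top_eq_zero (sup_le le_rfl (cycleRel_swap_le_iff.mpr related)) (by lia)
  · rw [numFactorizations_top_of_not_rel (by rw [← sup_assoc, sup_idem])
      (Finset.mem_filter.mp hz).2 (by lia), blockProd_of_mem_doubleSwaps hσ,
      funext (blockSum_of_mem_doubleSwaps hσ),
      show ((blocks (cycleRel σ)).parts.card : ℤ) = Fintype.card α - 2 by lia]

lemma sum_pairs_doubleSwap (hσ : σ ∈ doubleSwaps α) (hm : m + 6 = 2 * Fintype.card α) :
    ∑ y, ∑ z ∈ Finset.univ.erase y,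
      (numFactorizations m σ (cycleRel σ ⊔ cycleRel (swap y z)) ⊤ : ℚ) =
    m.factorial * ((Fintype.card α : ℚ) ^ ((Fintype.card α : ℤ) - 7) *
      (16 * (Fintype.card α : ℚ) ^ 3 + 48 * (Fintype.card α : ℚ) ^ 2 -
        320 * Fintype.card α)) := by
  classical
  have hN := cast_card_ne_zero_of_mem_doubleSwaps hσ
  rw [sum_pairs_numFactorizations_doubleSwap hσ hm, sum_unrelated_pairs
    (blockSum_of_mem_doubleSwaps hσ) fun p q => m.factorial * (16 * separationValue
      (Fintype.card α) (Fintype.card α - 2) (fun ψ => (Fintype.card α - 4) * ψ 1 + 2 * ψ 2) p q)]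
  simp only [separationValue, zpow_sub_four_eq hN, zpow_sub_three_eq hN,
    show (Fintype.card α : ℤ) - 2 - 5 = Fintype.card α - 7 by ring]
  push_cast
  ring

open scoped Classical in
lemma sum_unrelated_triples_doubleSwap (hσ : σ ∈ doubleSwaps α)
    (hm : m + 6 = 2 * Fintype.card α) :
    ∑ x, ∑ y with ¬ cycleRel σ x y, ∑ z with ¬ cycleRel σ x z ∧ ¬ cycleRel σ y z,
      (numCompletions m σ x y z : ℚ) =
    m.factorial * ((Fintype.card α : ℚ) ^ ((Fintype.card α : ℤ) - 7) *
      (216 * (Fintype.card α : ℚ) ^ 3 - 1192 * (Fintype.card α : ℚ) ^ 2 + 677 * Fintype.card α +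
        2540)) := by
  have hl := card_blocks_of_mem_doubleSwaps hσ
  have value (x : α) (y) (hy : y ∈ ({y | ¬ cycleRel σ x y} : Finset α)) (z)
      (hz : z ∈ ({z | ¬ cycleRel σ x z ∧ ¬ cycleRel σ y z} : Finset α)) :
      (numCompletions m σ x y z : ℚ) = m.factorial * joinValue (Fintype.card α)
        (Fintype.card α - 2) 16 (blockSize (cycleRel σ) x) (blockSize (cycleRel σ) y)
        (blockSize (cycleRel σ) z) := by
    obtain ⟨hxz, hyz⟩ := (Finset.mem_filter.mp hz).2
    rw [numCompletions_of_not_rel (Finset.mem_filter.mp hy).2 hyz hxz (by lia),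
      blockProd_of_mem_doubleSwaps hσ,
      show ((blocks (cycleRel σ)).parts.card : ℤ) = Fintype.card α - 2 by lia]
  rw [Finset.sum_congr rfl fun x _ => Finset.sum_congr rfl fun y hy =>
      Finset.sum_congr rfl (value x y hy),
    sum_unrelated_triples (blockSum_of_mem_doubleSwaps hσ)
      fun a b c => m.factorial * joinValue (Fintype.card α) (Fintype.card α - 2) 16 a b c]
  simp only [joinValue, cycleWeight_one, cycleWeight_two, cycleWeight_three, cycleWeight_four,
    cycleWeight_five, Nat.reduceAdd, show (Fintype.card α : ℤ) - 2 - 5 = Fintype.card α - 7 by ring]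
  ring

open scoped Classical in
lemma sum_related_triples_doubleSwap (hσ : σ ∈ doubleSwaps α)
    (hm : m + 6 = 2 * Fintype.card α) :
    ∑ y, ∑ z ∈ (block (cycleRel σ) y).erase y, ∑ x with ¬ cycleRel σ y x,
      (numCompletions m σ x y z : ℚ) =
    m.factorial * ((Fintype.card α : ℚ) ^ ((Fintype.card α : ℤ) - 7) *
      (112 / 3 * (Fintype.card α : ℚ) ^ 2 + 763 / 3 * Fintype.card α - 2540 / 3)) := by
  have hl := card_blocks_of_mem_doubleSwaps hσ
  have hN := cast_card_ne_zero_of_mem_doubleSwaps hσ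
  have value (y : α) (z) (hz : z ∈ (block (cycleRel σ) y).erase y) (x)
      (hx : x ∈ ({x | ¬ cycleRel σ y x} : Finset α)) :
      (numCompletions m σ x y z : ℚ) = m.factorial * transferValue (Fintype.card α)
        (Fintype.card α - 2) (fun ψ => (Fintype.card α - 4) * ψ 1 + 2 * ψ 2) 16
        (blockSize (cycleRel σ) x) := by
    obtain ⟨hzy, hz⟩ := Finset.mem_erase.mp hz
    have size_eq : blockSize (cycleRel σ) y = 2 :=
      (blockSize_le_two_of_mem_doubleSwaps hσ y).antisymm
        (Finset.one_lt_card.mpr ⟨y, self_mem_block _ y, z, hz, hzy.symm⟩)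
    rw [numCompletions_of_rel hzy.symm (mem_block.mp hz)
        (fun h => (Finset.mem_filter.mp hx).2 (Setoid.symm' _ h)) size_eq (by lia),
      blockProd_of_mem_doubleSwaps hσ, funext (blockSum_of_mem_doubleSwaps hσ),
      show ((blocks (cycleRel σ)).parts.card : ℤ) = Fintype.card α - 2 by lia]
  rw [Finset.sum_congr rfl fun y _ => Finset.sum_congr rfl fun z hz =>
      Finset.sum_congr rfl (value y z hz),
    sum_related_pairs (blockSum_of_mem_doubleSwaps hσ) fun k => m.factorial *
      transferValue (Fintype.card α) (Fintype.card α - 2)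
        (fun ψ => (Fintype.card α - 4) * ψ 1 + 2 * ψ 2) 16 k]
  simp only [transferValue, separationValue, zpow_sub_four_eq hN, zpow_sub_three_eq hN,
    cycleWeight_one, cycleWeight_two, cycleWeight_three, Nat.reduceAdd,
    show (Fintype.card α : ℤ) - 2 - 5 = Fintype.card α - 7 by ring]
  push_cast
  ring

lemma sum_triples_doubleSwap (hσ : σ ∈ doubleSwaps α) (hm : m + 6 = 2 * Fintype.card α) :
    ∑ y, ∑ z ∈ Finset.univ.erase y, ∑ x ∈ (Finset.univ.erase y).erase z,
      (numCompletions m σ x y z : ℚ) =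
    m.factorial * ((Fintype.card α : ℚ) ^ ((Fintype.card α : ℤ) - 7) *
      (216 * (Fintype.card α : ℚ) ^ 3 - 1080 * (Fintype.card α : ℚ) ^ 2 +
        1440 * Fintype.card α)) := by
  classical
  rw [sum_distinct_triples (blockSize_le_two_of_mem_doubleSwaps hσ)
      (fun x y z => (numCompletions m σ x y z : ℚ))
      fun x y z hxy hyz hxz => congrArg _ (numCompletions_rotate hxy hyz hxz),
    sum_unrelated_triples_doubleSwap hσ hm, sum_related_triples_doubleSwap hσ hm]
  ring

theorem sum_doubleSwaps_numFactorizations (hσ : σ ∈ doubleSwaps α)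
    (hm : m + 6 = 2 * Fintype.card α) :
    ∑ σ₂ ∈ doubleSwaps α,
      (numFactorizations m (σ₂ * σ) (cycleRel σ₂ ⊔ cycleRel σ) ⊤ : ℚ) =
    m.factorial * (16 * (2 * (Fintype.card α : ℚ) ^ 3 - 16 * (Fintype.card α : ℚ) ^ 2 +
      43 * Fintype.card α - 40) * (Fintype.card α : ℚ) ^ ((Fintype.card α : ℤ) - 6)) := by
  have hN := cast_card_ne_zero_of_mem_doubleSwaps hσ
  have expansion := congrArg (Nat.cast (R := ℚ)) (two_mul_numFactorizations_add_two m σ)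
  push_cast at expansion
  rw [numFactorizations_doubleSwap hσ hm, sum_pairs_doubleSwap hσ hm,
    sum_triples_doubleSwap hσ hm] at expansion
  have factorial_eq : ((m + 2).factorial : ℚ) =
      (2 * Fintype.card α - 4) * (2 * Fintype.card α - 5) * m.factorial := by
    have cast_m : (m : ℚ) = 2 * Fintype.card α - 6 := by
      rw [eq_sub_iff_add_eq]
      exact_mod_cast hm
    rw [Nat.factorial_succ, Nat.factorial_succ]
    push_cast
    rw [cast_m]
    ring
  have pow_five := zpow_sub_three_eq hN (Fintype.card α - 2)
  have pow_six := zpow_sub_four_eq hN (Fintype.card α - 2)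
  rw [show (Fintype.card α : ℤ) - 2 - 5 = Fintype.card α - 7 by ring] at pow_five pow_six
  rw [show (Fintype.card α : ℤ) - 2 - 3 = Fintype.card α - 5 by ring] at pow_five
  rw [show (Fintype.card α : ℤ) - 2 - 4 = Fintype.card α - 6 by ring] at pow_six
  rw [factorial_eq, pow_five] at expansion
  rw [pow_six]
  linear_combination -expansion / 4

end DoubleSwapSums

section Transitivity

variable {α : Type*}

theorem biSup_cycleRel_eq_orbitRel_closure [Finite α] (S : Set (Perm α)) :
    ⨆ g ∈ S, cycleRel g = MulAction.orbitRel (Subgroup.closure S) α := by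
  refine le_antisymm (iSup₂_le fun g hg => cycleRel_le_iff.mpr fun x => ?_) fun x y => ?_
  · exact Setoid.symm' _ ⟨⟨g, Subgroup.subset_closure hg⟩, rfl⟩
  · rintro ⟨⟨g, hg⟩, rfl⟩
    have cycleRel_le : cycleRel g ≤ ⨆ g ∈ S, cycleRel g := by
      induction hg using Subgroup.closure_induction with
      | mem g hg => exact le_iSup₂ (f := fun g (_ : g ∈ S) => cycleRel g) g hg
      | one => exact cycleRel_one.trans_le bot_le
      | mul g h _ _ hg hh => exact (cycleRel_mul_le g h).trans (sup_le hg hh)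
      | inv g _ hg => exact fun x y hxy => hg (Perm.sameCycle_inv.mp hxy)
    exact Setoid.symm' _ (cycleRel_le (cycleRel_apply_self g y))

lemma transitive_closure_iff [Finite α] {m : ℕ} (σ σ₂ : Perm α) (τ : Fin m → Perm α) :
    (∀ x y, ∃ g ∈ Subgroup.closure ({σ, σ₂} ∪ Set.range τ), g x = y) ↔
      tupleRel τ ⊔ (cycleRel σ₂ ⊔ cycleRel σ) = ⊤ := by
  have sup_eq : tupleRel τ ⊔ (cycleRel σ₂ ⊔ cycleRel σ) =
      ⨆ g ∈ ({σ, σ₂} ∪ Set.range τ : Set (Perm α)), cycleRel g := by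
    rw [iSup_union, iSup_pair, iSup_range, sup_comm (tupleRel τ), sup_comm (cycleRel σ₂), tupleRel]
  rw [sup_eq, biSup_cycleRel_eq_orbitRel_closure, Setoid.eq_top_iff, forall_comm]
  simp only [MulAction.orbitRel_apply, MulAction.mem_orbit_iff, Subtype.exists,
    Subgroup.mk_smul, Perm.smul_def, exists_prop]

end Transitivity

theorem natCard_doubleSwap_factorizations (α : Type*) [Fintype α] [DecidableEq α] (m : ℕ) :
    Nat.card {p : Perm α × Perm α × (Fin m → Perm α) //
      p.1.cycleType = {2, 2} ∧ p.2.1.cycleType = {2, 2} ∧ (∀ i, (p.2.2 i).IsSwap) ∧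
        p.1 * p.2.1 * (List.ofFn p.2.2).prod = 1 ∧
        ∀ x y : α, ∃ g ∈ Subgroup.closure ({p.1, p.2.1} ∪ Set.range p.2.2), g x = y} =
      ∑ σ ∈ doubleSwaps α, ∑ σ₂ ∈ doubleSwaps α,
        numFactorizations m (σ₂ * σ) (cycleRel σ₂ ⊔ cycleRel σ) ⊤ := by
  classical
  have prod_eq_iff {σ σ₂ π : Perm α} (hσ : σ ∈ doubleSwaps α) (hσ₂ : σ₂ ∈ doubleSwaps α) :
      σ * σ₂ * π = 1 ↔ π = σ₂ * σ := by
    rw [mul_eq_one_iff_eq_inv', mul_inv_rev,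
      inv_eq_of_mul_eq_one_left (mul_self_of_mem_doubleSwaps hσ),
      inv_eq_of_mul_eq_one_left (mul_self_of_mem_doubleSwaps hσ₂)]
  rw [Nat.card_eq_fintype_card, Fintype.card_subtype, Finset.card_filter, Fintype.sum_prod_type]
  simp only [Fintype.sum_prod_type, ite_and, Finset.sum_ite_irrel, Finset.sum_const_zero]
  simp only [← mem_doubleSwaps, ← Finset.sum_filter, Finset.filter_mem_eq_inter, Finset.univ_inter]
  refine Finset.sum_congr rfl fun σ hσ => Finset.sum_congr rfl fun σ₂ hσ₂ => ?_
  rw [numFactorizations, Finset.card_filter]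
  simp only [Finset.sum_filter, ite_and, prod_eq_iff hσ hσ₂, transitive_closure_iff]

end HurwitzNumber

/-- Theorem 1.2, third formula. Genus-zero Hurwitz number h_{1^2,1^2}: two branch points of cycle type (2,2,1^{n-4}) and 2n-6 transpositions; h_{1^2,1^2} = 2(2n^3-16n^2+43n-40)((2n-6)!/(n-4)!) n^(n-6). -/
theorem hurwitz_number_1_2_1_2 (n : ℕ) (hn : 4 ≤ n) :
    (Nat.card {p : Perm (Fin n) × Perm (Fin n) × (Fin (2 * n - 6) → Perm (Fin n)) //
        p.1.cycleType = {2, 2} ∧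
        p.2.1.cycleType = {2, 2} ∧
        (∀ i, (p.2.2 i).IsSwap) ∧
        p.1 * p.2.1 * (List.ofFn p.2.2).prod = 1 ∧
        (∀ x y : Fin n, ∃ g ∈ Subgroup.closure ({p.1, p.2.1} ∪ Set.range p.2.2),
          g x = y)} : ℚ) =
      (n.factorial : ℚ) * (2 * (2 * (n : ℚ) ^ 3 - 16 * (n : ℚ) ^ 2 + 43 * (n : ℚ) - 40)) *
        (((2 * n - 6).factorial : ℚ) / ((n - 4).factorial : ℚ)) *
        (n : ℚ) ^ ((n : ℤ) - 6) := by
  classical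
  have card_mul := HurwitzNumber.card_doubleSwaps_mul (α := Fin n) (by rwa [Fintype.card_fin])
  rw [Fintype.card_fin] at card_mul
  rw [HurwitzNumber.natCard_doubleSwap_factorizations]
  push_cast
  rw [Finset.sum_congr rfl fun σ hσ => HurwitzNumber.sum_doubleSwaps_numFactorizations hσ
    (by rw [Fintype.card_fin]; lia), Finset.sum_const, nsmul_eq_mul, Fintype.card_fin, ← card_mul]
  push_cast
  field_simp
  ring
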